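/- arXiv:1911.10308 — 2 statements merged into one kernel-verified Lean document; each statement's English description precedes it below -/
import Mathlib

section
/- There exists an absolute constant C > 0 such that the following holds for every odd prime p. Let R be a finite set of points in 𝔽_p³ and S a finite set of planes in 𝔽_p³ with |R| ≤ |S| and |R| ≤ p². Let k be a positive integer such that no line in 𝔽_p³ contains more than k points of R. Then the number of incidences I(R,S) = |{(r,s) ∈ R × S : r ∈ s}| satisfies I(R,S) ≤ C (|R|^{1/2}|S| + k|S|). -/
open Finset

/-- The solution set in `𝔽_p³` of the plane with coefficient vector `s = ((a,b,c),d)`,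
namely `{(x,y,z) : a*x + b*y + c*z = d}`. -/
def planeSet {p : ℕ} (s : (ZMod p × ZMod p × ZMod p) × ZMod p) :
    Set (ZMod p × ZMod p × ZMod p) :=
  {v | s.1.1 * v.1 + s.1.2.1 * v.2.1 + s.1.2.2 * v.2.2 = s.2}

/-!
Fix `τ` transcendental over the ground field `K`. Over `F = K(τ)`, points and planes become lines
of two families in `F³`, with coordinates `(z, u, v)`: those of the first family lie in planes
`u = const`, those of the second in planes `v = const`, and a point is incident to a plane exactly
when the two lines meet. Distinct lines of the first family have distinct heights `u`, and two
lines of the second family meet at most `k` common lines of the first, because two planes share at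
most a line.

Cover the lines `R` of the first family by the zero sets of a bounded number of polynomials of
degree `d` about `√#R`, where `d ^ 2 < #R`, so that the degrees stay below the characteristic. A
line of the second family contained in none of these zero sets meets few lines of `R`. It remains
to count meetings inside an irreducible surface `f = 0` that contains lines of both families.

* If `f` does not involve `z`, or does not divide the numerator `sliceCurvature f` of the curvature
  of the slices `u = const`, then, as this numerator vanishes on every line of the first family in
  the surface, eliminating `z` leaves at most `12 * d ^ 2` such lines. These form the core, which
  is handled by induction.
* Otherwise the slices consist of straight lines over the function field of the surface.
  The tangent line at the generic point meets the plane `v = s.height` of a line `s` of the second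
  family in a point algebraic over `F(u)`. Specializing along `s`, where `u` remains
  transcendental, shows that this point lies on `s`. Each slice is thus a cone with apex on `s`,
  so every line of the first family in the surface meets `s`; if there are two such `s`, at most
  `k` lines of the first family are involved.
-/

namespace PointPlane
open MvPolynomial
open scoped Polynomial

section Factorial
variable {A : Type*} [Semiring A]

lemma natCast_ne_zero_of_le {m n : ℕ} (hn : (n.factorial : A) ≠ 0) (hm : m ≠ 0)
    (hmn : m ≤ n) : (m : A) ≠ 0 := fun h ↦ hn <| by
  obtain ⟨c, hc⟩ := Nat.dvd_factorial (Nat.pos_of_ne_zero hm) hmn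
  rw [hc, Nat.cast_mul, h, zero_mul]

lemma natCast_factorial_ne_zero_of_le {m n : ℕ} (hn : (n.factorial : A) ≠ 0) (hmn : m ≤ n) :
    (m.factorial : A) ≠ 0 := fun h ↦ hn <| by
  obtain ⟨c, hc⟩ := Nat.factorial_dvd_factorial hmn
  rw [hc, Nat.cast_mul, h, zero_mul]

end Factorial

section MvPolynomial
variable {σ τ F : Type*} [Field F]

lemma dvd_aeval_sub_aeval {B : Type*} [CommRing B] [Algebra F B] {d : B} {x y : σ → B}
    (h : ∀ i, d ∣ x i - y i) (f : MvPolynomial σ F) : d ∣ aeval x f - aeval y f := by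
  simp only [← Ideal.mem_span_singleton, ← Ideal.Quotient.mk_eq_mk_iff_sub_mem] at h ⊢
  have hxy := congrArg (fun w ↦ aeval w f) (funext h)
  simpa only [← Ideal.Quotient.mkₐ_eq_mk F, ← comp_aeval_apply] using hxy

lemma derivation_aeval [Fintype σ] {B M : Type*} [CommRing B] [Algebra F B] [AddCommGroup M]
    [Module B M] [Module F M] [IsScalarTower F B M] (D : Derivation F B M) (x : σ → B)
    (f : MvPolynomial σ F) : D (aeval x f) = ∑ i, aeval x (pderiv i f) • D (x i) := by
  classical
  induction f using MvPolynomial.induction_on with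
  | C a => simp
  | add f g hf hg => simp only [map_add, hf, hg, add_smul, sum_add_distrib]
  | mul_X f j hf =>
    simp [hf, pderiv_X, Pi.single_apply, add_smul, sum_add_distrib, smul_sum, mul_smul,
      smul_comm (x j), apply_ite]

lemma totalDegree_aeval_le (f : MvPolynomial σ F) {x : σ → MvPolynomial τ F}
    (hx : ∀ i, (x i).totalDegree ≤ 1) : (aeval x f).totalDegree ≤ f.totalDegree := by
  rw [aeval_def, eval₂_eq]
  refine totalDegree_finsetSum_le fun d hd ↦ ?_
  calc (algebraMap F (MvPolynomial τ F) (f.coeff d) * ∏ i ∈ d.support, x i ^ d i).totalDegree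
      ≤ (∏ i ∈ d.support, x i ^ d i).totalDegree := by
        simpa [MvPolynomial.algebraMap_eq] using totalDegree_mul (C (f.coeff d)) _
    _ ≤ ∑ i ∈ d.support, d i := (totalDegree_finsetProd _ _).trans <| sum_le_sum fun i _ ↦
        (totalDegree_pow _ _).trans <| by simpa using Nat.mul_le_mul_left (d i) (hx i)
    _ ≤ f.totalDegree := le_totalDegree hd

lemma totalDegree_pderiv_le (i : σ) (f : MvPolynomial σ F) :
    (pderiv i f).totalDegree ≤ f.totalDegree - 1 := by
  classical
  conv_lhs => rw [f.as_sum, map_sum]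
  refine totalDegree_finsetSum_le fun d hd ↦ ?_
  rw [pderiv_monomial]
  obtain hi | hi := eq_or_ne (d i) 0
  · simp [hi]
  have hdeg : (d - Finsupp.single i 1).degree + 1 = d.degree := by
    have hle : Finsupp.single i 1 ≤ d := Finsupp.single_le_iff.2 (Nat.one_le_iff_ne_zero.2 hi)
    simpa using congrArg Finsupp.degree (tsub_add_cancel_of_le hle)
  have hd' : d.degree ≤ f.totalDegree := le_totalDegree hd
  exact (totalDegree_monomial_le _ _).trans (show (d - Finsupp.single i 1).degree ≤ _ by omega)

lemma totalDegree_det_le {n : Type*} [Fintype n] [DecidableEq n] {d : ℕ}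
    {M : Matrix n n (MvPolynomial σ F)} (hM : ∀ i j, (M i j).totalDegree ≤ d) :
    M.det.totalDegree ≤ Fintype.card n * d := by
  rw [Matrix.det_apply]
  refine totalDegree_finsetSum_le fun π _ ↦ ?_
  rw [Units.smul_def]
  calc ((Equiv.Perm.sign π : ℤ) • ∏ i, M (π i) i).totalDegree
      ≤ ∑ i, (M (π i) i).totalDegree :=
        (totalDegree_smul_le _ _).trans (totalDegree_finsetProd _ _)
    _ ≤ Fintype.card n * d := by simpa using sum_le_card_nsmul univ _ d fun i _ ↦ hM _ _

lemma aeval_eq_eval₂_finSuccEquiv {n : ℕ} {B : Type*} [CommRing B] [Algebra F B]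
    (x : Fin (n + 1) → B) (f : MvPolynomial (Fin (n + 1)) F) :
    aeval x f = (finSuccEquiv F n f).eval₂ (aeval (x ∘ Fin.succ) : MvPolynomial (Fin n) F →ₐ[F] B)
      (x 0) := by
  let e : (MvPolynomial (Fin n) F)[X] →ₐ[F] B :=
    Polynomial.eval₂AlgHom (aeval (x ∘ Fin.succ)) (x 0) fun _ ↦ Commute.all _ _
  refine DFunLike.congr_fun (algHom_ext (f := aeval x) (g := e.comp (finSuccEquiv F n)) ?_) f
  refine Fin.cases ?_ fun j ↦ ?_
  · simp [e, Polynomial.eval₂AlgHom_apply, finSuccEquiv_X_zero]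
  · simp [e, Polynomial.eval₂AlgHom_apply, finSuccEquiv_X_succ]

lemma totalDegree_coeff_finSuccEquiv_le {n : ℕ} (f : MvPolynomial (Fin (n + 1)) F) (i : ℕ) :
    ((finSuccEquiv F n f).coeff i).totalDegree ≤ f.totalDegree := by
  by_cases h : (finSuccEquiv F n f).coeff i = 0
  · simp [h]
  · exact le_of_add_le_left (totalDegree_coeff_finSuccEquiv_add_le f i h)

lemma natDegree_finSuccEquiv_le_totalDegree {n : ℕ} (f : MvPolynomial (Fin (n + 1)) F) :
    (finSuccEquiv F n f).natDegree ≤ f.totalDegree :=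
  (natDegree_finSuccEquiv f).trans_le (degreeOf_le_totalDegree _ _)

lemma totalDegree_resultant_finSuccEquiv_le {n : ℕ} (f g : MvPolynomial (Fin (n + 1)) F) :
    ((finSuccEquiv F n f).resultant (finSuccEquiv F n g)).totalDegree ≤
      (f.totalDegree + g.totalDegree) * max f.totalDegree g.totalDegree := by
  refine (totalDegree_det_le (d := max f.totalDegree g.totalDegree) fun i j ↦ ?_).trans ?_
  · rw [Polynomial.sylvester, Matrix.of_apply]
    induction j using Fin.addCases with
    | left j =>
      rw [Fin.addCases_left]
      split_ifs
      · exact (totalDegree_coeff_finSuccEquiv_le g _).trans (le_max_right _ _)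
      · simp
    | right j =>
      rw [Fin.addCases_right]
      split_ifs
      · exact (totalDegree_coeff_finSuccEquiv_le f _).trans (le_max_left _ _)
      · simp
  · rw [Fintype.card_fin]
    gcongr <;> exact natDegree_finSuccEquiv_le_totalDegree _

lemma resultant_finSuccEquiv_ne_zero {n : ℕ} {f g : MvPolynomial (Fin (n + 1)) F}
    (hf : Irreducible f) (hf0 : (finSuccEquiv F n f).natDegree ≠ 0) (hfg : ¬ f ∣ g) :
    (finSuccEquiv F n f).resultant (finSuccEquiv F n g) ≠ 0 := by
  let R := MvPolynomial (Fin n) F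
  let K := FractionRing R
  let _ : NormalizedGCDMonoid R := Classical.choice inferInstance
  have hirr : Irreducible (finSuccEquiv F n f) := (MulEquiv.irreducible_iff (finSuccEquiv F n)).2 hf
  have hprim := hirr.isPrimitive hf0
  have hndvd : ¬ finSuccEquiv F n f ∣ finSuccEquiv F n g :=
    fun h ↦ hfg ((map_dvd_iff (finSuccEquiv F n)).1 h)
  have hcop := ((hprim.irreducible_iff_irreducible_map_fraction_map (K := K)).1 hirr
    ).coprime_iff_not_dvd.2 (mt (hprim.dvd_iff_fraction_map_dvd_fraction_map K).2 hndvd)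
  have hres := Polynomial.resultant_ne_zero _ _ hcop
  have hinj := IsFractionRing.injective R K
  rw [Polynomial.natDegree_map_eq_of_injective hinj, Polynomial.natDegree_map_eq_of_injective hinj,
    Polynomial.resultant_map_map] at hres
  exact fun h ↦ hres (by rw [h, map_zero])

lemma aeval_resultant_finSuccEquiv {n : ℕ} {B : Type*} [CommRing B] [Algebra F B]
    {f g : MvPolynomial (Fin (n + 1)) F} (hf0 : (finSuccEquiv F n f).natDegree ≠ 0)
    {x : Fin (n + 1) → B} (hf : aeval x f = 0) (hg : aeval x g = 0) :
    aeval (x ∘ Fin.succ) ((finSuccEquiv F n f).resultant (finSuccEquiv F n g)) = 0 := by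
  obtain ⟨a, b, -, -, hab⟩ := Polynomial.exists_mul_add_mul_eq_C_resultant
    (finSuccEquiv F n f) (finSuccEquiv F n g) le_rfl le_rfl (Or.inl hf0)
  rw [aeval_eq_eval₂_finSuccEquiv] at hf hg
  have h := congrArg (Polynomial.eval₂
    ((aeval (x ∘ Fin.succ) : MvPolynomial (Fin n) F →ₐ[F] B) : MvPolynomial (Fin n) F →+* B)
    (x 0)) hab
  rw [Polynomial.eval₂_add, Polynomial.eval₂_mul, Polynomial.eval₂_mul, hf, hg, zero_mul, zero_mul,
    add_zero, Polynomial.eval₂_C] at h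
  exact h.symm

lemma aeval_C_ne_zero {f : MvPolynomial σ F} (hf : Irreducible f) {i : σ} (hi : pderiv i f ≠ 0)
    {j : σ} (hij : i ≠ j) (c : F) [DecidableEq σ] :
    aeval (Function.update X j (C c)) f ≠ (0 : MvPolynomial σ F) := by
  intro h
  have hdvd : (X j - C c) ∣ f := by
    have hX := dvd_aeval_sub_aeval (d := X j - C c) (x := X)
      (y := Function.update X j (C c)) (fun l ↦ ?_) f
    · rwa [h, sub_zero, aeval_X_left_apply] at hX
    · obtain rfl | hl := eq_or_ne l j <;> simp [*]
  obtain ⟨g, hg⟩ := hdvd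
  obtain hu | hu := hf.isUnit_or_isUnit hg
  · simpa using hu.map (eval (Function.update 0 j c))
  · obtain ⟨a, -, rfl⟩ := isUnit_iff_eq_C_of_isReduced.1 hu
    exact hi (by simp [hg, pderiv_X, hij.symm])

lemma eval_aeval {B : Type*} [CommRing B] [Algebra F B] (x : σ → B[X]) (f : MvPolynomial σ F)
    (b : B) : (aeval x f).eval b = aeval (fun i ↦ (x i).eval b) f := by
  rw [← Polynomial.coe_aeval_eq_eval, ← AlgHom.coe_restrictScalars' F, comp_aeval_apply]

lemma natDegree_aeval_le {B : Type*} [CommRing B] [Algebra F B] (f : MvPolynomial σ F)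
    {x : σ → B[X]} (hx : ∀ i, (x i).natDegree ≤ 1) : (aeval x f).natDegree ≤ f.totalDegree := by
  have hf : (map (algebraMap F B) f).totalDegree ≤ f.totalDegree :=
    sup_mono (support_map_subset _ _)
  simpa [aeval_map_algebraMap] using aeval_natDegree_le (map (algebraMap F B) f) hf x hx

lemma pderiv_ne_zero {f : MvPolynomial σ F} {i : σ} (hi : f.degreeOf i ≠ 0)
    (hd : (f.totalDegree.factorial : F) ≠ 0) : pderiv i f ≠ 0 := by
  classical
  obtain ⟨m, hm, hmi⟩ : ∃ m ∈ f.support, m i ≠ 0 := by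
    by_contra! h
    exact hi (Nat.le_zero.1 (degreeOf_le_iff.2 fun m hm ↦ (h m hm).le))
  have hsub : m - Finsupp.single i 1 + Finsupp.single i 1 = m :=
    tsub_add_cancel_of_le (Finsupp.single_le_iff.2 (Nat.one_le_iff_ne_zero.2 hmi))
  have hcast : ((m - Finsupp.single i 1 : σ →₀ ℕ) i + 1 : F) = m i := by
    conv_rhs => rw [← hsub]
    simp
  intro h
  have hcoeff := coeff_pderiv (i := i) (m := m - Finsupp.single i 1) (p := f)
  rw [h, coeff_zero, hsub, hcast] at hcoeff
  have hmle : m i ≤ f.totalDegree :=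
    (monomial_le_degreeOf i hm).trans (degreeOf_le_totalDegree f i)
  exact mul_ne_zero (mem_support_iff.1 hm) (natCast_ne_zero_of_le hd hmi hmle) hcoeff.symm

lemma not_dvd_pderiv {f : MvPolynomial σ F} {i : σ} (hi : f.degreeOf i ≠ 0)
    (hd : (f.totalDegree.factorial : F) ≠ 0) : ¬ f ∣ pderiv i f := fun h ↦ by
  have hle := totalDegree_le_of_dvd_of_isDomain h (pderiv_ne_zero hi hd)
  have hlt := totalDegree_pderiv_le i f
  have hpos := degreeOf_le_totalDegree f i
  omega

lemma exists_eliminant {n : ℕ} {f g : MvPolynomial (Fin (n + 1)) F} (hf : Irreducible f)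
    (h : f.degreeOf 0 = 0 ∨ ¬ f ∣ g) (B : Type*) [CommRing B] [Algebra F B] :
    ∃ H : MvPolynomial (Fin n) F, H ≠ 0 ∧
      H.totalDegree ≤ (f.totalDegree + g.totalDegree) * max f.totalDegree g.totalDegree ∧
      ∀ x : Fin (n + 1) → B, aeval x f = 0 → aeval x g = 0 → aeval (x ∘ Fin.succ) H = 0 := by
  rw [← natDegree_finSuccEquiv] at h
  by_cases h0 : (finSuccEquiv F n f).natDegree = 0
  · have hC := Polynomial.eq_C_of_natDegree_eq_zero h0
    refine ⟨(finSuccEquiv F n f).coeff 0, fun hH ↦ hf.ne_zero ?_, ?_, fun x hx _ ↦ ?_⟩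
    · rwa [hH, Polynomial.C_0, map_eq_zero_iff _ (finSuccEquiv F n).injective] at hC
    · refine (totalDegree_coeff_finSuccEquiv_le f 0).trans ((Nat.le_mul_self _).trans ?_)
      gcongr
      · exact Nat.le_add_right _ _
      · exact le_max_left _ _
    · rwa [aeval_eq_eval₂_finSuccEquiv, hC, Polynomial.eval₂_C] at hx
  · exact ⟨_, resultant_finSuccEquiv_ne_zero hf h0 (h.resolve_left h0),
      totalDegree_resultant_finSuccEquiv_le f g, fun _ ↦ aeval_resultant_finSuccEquiv h0⟩

lemma card_le_totalDegree_of_aeval_ne_zero {ι B : Type*} [CommRing B] [IsDomain B] [Algebra F B]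
    {f : MvPolynomial σ F} {x : σ → B[X]} (hx : ∀ i, (x i).natDegree ≤ 1) (hf : aeval x f ≠ 0)
    {T : Finset ι} {b : ι → B} (hb : Set.InjOn b T)
    (hT : ∀ t ∈ T, aeval (fun i ↦ (x i).eval (b t)) f = 0) : #T ≤ f.totalDegree := by
  classical
  rw [← card_image_of_injOn hb]
  refine (Polynomial.card_le_degree_of_subset_roots fun y hy ↦ ?_).trans (natDegree_aeval_le f hx)
  obtain ⟨t, ht, rfl⟩ := mem_image.1 hy
  rw [Polynomial.mem_roots hf, Polynomial.IsRoot, eval_aeval, hT t ht]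

lemma card_le_totalDegree_of_aeval_line_eq_zero {ι : Type*} {H : MvPolynomial (Fin 2) F}
    (hH : H ≠ 0) {T : Finset ι} {b : ι → F} (hb : Set.InjOn b T)
    (hT : ∀ t ∈ T, aeval ![Polynomial.C (b t), Polynomial.X] H = 0) : #T ≤ H.totalDegree := by
  refine card_le_totalDegree_of_aeval_ne_zero (x := ![Polynomial.X, Polynomial.C Polynomial.X])
    (b := Polynomial.C ∘ b) (fun i ↦ by fin_cases i <;> simp) (fun h ↦ hH ?_)
    (Polynomial.C_injective.comp_injOn hb) fun t ht ↦ ?_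
  · let θ : F[X][X] →ₐ[F] MvPolynomial (Fin 2) F :=
      Polynomial.eval₂AlgHom (Polynomial.aeval (X 1)) (X 0) fun _ ↦ Commute.all _ _
    rw [← aeval_X_left_apply H, ← map_zero θ, ← h, comp_aeval_apply]
    congr 2
    ext1 i
    fin_cases i <;> simp [θ, Polynomial.eval₂AlgHom_apply]
  · rw [← hT t ht]
    congr 2
    ext1 i
    fin_cases i <;> simp

variable {f g : MvPolynomial σ F}

lemma eq_zero_of_prime_dvd_C (hf : Prime f) {c : F} (h : f ∣ C c) : c = 0 := by
  by_contra hc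
  exact hf.not_isUnit (isUnit_of_dvd_unit h ((isUnit_iff_ne_zero.2 hc).map C))

lemma multiplicity_le_totalDegree (hf : Prime f) (hg : g ≠ 0) :
    multiplicity f g ≤ g.totalDegree := by
  have hdeg : f.totalDegree ≠ 0 := fun h ↦ by
    have hfC := totalDegree_eq_zero_iff_eq_C.1 h
    refine hf.ne_zero (hfC.trans ?_)
    rw [eq_zero_of_prime_dvd_C hf (dvd_of_eq hfC), C_0]
  have hpow (n : ℕ) : n ≤ (f ^ n).totalDegree := by
    induction n with
    | zero => exact Nat.zero_le _
    | succ n ih =>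
      rw [pow_succ, totalDegree_mul_of_isDomain (pow_ne_zero n hf.ne_zero) hf.ne_zero]
      omega
  exact (hpow _).trans (totalDegree_le_of_dvd_of_isDomain (pow_multiplicity_dvd f g) hg)

lemma not_dvd_natCast_multiplicity (hf : Prime f) (hg : g ≠ 0) (hfg : f ∣ g) {n : ℕ}
    (hn : g.totalDegree ≤ n) (hd : (n.factorial : F) ≠ 0) :
    ¬ f ∣ ((multiplicity f g : ℕ) : MvPolynomial σ F) := fun h ↦ by
  have hm : multiplicity f g ≠ 0 := (multiplicity_pos_of_dvd hfg).ne'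
  rw [← C_eq_coe_nat] at h
  exact natCast_ne_zero_of_le hd hm ((multiplicity_le_totalDegree hf hg).trans hn)
    (eq_zero_of_prime_dvd_C hf h)

end MvPolynomial

section Derivation
variable {R A L : Type*} [CommRing R] [CommRing A] [Algebra R A] [Field L] [Algebra R L]

lemma dvd_derivation_of_dvd_derivation [IsDomain A] (D : Derivation R A A) {a b : A} (ha : Prime a)
    (hab : FiniteMultiplicity a b) (hm : ¬ a ∣ ((multiplicity a b : ℕ) : A)) (hb : b ∣ D b) :
    a ∣ D a := by
  obtain ⟨c, hc, hac⟩ := hab.exists_eq_pow_mul_and_not_dvd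
  generalize multiplicity a b = m at hm hc
  subst hc
  obtain _ | m := m
  · simp at hm
  obtain ⟨e, he⟩ := hb
  simp only [Derivation.leibniz, Derivation.leibniz_pow, smul_eq_mul, nsmul_eq_mul,
    Nat.add_sub_cancel] at he
  have hdvd : a ∣ ((m + 1 : ℕ) : A) * (c * D a) := by
    refine ⟨c * e - D c, mul_left_cancel₀ (pow_ne_zero m ha.ne_zero) ?_⟩
    linear_combination he
  exact ((ha.dvd_or_dvd hdvd).resolve_left hm |> ha.dvd_or_dvd).resolve_left hac

lemma exists_derivation_extension [Algebra A L] [IsFractionRing A L] [IsScalarTower R A L]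
    (D : Derivation R A A) :
    ∃ δ : Derivation R L L, ∀ a, δ (algebraMap A L a) = algebraMap A L (D a) := by
  have := Algebra.FormallyEtale.of_isLocalization (Rₘ := L) (nonZeroDivisors A)
  let e := KaehlerDifferential.tensorKaehlerEquivOfFormallyEtale R A L
  let g : TensorProduct A L (Ω[A⁄R]) →ₗ[L] L :=
    LinearMap.liftBaseChange L ((Algebra.linearMap A L) ∘ₗ D.liftKaehlerDifferential)
  refine ⟨(g ∘ₗ e.symm.toLinearMap).compDer (KaehlerDifferential.D R L), fun a ↦ ?_⟩
  have he := KaehlerDifferential.tensorKaehlerEquivOfFormallyEtale_symm_D_algebraMap R A L a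
  simp [g, e, he]

lemma exists_derivation_fractionRing_quotient (D : Derivation R A A) (I : Ideal A) [I.IsPrime]
    (hD : ∀ a ∈ I, D a ∈ I) : ∃ δ : Derivation R (FractionRing (A ⧸ I)) (FractionRing (A ⧸ I)),
      ∀ a, δ (algebraMap A _ a) = algebraMap A _ (D a) := by
  have hmk : Function.Surjective (Ideal.Quotient.mkₐ R I) := Ideal.Quotient.mkₐ_surjective R I
  obtain ⟨δ, hδ⟩ := exists_derivation_extension (L := FractionRing (A ⧸ I)) <|
    Derivation.liftOfSurjective hmk (d := D) fun a ha ↦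
      Ideal.Quotient.eq_zero_iff_mem.2 (hD a (Ideal.Quotient.eq_zero_iff_mem.1 ha))
  refine ⟨δ, fun a ↦ ?_⟩
  rw [IsScalarTower.algebraMap_apply A (A ⧸ I), IsScalarTower.algebraMap_apply A (A ⧸ I)]
  exact (hδ _).trans (congrArg _ (Derivation.liftOfSurjective_apply hmk _ a))

lemma derivation_coeff_aeval_eq_zero {σ F : Type*} [Finite σ] [Field F] [Algebra F L]
    (δ : Derivation F L L) {x : σ → L[X]} (hx : ∀ i n, δ ((x i).coeff n) = 0)
    (f : MvPolynomial σ F) (n : ℕ) : δ ((aeval x f).coeff n) = 0 := by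
  cases nonempty_fintype σ
  have hx' (i : σ) : δ.mapCoeffs (x i) = 0 := by
    ext n
    exact hx i n
  have h : δ.mapCoeffs (aeval x f) = 0 := by simp [derivation_aeval, hx']
  exact congrArg (PolynomialModule.coeff · n) h

lemma derivation_eval_of_coeff_eq_zero (δ : Derivation R L L) {P : L[X]}
    (hP : ∀ n, δ (P.coeff n) = 0) (v : L) : δ (P.eval v) = P.derivative.eval v * δ v := by
  rw [Polynomial.eval_eq_sum, Polynomial.derivative_eval, Polynomial.sum, Polynomial.sum, map_sum,
    sum_mul]
  refine sum_congr rfl fun n _ ↦ ?_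
  simp [hP, mul_assoc]

lemma eq_zero_of_eval_eq_zero_of_derivation (δ : Derivation R L L) {v : L} (hv : δ v = 1) {P : L[X]}
    (hP : ∀ n, δ (P.coeff n) = 0) (hd : (P.natDegree.factorial : L) ≠ 0) (hroot : P.eval v = 0) :
    P = 0 := by
  induction hn : P.natDegree using Nat.strong_induction_on generalizing P with
  | _ n ih =>
  subst hn
  suffices hdeg : P.natDegree = 0 by
    rw [Polynomial.eq_C_of_natDegree_eq_zero hdeg, Polynomial.eval_C] at hroot
    rw [Polynomial.eq_C_of_natDegree_eq_zero hdeg, hroot, Polynomial.C_0]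
  by_contra hdeg
  have hder : P.derivative = 0 := by
    refine ih _ (Polynomial.natDegree_derivative_lt hdeg) (fun n ↦ ?_) ?_ ?_ rfl
    · rw [Polynomial.coeff_derivative, Derivation.leibniz, hP]
      simp
    · exact natCast_factorial_ne_zero_of_le hd (Polynomial.natDegree_derivative_lt hdeg).le
    · simpa [hroot, hv] using (derivation_eval_of_coeff_eq_zero δ hP v).symm
  have hlead := congrArg (Polynomial.coeff · (P.natDegree - 1)) hder
  rw [Polynomial.coeff_zero, Polynomial.coeff_derivative, ← Nat.cast_succ,
    Nat.succ_eq_add_one, Nat.sub_add_cancel (Nat.pos_of_ne_zero hdeg)] at hlead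
  exact mul_ne_zero (Polynomial.leadingCoeff_ne_zero.2 fun h ↦ hdeg (by simp [h]))
    (natCast_ne_zero_of_le hd hdeg le_rfl) hlead

end Derivation

section Valuation

lemma exists_valuationSubring_dominating {A L : Type*} [CommRing A] [Field L] (ψ : A →+* L)
    (q : Ideal A) [q.IsPrime] (hψ : RingHom.ker ψ ≤ q) :
    ∃ O : ValuationSubring L, (∀ x ∈ q, O.valuation (ψ x) < 1) ∧
      ∀ x ∉ q, O.valuation (ψ x) = 1 := by
  let φ : Localization.AtPrime q →+* L := IsLocalization.lift (M := q.primeCompl) (g := ψ)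
    fun y ↦ IsUnit.mk0 _ fun h ↦ y.2 (hψ h)
  have hφ (x : A) : φ (algebraMap A _ x) = ψ x := IsLocalization.lift_eq _ _
  obtain ⟨O, hO, hlocal⟩ := IsLocalRing.exists_factor_valuationRing φ
  have hone (x : A) : O.valuation (ψ x) = 1 ↔ x ∉ q := by
    have h := O.valuation_eq_one_iff ((φ.codRestrict O.toSubring hO) (algebraMap A _ x))
    rw [isUnit_map_iff, IsLocalization.AtPrime.isUnit_to_map_iff (Localization.AtPrime q) q] at h
    rw [← hφ]
    exact h.symm
  refine ⟨O, fun x hx ↦ lt_of_le_of_ne ?_ fun h ↦ (hone x).1 h hx, fun x ↦ (hone x).2⟩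
  rw [ValuationSubring.valuation_le_one_iff, ← hφ]
  exact hO _

variable {F L : Type*} [Field F] [Field L] [Algebra F L]

lemma mem_valuationSubring_of_isAlgebraic {O : ValuationSubring L} {E : IntermediateField F L}
    (hE : ∀ x ∈ E, x ∈ O) {x : L} (hx : IsAlgebraic E x) : x ∈ O := by
  have hint : IsIntegral O x := by
    obtain ⟨P, hP, hPx⟩ := hx.isIntegral
    refine ⟨P.map ((algebraMap E L).codRestrict O.toSubring fun y ↦ hE y y.2), hP.map _, ?_⟩
    rwa [Polynomial.eval₂_map]
  obtain ⟨y, rfl⟩ := IsIntegrallyClosed.isIntegral_iff.1 hint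
  exact y.2

lemma eq_zero_of_isAlgebraic_of_valuation_lt_one {O : ValuationSubring L}
    {E : IntermediateField F L} (hE : ∀ x ∈ E, x ∈ O) {x : L} (hx : IsAlgebraic E x)
    (hv : O.valuation x < 1) : x = 0 := by
  by_contra h0
  have hinv := (O.valuation_le_one_iff _).2 (mem_valuationSubring_of_isAlgebraic hE hx.inv)
  rw [map_inv₀] at hinv
  exact hv.not_ge ((inv_le_one₀ (by simpa [zero_lt_iff] using h0)).1 hinv)

open scoped IntermediateField in
lemma mem_valuationSubring_of_mem_adjoin {O : ValuationSubring L} {u : L}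
    (hO : ∀ P : F[X], P ≠ 0 → O.valuation (Polynomial.aeval u P) = 1) {x : L} (hx : x ∈ F⟮u⟯) :
    x ∈ O := by
  obtain ⟨P, Q, rfl⟩ := IntermediateField.mem_adjoin_simple_iff F x |>.1 hx
  rw [← O.valuation_le_one_iff, map_div₀]
  obtain rfl | hP := eq_or_ne P 0
  · simp
  obtain rfl | hQ := eq_or_ne Q 0
  · simp
  rw [hO P hP, hO Q hQ, div_one]

end Valuation

section Surface
variable {F : Type*} [Field F]

/-- The derivation tangent to the curves cut out on the surface `f(z, u, v) = 0` by the planes on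
which `u = X 1` is constant. -/
noncomputable def sliceTangent (f : MvPolynomial (Fin 3) F) :
    Derivation F (MvPolynomial (Fin 3) F) (MvPolynomial (Fin 3) F) :=
  pderiv 0 f • pderiv 2 - pderiv 2 f • pderiv 0

lemma sliceTangent_apply (f g : MvPolynomial (Fin 3) F) :
    sliceTangent f g = pderiv 0 f * pderiv 2 g - pderiv 2 f * pderiv 0 g := by
  simp [sliceTangent]

lemma dvd_sliceTangent {f g : MvPolynomial (Fin 3) F} (h : f ∣ g) : f ∣ sliceTangent f g := by
  obtain ⟨g, rfl⟩ := h
  have hf : sliceTangent f f = 0 := by rw [sliceTangent_apply, mul_comm, sub_self]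
  simp [Derivation.leibniz, hf]

/-- The numerator of the curvature of the curves `u = const` on the surface `f(z, u, v) = 0`: it
vanishes on the surface when these curves are straight lines. -/
noncomputable def sliceCurvature (f : MvPolynomial (Fin 3) F) : MvPolynomial (Fin 3) F :=
  pderiv 0 f * sliceTangent f (pderiv 2 f) - pderiv 2 f * sliceTangent f (pderiv 0 f)

lemma totalDegree_sliceTangent_le (f g : MvPolynomial (Fin 3) F) :
    (sliceTangent f g).totalDegree ≤ f.totalDegree + g.totalDegree := by
  have h (i : Fin 3) (g : MvPolynomial (Fin 3) F) : (pderiv i g).totalDegree ≤ g.totalDegree :=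
    (totalDegree_pderiv_le i g).trans (Nat.sub_le _ 1)
  rw [sliceTangent_apply]
  refine (totalDegree_sub _ _).trans (max_le ?_ ?_) <;>
    exact (totalDegree_mul _ _).trans (add_le_add (h _ _) (h _ _))

lemma totalDegree_sliceCurvature_le (f : MvPolynomial (Fin 3) F) :
    (sliceCurvature f).totalDegree ≤ 3 * f.totalDegree := by
  have h (i : Fin 3) : (pderiv i f).totalDegree ≤ f.totalDegree :=
    (totalDegree_pderiv_le i f).trans (Nat.sub_le _ 1)
  have hmul (i j : Fin 3) :
      (pderiv i f * sliceTangent f (pderiv j f)).totalDegree ≤ 3 * f.totalDegree := by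
    have := totalDegree_sliceTangent_le f (pderiv j f)
    have := totalDegree_mul (pderiv i f) (sliceTangent f (pderiv j f))
    have := h i
    have := h j
    omega
  exact (totalDegree_sub _ _).trans (max_le (hmul 0 2) (hmul 2 0))

open scoped IntermediateField in
lemma isAlgebraic_of_aeval_eq_zero {L : Type*} [Field L] [Algebra F L] {f : MvPolynomial (Fin 3) F}
    {c : F} (hf : aeval (Function.update X 2 (C c)) f ≠ (0 : MvPolynomial (Fin 3) F)) {x u : L}
    (hu : Transcendental F u) (h : aeval ![x, u, algebraMap F L c] f = 0) : IsAlgebraic F⟮u⟯ x := by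
  let y : Fin 3 → F[X][X] :=
    ![Polynomial.X, Polynomial.C Polynomial.X, Polynomial.C (Polynomial.C c)]
  have hy : aeval y f ≠ 0 := by
    let θ : F[X][X] →ₐ[F] MvPolynomial (Fin 3) F :=
      Polynomial.eval₂AlgHom (Polynomial.aeval (X 1)) (X 0) fun _ ↦ Commute.all _ _
    refine fun h0 ↦ hf ?_
    rw [← map_zero θ, ← h0, comp_aeval_apply]
    congr 2
    ext1 i
    fin_cases i <;> simp [θ, y, Polynomial.eval₂AlgHom_apply, MvPolynomial.algebraMap_eq]
  let κ : F[X] →ₐ[F] F⟮u⟯ := Polynomial.aeval (IntermediateField.AdjoinSimple.gen F u)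
  have hκ : Function.Injective κ := transcendental_iff_injective.1 <|
    (transcendental_algebraMap_iff (algebraMap F⟮u⟯ L).injective).1 (by simpa using hu)
  refine ⟨(aeval y f).map κ, (Polynomial.map_ne_zero_iff hκ).2 hy, ?_⟩
  let θ : F[X][X] →ₐ[F] L := Polynomial.eval₂AlgHom (F⟮u⟯.val.comp κ) x fun _ ↦ Commute.all _ _
  have hθ : θ (aeval y f) = 0 := by
    rw [← h, comp_aeval_apply]
    congr 2
    ext1 i
    fin_cases i <;> simp [θ, y, κ, Polynomial.eval₂AlgHom_apply]
  rw [← hθ, Polynomial.aeval_def, Polynomial.eval₂_map]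
  rfl

/-- A line in one of the two rulings of `F³`, with coordinates `(z, u, v)`: seen in the first
family it is `{(slope * v + intercept, height, v)}`, and in the second family it is
`{(slope * u + intercept, u, height)}`. -/
@[ext]
structure SliceLine (F : Type*) where
  height : F
  slope : F
  intercept : F

namespace SliceLine

/-- The parametrization by `v` of a line of the first family. -/
noncomputable def paramV (ℓ : SliceLine F) : Fin 3 → F[X] :=
  ![Polynomial.C ℓ.slope * Polynomial.X + Polynomial.C ℓ.intercept, Polynomial.C ℓ.height,
    Polynomial.X]

/-- The parametrization by `u` of a line of the second family. -/
noncomputable def paramU (ℓ : SliceLine F) : Fin 3 → F[X] :=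
  ![Polynomial.C ℓ.slope * Polynomial.X + Polynomial.C ℓ.intercept, Polynomial.X,
    Polynomial.C ℓ.height]

/-- Incidence between a line `r` of the first family and a line `s` of the second one: both pass
over the point `(u, v) = (r.height, s.height)`, and there they have the same `z`-coordinate. -/
def Meets (r s : SliceLine F) : Prop :=
  r.slope * s.height + r.intercept = s.slope * r.height + s.intercept

end SliceLine

section FunctionField
variable {L : Type*} [Field L] [Algebra F L] [Algebra (MvPolynomial (Fin 3) F) L]
  {f : MvPolynomial (Fin 3) F}

local notation "φ" => algebraMap (MvPolynomial (Fin 3) F) L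

lemma exists_derivation_slope_eq_zero {δ : Derivation F L L}
    (hδ : ∀ g, δ (φ g) = φ (sliceTangent f g)) (hz : φ (pderiv 0 f) ≠ 0)
    (hcurv : φ (sliceCurvature f) = 0) :
    ∃ D : Derivation F L L, D (φ (X 0)) = -(φ (pderiv 2 f) / φ (pderiv 0 f)) ∧
      D (φ (X 1)) = 0 ∧ D (φ (X 2)) = 1 ∧ D (φ (pderiv 2 f) / φ (pderiv 0 f)) = 0 := by
  let D : Derivation F L L := (φ (pderiv 0 f))⁻¹ • δ
  have hD (g) : D (φ g) = (φ (pderiv 0 f))⁻¹ * φ (sliceTangent f g) := by simp [D, hδ]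
  refine ⟨D, ?_, ?_, ?_, ?_⟩
  · rw [hD, sliceTangent_apply]
    simp [pderiv_X, div_eq_inv_mul]
  · simp [hD, sliceTangent_apply, pderiv_X]
  · simp [hD, sliceTangent_apply, pderiv_X, hz]
  · rw [sliceCurvature, map_sub, map_mul, map_mul] at hcurv
    rw [Derivation.leibniz_div, hD, hD]
    simp only [smul_eq_mul]
    field_simp
    linear_combination hcurv

variable [IsScalarTower F (MvPolynomial (Fin 3) F) L]

lemma aeval_tangentLine_eq_zero (hL : ∀ g, φ g = 0 ↔ f ∣ g) {δ : Derivation F L L}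
    (hδ : ∀ g, δ (φ g) = φ (sliceTangent f g)) (hz : ¬ f ∣ pderiv 0 f)
    (hcurv : f ∣ sliceCurvature f) (hd : (f.totalDegree.factorial : F) ≠ 0) (c : L) :
    aeval ![φ (X 0) + φ (pderiv 2 f) / φ (pderiv 0 f) * (φ (X 2) - c), φ (X 1), c] f = 0 := by
  obtain ⟨D, hD0, hD1, hD2, hDm⟩ :=
    exists_derivation_slope_eq_zero hδ (mt (hL _).1 hz) ((hL _).2 hcurv)
  set m := φ (pderiv 2 f) / φ (pderiv 0 f)
  let x : Fin 3 → L[X] := ![Polynomial.C (-m) * Polynomial.X + Polynomial.C (φ (X 0) + m * φ (X 2)),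
    Polynomial.C (φ (X 1)), Polynomial.X]
  have hx (w : L) :
      (aeval x f).eval w = aeval ![φ (X 0) + m * (φ (X 2) - w), φ (X 1), w] f := by
    rw [eval_aeval]
    congr 2
    ext i
    fin_cases i <;> simp [x]
    ring
  have hdeg : (aeval x f).natDegree ≤ f.totalDegree := natDegree_aeval_le f fun i ↦ by
    fin_cases i
    exacts [Polynomial.natDegree_linear_le, (Polynomial.natDegree_C _).trans_le zero_le_one,
      Polynomial.natDegree_X_le]
  have hP : aeval x f = 0 := by
    refine eq_zero_of_eval_eq_zero_of_derivation D hD2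
      (derivation_coeff_aeval_eq_zero D (fun i n ↦ ?_) f) ?_ ?_
    · fin_cases i <;>
        simp [x, Polynomial.coeff_C, Polynomial.coeff_X, apply_ite D, hD0, hD1, hD2, hDm]
      split_ifs <;> simp
    · have hd' : (f.totalDegree.factorial : L) ≠ 0 := by
        simpa using (map_ne_zero (algebraMap F L)).2 hd
      exact natCast_factorial_ne_zero_of_le hd' hdeg
    · rw [hx, sub_self, mul_zero, add_zero, ← (hL f).2 dvd_rfl, ← IsScalarTower.coe_toAlgHom' F,
        aeval_unique (IsScalarTower.toAlgHom F _ L)]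
      congr 2
      ext i
      fin_cases i <;> simp
  rw [← hx, hP, Polynomial.eval_zero]

lemma exists_valuationSubring_of_aeval_paramU (hL : ∀ g, φ g = 0 ↔ f ∣ g) {s : SliceLine F}
    (hs : aeval s.paramU f = 0) : ∃ O : ValuationSubring L,
      (∀ g : MvPolynomial (Fin 3) F, aeval s.paramU g = 0 → O.valuation (φ g) < 1) ∧
      ∀ P : F[X], P ≠ 0 → O.valuation (Polynomial.aeval (φ (X 1)) P) = 1 := by
  let q := RingHom.ker (aeval s.paramU : MvPolynomial (Fin 3) F →ₐ[F] F[X])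
  have : q.IsPrime := RingHom.ker_isPrime _
  obtain ⟨O, hlt, hone⟩ := exists_valuationSubring_dominating φ q fun g hg ↦ by
    obtain ⟨g, rfl⟩ := (hL g).1 hg
    simp [q, hs]
  refine ⟨O, fun g hg ↦ hlt g hg, fun P hP ↦ ?_⟩
  rw [Polynomial.aeval_algebraMap_apply]
  refine hone _ fun h ↦ hP ?_
  rw [RingHom.mem_ker, ← Polynomial.aeval_algHom_apply] at h
  simpa [SliceLine.paramU] using h

open scoped IntermediateField in
lemma tangentLine_eq (hL : ∀ g, φ g = 0 ↔ f ∣ g) (hf : Irreducible f)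
    {δ : Derivation F L L} (hδ : ∀ g, δ (φ g) = φ (sliceTangent f g)) (hz : ¬ f ∣ pderiv 0 f)
    (hcurv : f ∣ sliceCurvature f) (hd : (f.totalDegree.factorial : F) ≠ 0) {s : SliceLine F}
    (hs : aeval s.paramU f = 0) :
    φ (X 0 - C s.slope * X 1 - C s.intercept) +
      φ (pderiv 2 f) / φ (pderiv 0 f) * φ (X 2 - C s.height) = 0 := by
  obtain ⟨O, hlt, hone⟩ := exists_valuationSubring_of_aeval_paramU hL hs
  set m := φ (pderiv 2 f) / φ (pderiv 0 f)
  set u := φ (X 1)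
  have hOu (x : L) (hx : x ∈ F⟮u⟯) : x ∈ O := mem_valuationSubring_of_mem_adjoin hone hx
  have hu : Transcendental F u := transcendental_iff.2 fun P hP ↦ by
    by_contra h0
    simpa [hP] using hone P h0
  have hζ (c : F) : IsAlgebraic F⟮u⟯ (φ (X 0) + m * (φ (X 2) - algebraMap F L c)) :=
    isAlgebraic_of_aeval_eq_zero
      (aeval_C_ne_zero hf (fun h ↦ hz (h ▸ dvd_zero f)) (by decide) c) hu
      (aeval_tangentLine_eq_zero hL hδ hz hcurv hd _)
  have hm : O.valuation m ≤ 1 := (O.valuation_le_one_iff m).2 <|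
    mem_valuationSubring_of_isAlgebraic hOu <| by simpa [mul_sub] using (hζ 0).sub (hζ 1)
  have hline : algebraMap F L s.slope * u + algebraMap F L s.intercept ∈ F⟮u⟯ :=
    add_mem (mul_mem (F⟮u⟯.algebraMap_mem _) (IntermediateField.mem_adjoin_simple_self F u))
      (F⟮u⟯.algebraMap_mem _)
  have hC (c : F) : φ (C c) = algebraMap F L c := (IsScalarTower.algebraMap_apply F _ L c).symm
  have heq : φ (X 0 - C s.slope * X 1 - C s.intercept) + m * φ (X 2 - C s.height) =
      φ (X 0) + m * (φ (X 2) - algebraMap F L s.height) -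
        (algebraMap F L s.slope * u + algebraMap F L s.intercept) := by
    simp only [map_sub, map_mul, hC]
    ring
  refine eq_zero_of_isAlgebraic_of_valuation_lt_one hOu ?_ (Valuation.map_add_lt _ (hlt _ ?_) ?_)
  · rw [heq]
    exact (hζ s.height).sub (isAlgebraic_algebraMap (⟨_, hline⟩ : F⟮u⟯))
  · simp [SliceLine.paramU]
  · rw [map_mul]
    exact mul_lt_one_of_nonneg_of_lt_one_right hm zero_le (hlt _ (by simp [SliceLine.paramU]))

end FunctionField

lemma dvd_cone {f : MvPolynomial (Fin 3) F} (hf : Irreducible f) (hz : ¬ f ∣ pderiv 0 f)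
    (hcurv : f ∣ sliceCurvature f) (hd : (f.totalDegree.factorial : F) ≠ 0) {s : SliceLine F}
    (hs : aeval s.paramU f = 0) :
    f ∣ (X 2 - C s.height) * pderiv 2 f +
      (X 0 - C s.slope * X 1 - C s.intercept) * pderiv 0 f := by
  have : (Ideal.span {f}).IsPrime := (Ideal.span_singleton_prime hf.ne_zero).2 hf.prime
  obtain ⟨δ, hδ⟩ := exists_derivation_fractionRing_quotient (sliceTangent f) (Ideal.span {f})
    fun g hg ↦ by
      rw [Ideal.mem_span_singleton] at hg ⊢
      exact dvd_sliceTangent hg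
  set φ := algebraMap (MvPolynomial (Fin 3) F)
    (FractionRing (MvPolynomial (Fin 3) F ⧸ Ideal.span {f}))
  have hL (g : MvPolynomial (Fin 3) F) : φ g = 0 ↔ f ∣ g := by
    rw [IsScalarTower.algebraMap_apply _ (MvPolynomial (Fin 3) F ⧸ Ideal.span {f}),
      FaithfulSMul.algebraMap_eq_zero_iff, Ideal.Quotient.algebraMap_eq,
      Ideal.Quotient.eq_zero_iff_dvd]
  have hz' : φ (pderiv 0 f) ≠ 0 := mt (hL _).1 hz
  have h := tangentLine_eq hL hf hδ hz hcurv hd hs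
  rw [div_mul_eq_mul_div, add_div' _ _ _ hz', div_eq_zero_iff, or_iff_left hz'] at h
  rw [← hL, map_add, map_mul, map_mul, ← h]
  ring

/-- The restriction of a polynomial to the plane `u = c`. -/
noncomputable def restrictU (c : F) : MvPolynomial (Fin 3) F →ₐ[F] MvPolynomial (Fin 3) F :=
  aeval (Function.update X 1 (C c))

lemma pderiv_restrictU {i : Fin 3} (hi : i ≠ 1) (c : F) (f : MvPolynomial (Fin 3) F) :
    pderiv i (restrictU c f) = restrictU c (pderiv i f) := by
  rw [restrictU, derivation_aeval, sum_eq_single i (fun j _ hj ↦ ?_) (by simp)]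
  · simp [hi]
  · obtain rfl | hj1 := eq_or_ne j 1 <;> simp [*]

lemma restrictU_ne_zero {f : MvPolynomial (Fin 3) F} (hf : Irreducible f) (hz : pderiv 0 f ≠ 0)
    (c : F) : restrictU c f ≠ 0 :=
  aeval_C_ne_zero hf hz (by decide) c

lemma totalDegree_restrictU_le (c : F) (f : MvPolynomial (Fin 3) F) :
    (restrictU c f).totalDegree ≤ f.totalDegree := by
  refine totalDegree_aeval_le f fun i ↦ ?_
  by_cases hi : i = 1 <;> simp [hi]

lemma dvd_restrictU_of_aeval_paramV {f : MvPolynomial (Fin 3) F} {r : SliceLine F}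
    (hr : aeval r.paramV f = 0) :
    (X 0 - C r.slope * X 2 - C r.intercept) ∣ restrictU r.height f := by
  have h : aeval (fun i ↦ Polynomial.aeval (X 2 : MvPolynomial (Fin 3) F) (r.paramV i)) f = 0 := by
    rw [← comp_aeval_apply, hr, map_zero]
  rw [← sub_zero (restrictU r.height f), ← h]
  refine dvd_aeval_sub_aeval (fun i ↦ ?_) f
  fin_cases i <;> simp [SliceLine.paramV, MvPolynomial.algebraMap_eq, sub_sub]

/-- The Euler derivation of the planes `u = const`, centred at the point `(z, v) = (a, b)`. -/
noncomputable def eulerDerivation (a b : F) :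
    Derivation F (MvPolynomial (Fin 3) F) (MvPolynomial (Fin 3) F) :=
  (X 0 - C a : MvPolynomial (Fin 3) F) • pderiv 0 + (X 2 - C b : MvPolynomial (Fin 3) F) • pderiv 2

lemma eulerDerivation_line (a b c d : F) :
    eulerDerivation a b (X 0 - C c * X 2 - C d) =
      X 0 - C c * X 2 - C d + C (c * b + d - a) := by
  simp [eulerDerivation, pderiv_X]
  ring

lemma restrictU_dvd_derivation {f : MvPolynomial (Fin 3) F} {s : SliceLine F} (c : F)
    (h : f ∣ (X 2 - C s.height) * pderiv 2 f +
      (X 0 - C s.slope * X 1 - C s.intercept) * pderiv 0 f) :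
    restrictU c f ∣ eulerDerivation (s.slope * c + s.intercept) s.height (restrictU c f) := by
  convert map_dvd (restrictU c) h using 1
  simp only [eulerDerivation, Derivation.add_apply, Derivation.smul_apply, smul_eq_mul,
    pderiv_restrictU (c := c) (f := f) (by decide : (0 : Fin 3) ≠ 1),
    pderiv_restrictU (c := c) (f := f) (by decide : (2 : Fin 3) ≠ 1)]
  simp [restrictU]
  ring

lemma prime_X_sub_line (a b : F) : Prime (X 0 - C a * X 2 - C b : MvPolynomial (Fin 3) F) := by
  refine Irreducible.prime ?_
  rw [sub_sub, sub_eq_add_neg, ← one_mul (X 0)]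
  refine irreducible_mul_X_add 1 _ 0 one_ne_zero (by simp) (fun h ↦ ?_) isRelPrime_one_left
  rw [vars_neg] at h
  simpa using (vars_add_subset _ _).trans (union_subset_union_left (vars_mul _ _)) h

lemma meets_of_dvd_sliceCurvature {f : MvPolynomial (Fin 3) F} (hf : Irreducible f)
    (hz : ¬ f ∣ pderiv 0 f) (hcurv : f ∣ sliceCurvature f)
    (hd : (f.totalDegree.factorial : F) ≠ 0) {r s : SliceLine F}
    (hr : aeval r.paramV f = 0) (hs : aeval s.paramU f = 0) : r.Meets s := by
  have hgD := restrictU_dvd_derivation r.height (dvd_cone hf hz hcurv hd hs)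
  have hg0 : restrictU r.height f ≠ 0 := restrictU_ne_zero hf (fun h ↦ hz (h ▸ dvd_zero f)) _
  set l : MvPolynomial (Fin 3) F := X 0 - C r.slope * X 2 - C r.intercept with hl
  have hlprime : Prime l := prime_X_sub_line _ _
  have hlD := dvd_derivation_of_dvd_derivation _ hlprime
    (FiniteMultiplicity.of_prime_left hlprime hg0)
    (not_dvd_natCast_multiplicity hlprime hg0 (dvd_restrictU_of_aeval_paramV hr)
      (totalDegree_restrictU_le _ _) hd) hgD
  rw [hl, eulerDerivation_line, dvd_add_right dvd_rfl] at hlD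
  exact sub_eq_zero.1 (eq_zero_of_prime_dvd_C hlprime hlD)

variable {f : MvPolynomial (Fin 3) F}

lemma SliceLine.natDegree_paramV_le (r : SliceLine F) (i : Fin 3) :
    (r.paramV i).natDegree ≤ 1 := by
  fin_cases i
  exacts [Polynomial.natDegree_linear_le, (Polynomial.natDegree_C _).trans_le zero_le_one,
    Polynomial.natDegree_X_le]

lemma SliceLine.natDegree_paramU_le (s : SliceLine F) (i : Fin 3) :
    (s.paramU i).natDegree ≤ 1 := by
  fin_cases i
  exacts [Polynomial.natDegree_linear_le, Polynomial.natDegree_X_le,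
    (Polynomial.natDegree_C _).trans_le zero_le_one]

lemma SliceLine.Meets.eval_paramV_eq {r s : SliceLine F} (h : r.Meets s) :
    (fun i ↦ (r.paramV i).eval s.height) = fun i ↦ (s.paramU i).eval r.height := by
  ext i
  fin_cases i
  · simpa [SliceLine.paramV, SliceLine.paramU, SliceLine.Meets] using h
  all_goals simp [SliceLine.paramV, SliceLine.paramU]

lemma aeval_paramV_sliceCurvature {r : SliceLine F} (h : aeval r.paramV f = 0) :
    aeval r.paramV (sliceCurvature f) = 0 := by
  have hderiv (g : MvPolynomial (Fin 3) F) : Polynomial.derivative (aeval r.paramV g) =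
      aeval r.paramV (pderiv 0 g) * Polynomial.C r.slope + aeval r.paramV (pderiv 2 g) := by
    simpa [SliceLine.paramV, Fin.sum_univ_three] using
      derivation_aeval (Polynomial.derivative' (R := F)) r.paramV g
  have hf : aeval r.paramV (pderiv 2 f) =
      -(aeval r.paramV (pderiv 0 f) * Polynomial.C r.slope) := by
    have hf := hderiv f
    rw [h, Polynomial.derivative_zero] at hf
    linear_combination -hf
  have htangent (g : MvPolynomial (Fin 3) F) : aeval r.paramV (sliceTangent f g) =
      aeval r.paramV (pderiv 0 f) * Polynomial.derivative (aeval r.paramV g) := by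
    rw [sliceTangent_apply, map_sub, map_mul, map_mul, hf, hderiv]
    ring
  rw [sliceCurvature, map_sub, map_mul, map_mul, htangent, htangent, hf]
  simp
  ring

lemma card_le_of_aeval_paramV (hf : Irreducible f)
    (h : f.degreeOf 0 = 0 ∨ ¬ f ∣ sliceCurvature f) {R : Finset (SliceLine F)}
    (hinj : Set.InjOn SliceLine.height (R : Set (SliceLine F)))
    (hR : ∀ r ∈ R, aeval r.paramV f = 0) : #R ≤ 12 * f.totalDegree ^ 2 := by
  obtain ⟨H, hH, hdeg, hvan⟩ := exists_eliminant hf h F[X]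
  have hcard : #R ≤ H.totalDegree :=
    card_le_totalDegree_of_aeval_line_eq_zero hH hinj fun r hr ↦
      hvan r.paramV (hR r hr) (aeval_paramV_sliceCurvature (hR r hr))
  calc #R ≤ (f.totalDegree + 3 * f.totalDegree) * max f.totalDegree (3 * f.totalDegree) := by
        refine hcard.trans (hdeg.trans ?_)
        gcongr <;> exact totalDegree_sliceCurvature_le f
    _ = 12 * f.totalDegree ^ 2 := by
        rw [max_eq_right (by omega)]
        ring

lemma card_le_or_meets (hf : Irreducible f) (hd : (f.totalDegree.factorial : F) ≠ 0) :
    (∀ R : Finset (SliceLine F), Set.InjOn SliceLine.height (R : Set (SliceLine F)) →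
      (∀ r ∈ R, aeval r.paramV f = 0) → #R ≤ 12 * f.totalDegree ^ 2) ∨
    ∀ r s : SliceLine F, aeval r.paramV f = 0 → aeval s.paramU f = 0 → r.Meets s := by
  by_cases h : f.degreeOf 0 = 0 ∨ ¬ f ∣ sliceCurvature f
  · exact .inl fun R ↦ card_le_of_aeval_paramV hf h
  · push Not at h
    exact .inr fun r s ↦ meets_of_dvd_sliceCurvature hf (not_dvd_pderiv h.1 hd) h.2 hd

lemma card_le_totalDegree_of_meets_right {R : Finset (SliceLine F)} {s : SliceLine F}
    (hinj : Set.InjOn SliceLine.height (R : Set (SliceLine F)))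
    (hR : ∀ r ∈ R, aeval r.paramV f = 0) (hmeet : ∀ r ∈ R, r.Meets s) (hs : aeval s.paramU f ≠ 0) :
    #R ≤ f.totalDegree := by
  refine card_le_totalDegree_of_aeval_ne_zero s.natDegree_paramU_le hs hinj fun r hr ↦ ?_
  rw [← (hmeet r hr).eval_paramV_eq, ← eval_aeval, hR r hr, Polynomial.eval_zero]

lemma card_le_totalDegree_of_meets_left {S : Finset (SliceLine F)} {r : SliceLine F}
    (hslope : ∀ s ∈ S, ∀ s' ∈ S, s.height = s'.height → s.slope = s'.slope)
    (hS : ∀ s ∈ S, aeval s.paramU f = 0) (hmeet : ∀ s ∈ S, r.Meets s) (hr : aeval r.paramV f ≠ 0) :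
    #S ≤ f.totalDegree := by
  have hinj : Set.InjOn SliceLine.height (S : Set (SliceLine F)) := fun s hs s' hs' h ↦ by
    have hm := hmeet s hs
    have hm' := hmeet s' hs'
    have hsl := hslope s hs s' hs' h
    rw [SliceLine.Meets, h, hsl] at hm
    exact SliceLine.ext h hsl (add_left_cancel (hm.symm.trans hm'))
  refine card_le_totalDegree_of_aeval_ne_zero r.natDegree_paramV_le hr hinj fun s hs ↦ ?_
  rw [(hmeet s hs).eval_paramV_eq, ← eval_aeval, hS s hs, Polynomial.eval_zero]

end Surface

section Interedges
open Rel (interedges)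

variable {α β : Type*} {r : α → β → Prop} [∀ a, DecidablePred (r a)]

lemma card_interedges_le_mul_card_right {s : Finset α} {t : Finset β} {d : ℕ}
    (h : ∀ b ∈ t, #{a ∈ s | r a b} ≤ d) : #(interedges r s t) ≤ d * #t := by
  rw [interedges, card_filter, sum_product_right, mul_comm]
  simp_rw [← card_filter]
  exact sum_le_card_nsmul _ _ _ h

lemma card_interedges_le_mul_card_left {s : Finset α} {t : Finset β} {d : ℕ}
    (h : ∀ a ∈ s, #{b ∈ t | r a b} ≤ d) : #(interedges r s t) ≤ d * #s := by
  rw [interedges, card_filter, sum_product, mul_comm]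
  simp_rw [← card_filter]
  exact sum_le_card_nsmul _ _ _ h

lemma card_interedges_union_left [DecidableEq α] {s s' : Finset α} (h : Disjoint s s')
    (t : Finset β) : #(interedges r (s ∪ s') t) = #(interedges r s t) + #(interedges r s' t) := by
  classical
  rw [← card_union_of_disjoint (Rel.interedges_disjoint_left r h t)]
  simp only [interedges, union_product, filter_union]

lemma card_interedges_union_right [DecidableEq β] (s : Finset α) {t t' : Finset β}
    (h : Disjoint t t') :
    #(interedges r s (t ∪ t')) = #(interedges r s t) + #(interedges r s t') := by
  classical
  rw [← card_union_of_disjoint (Rel.interedges_disjoint_right r s h)]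
  simp only [interedges, product_union, filter_union]

lemma card_interedges_add_le_union [DecidableEq α] [DecidableEq β] {s s' : Finset α}
    {t t' : Finset β} (hs : Disjoint s s') (ht : Disjoint t t') :
    #(interedges r s t) + #(interedges r s' t') ≤ #(interedges r (s ∪ s') (t ∪ t')) := by
  rw [card_interedges_union_left hs, card_interedges_union_right _ ht,
    card_interedges_union_right _ ht]
  omega

lemma card_interedges_le_mul_sqrt {s : Finset α} {t : Finset β} {B : ℝ} (hs : √(#s : ℝ) ≤ B) :
    (#(interedges r s t) : ℝ) ≤ B * √(#s : ℝ) * #t := calc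
  (#(interedges r s t) : ℝ) ≤ #s * #t := by exact_mod_cast Rel.card_interedges_le_mul r s t
  _ = √(#s : ℝ) * √(#s : ℝ) * #t := by rw [Real.mul_self_sqrt (Nat.cast_nonneg _)]
  _ ≤ B * √(#s : ℝ) * #t := by gcongr

end Interedges

section Core
open Rel (interedges)
open SliceLine (Meets)

variable {F : Type*} [Field F]

/-- The incidence configurations to which the polynomial method is applied. Lines of the second
family having a common height are parallel, and two of them meet at most `k` common lines of the
first family: this is what remains of the bound on collinear points once points and planes have
been replaced by lines. -/
structure IsAdmissible (k : ℕ) (R S : Finset (SliceLine F)) : Prop where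
  injOn_height : Set.InjOn SliceLine.height (R : Set (SliceLine F))
  slope_eq : ∀ s ∈ S, ∀ s' ∈ S, s.height = s'.height → s.slope = s'.slope
  card_le : ∀ s ∈ S, ∀ s' ∈ S, s ≠ s' → ∀ T ⊆ R, (∀ r ∈ T, r.Meets s ∧ r.Meets s') → #T ≤ k

lemma IsAdmissible.mono {k : ℕ} {R S R' S' : Finset (SliceLine F)} (h : IsAdmissible k R S)
    (hR : R' ⊆ R) (hS : S' ⊆ S) : IsAdmissible k R' S' where
  injOn_height := h.injOn_height.mono hR
  slope_eq s hs s' hs' := h.slope_eq s (hS hs) s' (hS hs')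
  card_le s hs s' hs' hne T hT := h.card_le s (hS hs) s' (hS hs') hne T (hT.trans hR)

variable [∀ r : SliceLine F, DecidablePred r.Meets] {k : ℕ} {R S : Finset (SliceLine F)}

lemma IsAdmissible.card_interedges_le_of_forall_meets (h : IsAdmissible k R S)
    (hmeet : ∀ r ∈ R, ∀ s ∈ S, r.Meets s) : #(interedges Meets R S) ≤ #R + k * #S := by
  have hmul := Rel.card_interedges_le_mul (Meets (F := F)) R S
  by_cases h1 : #S ≤ 1
  · nlinarith
  · obtain ⟨s, hs, s', hs', hne⟩ := one_lt_card.1 (not_le.1 h1)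
    have hk := h.card_le s hs s' hs' hne R subset_rfl
      fun r hr ↦ ⟨hmeet r hr s hs, hmeet r hr s' hs'⟩
    nlinarith

lemma IsAdmissible.card_interedges_le_of_paramU_ne_zero (h : IsAdmissible k R S)
    {f : MvPolynomial (Fin 3) F} (hR : ∀ r ∈ R, aeval r.paramV f = 0)
    (hS : ∀ s ∈ S, aeval s.paramU f ≠ 0) : #(interedges Meets R S) ≤ f.totalDegree * #S :=
  card_interedges_le_mul_card_right fun s hs ↦
    card_le_totalDegree_of_meets_right (h.injOn_height.mono (filter_subset _ _))
      (fun r hr ↦ hR r (mem_of_mem_filter r hr)) (fun _ hr ↦ (mem_filter.1 hr).2) (hS s hs)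

lemma IsAdmissible.card_interedges_le_of_paramV_ne_zero (h : IsAdmissible k R S)
    {f : MvPolynomial (Fin 3) F} (hR : ∀ r ∈ R, aeval r.paramV f ≠ 0)
    (hS : ∀ s ∈ S, aeval s.paramU f = 0) : #(interedges Meets R S) ≤ f.totalDegree * #R :=
  card_interedges_le_mul_card_left fun r hr ↦
    card_le_totalDegree_of_meets_left
      (h.mono subset_rfl (filter_subset _ _)).slope_eq
      (fun s hs ↦ hS s (mem_of_mem_filter s hs)) (fun _ hs ↦ (mem_filter.1 hs).2) (hR r hr)

/-- All incidences between `R` and `S` take place between some `R' ⊆ R` and `S' ⊆ S` with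
`#R' ≤ M`, except for `e` of them and for `k` of them for each line of `S` outside `S'`. -/
def HasCore (k M e : ℕ) (R S : Finset (SliceLine F)) : Prop :=
  ∃ R' ⊆ R, ∃ S' ⊆ S, #R' ≤ M ∧
    #(interedges Meets R S) + k * #S' ≤ #(interedges Meets R' S') + e + k * #S

lemma HasCore.mono {M N e e' : ℕ} (h : HasCore k M e R S) (hM : M ≤ N) (he : e ≤ e') :
    HasCore k N e' R S := by
  obtain ⟨R', hR', S', hS', hcard, hle⟩ := h
  exact ⟨R', hR', S', hS', hcard.trans hM, by omega⟩

lemma HasCore.union [DecidableEq (SliceLine F)] {M₁ M₂ e₁ e₂ : ℕ}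
    {R₁ R₂ S₁ S₂ : Finset (SliceLine F)} (h₁ : HasCore k M₁ e₁ R₁ S₁)
    (h₂ : HasCore k M₂ e₂ R₂ S₂) (hR : Disjoint R₁ R₂) (hS : Disjoint S₁ S₂) :
    HasCore k (M₁ + M₂)
      (e₁ + e₂ + #(interedges Meets R₁ S₂) + #(interedges Meets R₂ S₁)) (R₁ ∪ R₂) (S₁ ∪ S₂) := by
  obtain ⟨R₁', hR₁, S₁', hS₁, hM₁, hle₁⟩ := h₁
  obtain ⟨R₂', hR₂, S₂', hS₂, hM₂, hle₂⟩ := h₂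
  have hS' : Disjoint S₁' S₂' := hS.mono hS₁ hS₂
  refine ⟨R₁' ∪ R₂', union_subset_union hR₁ hR₂, S₁' ∪ S₂', union_subset_union hS₁ hS₂,
    (card_union_le _ _).trans (add_le_add hM₁ hM₂), ?_⟩
  have hcore := card_interedges_add_le_union (r := Meets) (hR.mono hR₁ hR₂) hS'
  rw [card_interedges_union_left hR, card_interedges_union_right _ hS,
    card_interedges_union_right _ hS, card_union_of_disjoint hS, card_union_of_disjoint hS',
    mul_add, mul_add]
  omega

lemma IsAdmissible.hasCore_of_irreducible (h : IsAdmissible k R S)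
    {f : MvPolynomial (Fin 3) F} (hf : Irreducible f) (hd : (f.totalDegree.factorial : F) ≠ 0)
    (hR : ∀ r ∈ R, aeval r.paramV f = 0) (hS : ∀ s ∈ S, aeval s.paramU f = 0) :
    HasCore k (12 * f.totalDegree ^ 2) #R R S := by
  obtain hcard | hmeet := card_le_or_meets hf hd
  · exact ⟨R, subset_rfl, S, subset_rfl, hcard R h.injOn_height hR, by omega⟩
  · refine ⟨∅, empty_subset _, ∅, empty_subset _, by simp, ?_⟩
    simpa using h.card_interedges_le_of_forall_meets fun r hr s hs ↦ hmeet r s (hR r hr) (hS s hs)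

lemma IsAdmissible.hasCore_mul (h : IsAdmissible k R S) {q g : MvPolynomial (Fin 3) F}
    (hq : Irreducible q) (hd : (q.totalDegree.factorial : F) ≠ 0)
    (hg : ∀ R' ⊆ R, ∀ S' ⊆ S, (∀ r ∈ R', aeval r.paramV g = 0) → (∀ s ∈ S', aeval s.paramU g = 0) →
      HasCore k (12 * g.totalDegree ^ 2) (g.totalDegree * (#R' + #S') + #R') R' S')
    (hR : ∀ r ∈ R, aeval r.paramV (q * g) = 0) (hS : ∀ s ∈ S, aeval s.paramU (q * g) = 0) :
    HasCore k (12 * (q.totalDegree + g.totalDegree) ^ 2)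
      ((q.totalDegree + g.totalDegree) * (#R + #S) + #R) R S := by
  classical
  simp only [map_mul, mul_eq_zero] at hR hS
  set R₁ := {r ∈ R | aeval r.paramV q = 0}
  set R₂ := {r ∈ R | ¬ aeval r.paramV q = 0}
  set S₁ := {s ∈ S | aeval s.paramU q = 0}
  set S₂ := {s ∈ S | ¬ aeval s.paramU q = 0}
  have hR₁ : ∀ r ∈ R₁, aeval r.paramV q = 0 := fun r hr ↦ (mem_filter.1 hr).2
  have hR₂ : ∀ r ∈ R₂, aeval r.paramV q ≠ 0 := fun r hr ↦ (mem_filter.1 hr).2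
  have hS₁ : ∀ s ∈ S₁, aeval s.paramU q = 0 := fun s hs ↦ (mem_filter.1 hs).2
  have hS₂ : ∀ s ∈ S₂, aeval s.paramU q ≠ 0 := fun s hs ↦ (mem_filter.1 hs).2
  have h₁₁ := (h.mono (filter_subset _ R) (filter_subset _ S)).hasCore_of_irreducible hq hd hR₁ hS₁
  have h₂₂ := hg R₂ (filter_subset _ _) S₂ (filter_subset _ _)
    (fun r hr ↦ (hR r (mem_of_mem_filter r hr)).resolve_left (hR₂ r hr))
    (fun s hs ↦ (hS s (mem_of_mem_filter s hs)).resolve_left (hS₂ s hs))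
  have h₁₂ := (h.mono (filter_subset _ R) (filter_subset _ S)).card_interedges_le_of_paramU_ne_zero
    hR₁ hS₂
  have h₂₁ := (h.mono (filter_subset _ R) (filter_subset _ S)).card_interedges_le_of_paramV_ne_zero
    hR₂ hS₁
  have hcore := HasCore.union h₁₁ h₂₂ (disjoint_filter_filter_not _ _ _)
    (disjoint_filter_filter_not _ _ _)
  rw [filter_union_filter_not_eq, filter_union_filter_not_eq] at hcore
  have hcR : #R₁ + #R₂ = #R := card_filter_add_card_filter_not _
  have hcS : #S₁ + #S₂ = #S := card_filter_add_card_filter_not _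
  have hsq := Nat.zero_le (q.totalDegree * g.totalDegree)
  refine hcore.mono (by nlinarith) ?_
  rw [← hcR, ← hcS]
  nlinarith

lemma IsAdmissible.hasCore_of_aeval_eq_zero (h : IsAdmissible k R S)
    {f : MvPolynomial (Fin 3) F} (hf : f ≠ 0) (hd : (f.totalDegree.factorial : F) ≠ 0)
    (hR : ∀ r ∈ R, aeval r.paramV f = 0) (hS : ∀ s ∈ S, aeval s.paramU f = 0) :
    HasCore k (12 * f.totalDegree ^ 2) (f.totalDegree * (#R + #S) + #R) R S := by
  induction f using UniqueFactorizationMonoid.induction_on_prime generalizing R S with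
  | h₁ => exact absurd rfl hf
  | h₂ x hx =>
    have hR0 : R = ∅ := eq_empty_of_forall_notMem fun r hr ↦
      not_isUnit_zero (hR r hr ▸ hx.map (aeval r.paramV))
    exact ⟨∅, empty_subset _, ∅, empty_subset _, by simp, by simp [hR0]⟩
  | h₃ g q hg hq ih =>
    rw [totalDegree_mul_of_isDomain hq.ne_zero hg] at hd ⊢
    have hdq := natCast_factorial_ne_zero_of_le hd (Nat.le_add_right _ _)
    have hdg := natCast_factorial_ne_zero_of_le hd (Nat.le_add_left _ _)
    exact h.hasCore_mul hq.irreducible hdq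
      (fun R' hR' S' hS' ↦ ih (h.mono hR' hS') hg hdg) hR hS

lemma IsAdmissible.hasCore_of_aeval_paramU_eq_zero (h : IsAdmissible k R S)
    {f : MvPolynomial (Fin 3) F} (hf : f ≠ 0) (hd : (f.totalDegree.factorial : F) ≠ 0)
    (hS : ∀ s ∈ S, aeval s.paramU f = 0) :
    HasCore k (12 * f.totalDegree ^ 2) (f.totalDegree * (#R + #S) + #R) R S := by
  classical
  set R₁ := {r ∈ R | aeval r.paramV f = 0}
  set R₂ := {r ∈ R | ¬ aeval r.paramV f = 0}
  have h₂ := (h.mono (filter_subset _ R) subset_rfl).card_interedges_le_of_paramV_ne_zero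
    (R := R₂) (fun r hr ↦ (mem_filter.1 hr).2) hS
  have hcard : #R₁ + #R₂ = #R := card_filter_add_card_filter_not _
  obtain ⟨R', hR', S', hS', hM, hle⟩ :=
    (h.mono (filter_subset _ R) subset_rfl).hasCore_of_aeval_eq_zero hf hd (R := R₁)
      (fun r hr ↦ (mem_filter.1 hr).2) hS
  refine ⟨R', hR'.trans (filter_subset _ _), S', hS', hM, ?_⟩
  have hunion := card_interedges_union_left (r := Meets)
    (disjoint_filter_filter_not R R fun r ↦ aeval r.paramV f = 0) S
  rw [filter_union_filter_not_eq] at hunion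
  rw [hunion, ← hcard]
  linarith

end Core

section Interpolation
variable {σ F : Type*} [Fintype σ] [Field F]

lemma finrank_restrictDegree (m : ℕ) :
    Module.finrank F (restrictDegree σ F m) = (m + 1) ^ Fintype.card σ := by
  let e : {n : σ →₀ ℕ // ∀ i, n i ≤ m} ≃ (σ → Set.Iic m) :=
    (Finsupp.equivFunOnFinite.subtypeEquiv (q := fun f ↦ ∀ i, f i ≤ m) fun _ ↦ Iff.rfl).trans
      (Equiv.subtypePiEquivPi (p := fun _ j ↦ j ≤ m))
  rw [restrictDegree, Module.finrank_eq_nat_card_basis (basisRestrictSupport F _)]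
  refine (Nat.card_congr e).trans ?_
  rw [Nat.card_fun, Nat.card_coe_set_eq, Set.ncard_Iic_nat, Nat.card_eq_fintype_card]

lemma totalDegree_le_of_mem_restrictDegree {f : MvPolynomial σ F} {m : ℕ}
    (hf : f ∈ restrictDegree σ F m) : f.totalDegree ≤ Fintype.card σ * m :=
  Finset.sup_le fun n hn ↦ by
    rw [Finsupp.sum_fintype _ _ fun _ ↦ rfl, ← card_univ, ← smul_eq_mul]
    exact sum_le_card_nsmul _ _ _ fun i _ ↦ (mem_restrictDegree _ _ _).1 hf n hn i

lemma exists_ne_zero_aeval_eq_zero {ι : Type*} (L : Finset ι) (x : ι → σ → F[X])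
    (hx : ∀ ℓ ∈ L, ∀ i, (x ℓ i).natDegree ≤ 1) {m : ℕ}
    (hm : #L * (Fintype.card σ * m + 1) < (m + 1) ^ Fintype.card σ) :
    ∃ f : MvPolynomial σ F, f ≠ 0 ∧ f.totalDegree ≤ Fintype.card σ * m ∧
      ∀ ℓ ∈ L, aeval (x ℓ) f = 0 := by
  let N := Fintype.card σ * m + 1
  let T : MvPolynomial σ F →ₗ[F] L → Fin N → F :=
    LinearMap.pi fun ℓ ↦ LinearMap.pi fun j ↦
      Polynomial.lcoeff F (j : ℕ) ∘ₗ (aeval (x ℓ)).toLinearMap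
  have hT : Module.finrank F (L → Fin N → F) < Module.finrank F (restrictDegree σ F m) := by
    rw [finrank_restrictDegree]
    simpa [Module.finrank_pi_fintype] using hm
  obtain ⟨f, hf, hf0⟩ := Submodule.exists_mem_ne_zero_of_ne_bot
    (LinearMap.ker_ne_bot_of_finrank_lt (f := T ∘ₗ (restrictDegree σ F m).subtype) hT)
  have hdeg := totalDegree_le_of_mem_restrictDegree f.2
  refine ⟨f, Subtype.coe_ne_coe.2 hf0, hdeg, fun ℓ hℓ ↦ Polynomial.ext fun j ↦ ?_⟩
  obtain hj | hj := lt_or_ge j N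
  · exact congr_fun (congr_fun (LinearMap.mem_ker.1 hf) ⟨ℓ, hℓ⟩) ⟨j, hj⟩
  · exact Polynomial.coeff_eq_zero_of_natDegree_lt
      (((natDegree_aeval_le _ (hx ℓ hℓ)).trans hdeg).trans_lt hj)

lemma exists_polynomial_cover {ι : Type*} (L : Finset ι) (x : ι → σ → F[X])
    (hx : ∀ ℓ ∈ L, ∀ i, (x ℓ i).natDegree ≤ 1) {q m : ℕ} (hq : q ≠ 0) (hqL : q ≤ #L)
    (hm : (#L / q + 1) * (Fintype.card σ * m + 1) < (m + 1) ^ Fintype.card σ) :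
    ∃ A : Finset (MvPolynomial σ F), #A ≤ q ∧
      (∀ f ∈ A, f ≠ 0 ∧ f.totalDegree ≤ Fintype.card σ * m) ∧
      ∀ ℓ ∈ L, ∃ f ∈ A, aeval (x ℓ) f = 0 := by
  classical
  obtain ⟨P, hP, hcard⟩ := Finpartition.exists_equipartition_card_eq L hq hqL
  have hpoly (t : P.parts) : ∃ f : MvPolynomial σ F, f ≠ 0 ∧
      f.totalDegree ≤ Fintype.card σ * m ∧ ∀ ℓ ∈ t.1, aeval (x ℓ) f = 0 := by
    refine exists_ne_zero_aeval_eq_zero t.1 x (fun ℓ hℓ ↦ hx ℓ (P.le t.2 hℓ)) (lt_of_le_of_lt ?_ hm)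
    gcongr
    exact hcard ▸ hP.card_part_le_average_add_one t.2
  choose f hf0 hfdeg hf using hpoly
  refine ⟨univ.image f, ?_, fun g hg ↦ ?_, fun ℓ hℓ ↦ ?_⟩
  · exact card_image_le.trans (by rw [card_univ, Fintype.card_coe, hcard])
  · obtain ⟨t, -, rfl⟩ := mem_image.1 hg
    exact ⟨hf0 t, hfdeg t⟩
  · obtain ⟨t, ht, hℓt⟩ := P.exists_mem hℓ
    exact ⟨f ⟨t, ht⟩, mem_image_of_mem f (mem_univ _), hf ⟨t, ht⟩ ℓ hℓt⟩

end Interpolation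

section Induction
open Rel (interedges)
open SliceLine (Meets)

lemma exists_interpolation_degree {x : ℝ} (hx : 1 ≤ x) {N : ℕ} (hN : (N : ℝ) ≤ x ^ 2) :
    ∃ m : ℕ, (m : ℝ) ≤ 3 * x ∧ (N + 1) * (3 * m + 1) < (m + 1) ^ 3 := by
  refine ⟨⌊3 * x⌋₊, Nat.floor_le (by positivity), ?_⟩
  have hlt := Nat.lt_floor_add_one (3 * x)
  generalize ⌊3 * x⌋₊ = m at hlt ⊢
  have hsq : 2 * x ^ 2 < 2 / 9 * (m + 1 : ℝ) ^ 2 := by nlinarith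
  suffices ((N + 1) * (3 * m + 1) : ℝ) < (m + 1) ^ 3 by exact_mod_cast this
  calc ((N + 1) * (3 * m + 1) : ℝ)
      ≤ 2 * x ^ 2 * (3 * (m + 1)) := by gcongr <;> nlinarith
    _ < 2 / 9 * (m + 1 : ℝ) ^ 2 * (3 * (m + 1)) := by gcongr
    _ ≤ (m + 1 : ℝ) ^ 3 := by
        have hcube : 0 ≤ (m + 1 : ℝ) ^ 3 := by positivity
        linarith

variable {F : Type*} [Field F] [∀ r : SliceLine F, DecidablePred r.Meets]
  {k M d : ℕ} {B : ℝ} {R S : Finset (SliceLine F)} {A : Finset (MvPolynomial (Fin 3) F)}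

lemma HasCore.card_interedges_le {e : ℕ} (h : HasCore k M e R S) (hB : 0 ≤ B)
    (hM : ∀ R' ⊆ R, ∀ S' ⊆ S, #R' ≤ M →
      (#(interedges Meets R' S') : ℝ) ≤ B * (M + #S') + k * #S') :
    (#(interedges Meets R S) : ℝ) ≤ B * (M + #S) + e + k * #S := by
  obtain ⟨R', hR', S', hS', hcard, hle⟩ := h
  have hle' : (#(interedges Meets R S) + k * #S' : ℝ) ≤
      #(interedges Meets R' S') + e + k * #S := by
    exact_mod_cast hle
  have hmono : B * (M + #S') ≤ B * (M + #S) := by gcongr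
  linarith [hM R' hR' S' hS' hcard]

lemma IsAdmissible.card_interedges_le_of_rich (h : IsAdmissible k R S)
    (hd : (d.factorial : F) ≠ 0) (hA : ∀ f ∈ A, f ≠ 0 ∧ f.totalDegree ≤ d)
    (hS : ∀ s ∈ S, ∃ f ∈ A, aeval s.paramU f = 0) (hB : 0 ≤ B)
    (hM : ∀ R' ⊆ R, ∀ S' ⊆ S, #R' ≤ 12 * d ^ 2 →
      (#(interedges Meets R' S') : ℝ) ≤ B * ((12 * d ^ 2 : ℕ) + #S') + k * #S') :
    (#(interedges Meets R S) : ℝ) ≤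
      #A * (B * (12 * d ^ 2 : ℕ) + (d + 1) * #R) + (B + d + k) * #S := by
  classical
  induction A using Finset.induction_on generalizing S with
  | empty =>
    obtain rfl : S = ∅ := eq_empty_of_forall_notMem fun s hs ↦ by simpa using hS s hs
    simp [interedges]
  | insert f A hfA ih =>
    set S₁ := {s ∈ S | aeval s.paramU f = 0}
    set S₂ := {s ∈ S | ¬ aeval s.paramU f = 0}
    obtain ⟨⟨hf, hfd⟩, hA⟩ := (forall_mem_insert _ _ _).1 hA
    have hfac := natCast_factorial_ne_zero_of_le hd hfd
    have hcore : HasCore k (12 * d ^ 2) (d * (#R + #S₁) + #R) R S₁ :=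
      ((h.mono subset_rfl (filter_subset _ S)).hasCore_of_aeval_paramU_eq_zero hf hfac
        fun s hs ↦ (mem_filter.1 hs).2).mono (by gcongr) (by gcongr)
    have h₁ := hcore.card_interedges_le hB fun R' hR' S' hS' ↦
      hM R' hR' S' (hS'.trans (filter_subset _ _))
    have h₂ := ih (S := S₂) (h.mono subset_rfl (filter_subset _ S)) hA
      (fun s hs ↦ by
        obtain ⟨g, hg, hgs⟩ := hS s (mem_of_mem_filter s hs)
        obtain rfl | hgA := mem_insert.1 hg
        · exact absurd hgs (mem_filter.1 hs).2
        · exact ⟨g, hgA, hgs⟩)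
      fun R' hR' S' hS' ↦ hM R' hR' S' (hS'.trans (filter_subset _ _))
    have hunion := card_interedges_union_right (r := Meets) R
      (disjoint_filter_filter_not S S fun s ↦ aeval s.paramU f = 0)
    have hcard : (#S₁ + #S₂ : ℝ) = #S := by exact_mod_cast card_filter_add_card_filter_not _
    rw [filter_union_filter_not_eq] at hunion
    rw [hunion, ← hcard, card_insert_of_notMem hfA]
    push_cast at *
    linarith

lemma IsAdmissible.card_meets_le_of_poor (h : IsAdmissible k R S)
    (hA : ∀ f ∈ A, f ≠ 0 ∧ f.totalDegree ≤ d) (hR : ∀ r ∈ R, ∃ f ∈ A, aeval r.paramV f = 0)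
    {s : SliceLine F} (hs : ∀ f ∈ A, aeval s.paramU f ≠ 0) : #{r ∈ R | r.Meets s} ≤ #A * d := by
  classical
  have hcover : {r ∈ R | r.Meets s} ⊆
      A.biUnion fun f ↦ {r ∈ R | r.Meets s ∧ aeval r.paramV f = 0} := fun r hr ↦ by
    obtain ⟨hrR, hrs⟩ := mem_filter.1 hr
    obtain ⟨f, hf, hfr⟩ := hR r hrR
    exact mem_biUnion.2 ⟨f, hf, mem_filter.2 ⟨hrR, hrs, hfr⟩⟩
  refine (card_le_card hcover).trans (card_biUnion_le_card_mul _ _ _ fun f hf ↦ ?_)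
  exact (card_le_totalDegree_of_meets_right (h.injOn_height.mono (filter_subset _ _))
    (fun r hr ↦ (mem_filter.1 hr).2.2) (fun r hr ↦ (mem_filter.1 hr).2.1) (hs f hf)).trans
      (hA f hf).2

lemma IsAdmissible.card_interedges_le_of_cover (h : IsAdmissible k R S)
    (hd : (d.factorial : F) ≠ 0) (hA : ∀ f ∈ A, f ≠ 0 ∧ f.totalDegree ≤ d)
    (hR : ∀ r ∈ R, ∃ f ∈ A, aeval r.paramV f = 0) (hB : 0 ≤ B)
    (hM : ∀ R' ⊆ R, ∀ S' ⊆ S, #R' ≤ 12 * d ^ 2 →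
      (#(interedges Meets R' S') : ℝ) ≤ B * ((12 * d ^ 2 : ℕ) + #S') + k * #S') :
    (#(interedges Meets R S) : ℝ) ≤
      #A * (B * (12 * d ^ 2 : ℕ) + (d + 1) * #R + d * #S) + (B + d + k) * #S := by
  classical
  set S₁ := {s ∈ S | ∃ f ∈ A, aeval s.paramU f = 0}
  set S₂ := {s ∈ S | ¬ ∃ f ∈ A, aeval s.paramU f = 0}
  have hrich := (h.mono subset_rfl (filter_subset _ S)).card_interedges_le_of_rich (S := S₁) hd hA
    (fun s hs ↦ (mem_filter.1 hs).2) hB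
    fun R' hR' S' hS' ↦ hM R' hR' S' (hS'.trans (filter_subset _ _))
  have hpoor : #(interedges Meets R S₂) ≤ #A * d * #S₂ :=
    card_interedges_le_mul_card_right fun s hs ↦
      h.card_meets_le_of_poor hA hR (by simpa using (mem_filter.1 hs).2)
  have hunion := card_interedges_union_right (r := Meets) R
    (disjoint_filter_filter_not S S fun s ↦ ∃ f ∈ A, aeval s.paramU f = 0)
  rw [filter_union_filter_not_eq] at hunion
  have h₁ : (#S₁ : ℝ) ≤ #S := by exact_mod_cast card_filter_le _ _
  have h₂ : (#S₂ : ℝ) ≤ #S := by exact_mod_cast card_filter_le _ _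
  calc (#(interedges Meets R S) : ℝ)
      = #(interedges Meets R S₁) + #(interedges Meets R S₂) := by exact_mod_cast hunion
    _ ≤ #A * (B * (12 * d ^ 2 : ℕ) + (d + 1) * #R) + (B + d + k) * #S₁ + #A * d * #S₂ :=
        add_le_add hrich (by exact_mod_cast hpoor)
    _ ≤ #A * (B * (12 * d ^ 2 : ℕ) + (d + 1) * #R) + (B + d + k) * #S + #A * d * #S := by
        gcongr
    _ = #A * (B * (12 * d ^ 2 : ℕ) + (d + 1) * #R + d * #S) + (B + d + k) * #S := by ring

lemma IsAdmissible.card_interedges_le_of_card_eq (h : IsAdmissible k R S)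
    (hchar : ∀ d : ℕ, d ^ 2 < #R → (d.factorial : F) ≠ 0) {q : ℕ} (hq : 81 < q) {x : ℝ}
    (hx : 1 ≤ x) (hcard : (#R : ℝ) = q * x ^ 2) {B : ℝ} (hB : 0 ≤ B)
    (ih : ∀ R' ⊆ R, ∀ S' ⊆ S, (#R' : ℝ) ≤ 972 * x ^ 2 →
      (#(interedges Meets R' S') : ℝ) ≤ B * (#R' + #S') + k * #S') :
    (#(interedges Meets R S) : ℝ) ≤
      q * (B * (972 * x ^ 2) + (9 * x + 1) * #R + 9 * x * #S) + (B + 9 * x + k) * #S := by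
  classical
  have hq' : (81 : ℝ) < q := by exact_mod_cast hq
  obtain ⟨m, hmx, hm⟩ := exists_interpolation_degree hx (N := #R / q) <|
    Nat.cast_div_le.trans <| by rw [hcard, mul_div_cancel_left₀ _ (by positivity)]
  obtain ⟨A, hAq, hA, hR⟩ := exists_polynomial_cover R SliceLine.paramV
    (fun r _ ↦ r.natDegree_paramV_le) (q := q) (m := m) (by positivity)
    (by exact_mod_cast hcard ▸ le_mul_of_one_le_right q.cast_nonneg (one_le_pow₀ hx)) (by simpa)
  rw [Fintype.card_fin] at hA
  have hdx : ((3 * m : ℕ) : ℝ) ≤ 9 * x := by push_cast; linarith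
  have hd_sq : ((3 * m : ℕ) : ℝ) ^ 2 ≤ 81 * x ^ 2 :=
    (pow_le_pow_left₀ (Nat.cast_nonneg _) hdx 2).trans_eq (by ring)
  generalize 3 * m = d at hA hdx hd_sq
  have hcore : ((12 * d ^ 2 : ℕ) : ℝ) ≤ 972 * x ^ 2 := by push_cast; linarith
  have hd : d ^ 2 < #R := by
    rify
    rw [hcard]
    exact hd_sq.trans_lt (by gcongr)
  refine (h.card_interedges_le_of_cover (hchar d hd) hA hR hB fun R' hR' S' hS' hM ↦ ?_).trans ?_
  · have hM' : (#R' : ℝ) ≤ (12 * d ^ 2 : ℕ) := by exact_mod_cast hM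
    exact (ih R' hR' S' hS' (hM'.trans hcore)).trans (by gcongr)
  · gcongr

/-- If `#R` is at least `10 ^ 10`, write `#R = 10 ^ 10 * x ^ 2` and cover `R` by the zero sets of
`10 ^ 10` polynomials, which have degree at most `9 * x`. The cores have at most `972 * x ^ 2` lines
each, so by induction they contribute at most `31104 * 10 ^ 7 * x * #R`, less than a third of the
bound aimed at. -/
lemma IsAdmissible.card_interedges_le (h : IsAdmissible k R S)
    (hchar : ∀ d : ℕ, d ^ 2 < #R → (d.factorial : F) ≠ 0) :
    (#(interedges Meets R S) : ℝ) ≤ 10 ^ 7 * √(#R : ℝ) * (#R + #S) + k * #S := by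
  induction hn : #R using Nat.strong_induction_on generalizing R S with
  | _ n ih =>
  subst hn
  obtain hR | hR := lt_or_ge √(#R : ℝ) (10 ^ 5)
  · have hR' : √(#R : ℝ) ≤ 10 ^ 7 := hR.le.trans (by norm_num)
    refine (card_interedges_le_mul_sqrt hR').trans ?_
    rw [mul_add, add_right_comm]
    exact le_add_of_nonneg_left (by positivity)
  · obtain ⟨x, hx⟩ : ∃ x : ℝ, √(#R : ℝ) = 10 ^ 5 * x := ⟨√(#R : ℝ) / 10 ^ 5, by ring⟩
    have hx1 : 1 ≤ x := by linarith
    have hcard : (#R : ℝ) = (10 ^ 10 : ℕ) * x ^ 2 := by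
      rw [← Real.sq_sqrt (#R).cast_nonneg, hx]
      push_cast
      ring
    have hmain := h.card_interedges_le_of_card_eq hchar (by norm_num) hx1 hcard
      (B := 10 ^ 7 * (32 * x)) (by positivity) fun R' hR' S' hS' hle ↦ by
        have hlt : #R' < #R := by
          rify
          rw [hcard]
          exact hle.trans_lt (by gcongr; norm_num)
        have hsqrt : √(#R' : ℝ) ≤ 32 * x := Real.sqrt_le_iff.2 ⟨by positivity, by nlinarith⟩
        refine (ih _ hlt (h.mono hR' hS') (fun d hd ↦ hchar d (hd.trans hlt)) rfl).trans ?_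
        gcongr
    refine hmain.trans ?_
    have hxR : (#R : ℝ) ≤ x * #R := le_mul_of_one_le_left (Nat.cast_nonneg _) hx1
    have hxS : 0 ≤ x * #S := by positivity
    have hcore : (10 ^ 10 : ℕ) * (10 ^ 7 * (32 * x) * (972 * x ^ 2)) =
        10 ^ 7 * 31104 * (x * #R) := by rw [hcard]; ring
    rw [hx]
    push_cast at *
    linarith

end Induction

section Transfer
open scoped algebraMap
open Rel (interedges)
open SliceLine (Meets)

variable {K F : Type*} [Field K]

/-- The solution set of the linear equation with coefficient vector `s.1` and right-hand side
`s.2`, over an arbitrary field. -/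
def plane (s : (K × K × K) × K) : Set (K × K × K) :=
  {v | s.1.1 * v.1 + s.1.2.1 * v.2.1 + s.1.2.2 * v.2.2 = s.2}

instance [DecidableEq K] (s : (K × K × K) × K) : DecidablePred (· ∈ plane s) :=
  fun _ ↦ decEq _ _

/-- The cross product, for vectors written as triples. -/
def cross (u v : K × K × K) : K × K × K :=
  (u.2.1 * v.2.2 - u.2.2 * v.2.1, u.2.2 * v.1 - u.1 * v.2.2, u.1 * v.2.1 - u.2.1 * v.1)

lemma exists_eq_smul_of_cross_eq_zero {u v : K × K × K} (hu : u ≠ 0) (h : cross u v = 0) :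
    ∃ t : K, v = t • u := by
  obtain ⟨u₁, u₂, u₃⟩ := u
  obtain ⟨v₁, v₂, v₃⟩ := v
  simp only [cross, Prod.mk_eq_zero, ne_eq, Prod.smul_mk, smul_eq_mul, Prod.mk.injEq] at h hu ⊢
  obtain ⟨h₁, h₂, h₃⟩ := h
  by_cases hu₁ : u₁ = 0
  · by_cases hu₂ : u₂ = 0
    · have hu₃ : u₃ ≠ 0 := fun hu₃ ↦ hu ⟨hu₁, hu₂, hu₃⟩
      refine ⟨v₃ / u₃, ?_, ?_, ?_⟩ <;> field_simp <;> grind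
    · refine ⟨v₂ / u₂, ?_, ?_, ?_⟩ <;> field_simp <;> grind
  · refine ⟨v₁ / u₁, ?_, ?_, ?_⟩ <;> field_simp <;> grind

lemma plane_eq_of_cross_eq_zero {s s' : (K × K × K) × K} (hs : s.1 ≠ 0) (hs' : s'.1 ≠ 0)
    (h : cross s.1 s'.1 = 0) {x : K × K × K} (hx : x ∈ plane s) (hx' : x ∈ plane s') :
    plane s = plane s' := by
  obtain ⟨t, ht⟩ := exists_eq_smul_of_cross_eq_zero hs h
  have ht0 : t ≠ 0 := fun h0 ↦ hs' (by rw [ht, h0, zero_smul])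
  have hd : s'.2 = t * s.2 := by
    rw [← Set.mem_ofPred.1 hx, ← Set.mem_ofPred.1 hx', ht]
    simp only [Prod.smul_fst, Prod.smul_snd, smul_eq_mul]
    ring
  ext y
  simp only [plane, Set.mem_ofPred_eq, ht, hd, Prod.smul_fst, Prod.smul_snd, smul_eq_mul, mul_assoc,
    ← mul_add]
  exact (mul_right_inj' ht0).symm

lemma exists_eq_add_smul_cross {s s' : (K × K × K) × K} (h : cross s.1 s'.1 ≠ 0)
    {x y : K × K × K} (hx : x ∈ plane s) (hx' : x ∈ plane s') (hy : y ∈ plane s)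
    (hy' : y ∈ plane s') : ∃ t : K, y = x + t • cross s.1 s'.1 := by
  have hcross : cross (cross s.1 s'.1) (y - x) = 0 := by
    simp only [plane, Set.mem_ofPred_eq] at hx hx' hy hy'
    simp only [cross, Prod.fst_sub, Prod.snd_sub, Prod.mk_eq_zero]
    grind
  obtain ⟨t, ht⟩ := exists_eq_smul_of_cross_eq_zero h hcross
  exact ⟨t, by rw [← ht, add_sub_cancel]⟩

variable [Field F] [Algebra K F] {τ : F}

/-- The line representing the point `x`. When `τ` is transcendental over `K`, distinct points have
distinct heights and the denominator in `planeLine` does not vanish. -/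
def pointLine (τ : F) (x : K × K × K) : SliceLine F where
  height := (x.1 : F) + τ * (x.2.1 : F) + τ ^ 2 * (x.2.2 : F)
  slope := (x.2.1 : F) - τ ^ 2 * (x.2.2 : F)
  intercept := (x.2.2 : F)

/-- The factor by which the equation of a plane with normal vector `N` is divided in
`planeLine`. -/
def planeDenom (τ : F) (N : K × K × K) : F :=
  (N.2.2 : F) + τ ^ 2 * ((N.2.1 : F) - (N.1 : F)) - τ ^ 3 * (N.1 : F)

/-- The line representing the plane `s`: multiplied by `planeDenom τ s.1`, the condition that it
meets `pointLine τ x` becomes the equation of `s` at `x`. -/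
def planeLine (τ : F) (s : (K × K × K) × K) : SliceLine F where
  height := ((s.1.2.1 : F) - τ * (s.1.1 : F)) / planeDenom τ s.1
  slope := -(s.1.1 : F) / planeDenom τ s.1
  intercept := (s.2 : F) / planeDenom τ s.1

lemma eq_zero_of_cubic_eq_zero (hτ : Transcendental K τ) {a b c d : K}
    (h : (a : F) * τ ^ 3 + (b : F) * τ ^ 2 + (c : F) * τ + (d : F) = 0) :
    a = 0 ∧ b = 0 ∧ c = 0 ∧ d = 0 := by
  have h0 : (⟨a, b, c, d⟩ : Cubic K).toPoly = 0 :=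
    transcendental_iff.1 hτ _ (by simpa [Cubic.toPoly] using h)
  exact Cubic.ext_iff.1 ((Cubic.toPoly_eq_zero_iff _).1 h0)

lemma pointLine_height_injective (hτ : Transcendental K τ) :
    Function.Injective fun x : K × K × K ↦ (pointLine τ x).height := fun x y h ↦ by
  obtain ⟨-, h₃, h₂, h₁⟩ := eq_zero_of_cubic_eq_zero hτ
    (a := 0) (b := x.2.2 - y.2.2) (c := x.2.1 - y.2.1) (d := x.1 - y.1) (by
      simp only [pointLine] at h
      push_cast
      linear_combination h)
  exact Prod.ext (sub_eq_zero.1 h₁) (Prod.ext (sub_eq_zero.1 h₂) (sub_eq_zero.1 h₃))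

lemma planeDenom_ne_zero (hτ : Transcendental K τ) {N : K × K × K} (hN : N ≠ 0) :
    planeDenom τ N ≠ 0 := fun h ↦ hN <| by
  obtain ⟨h₁, h₂, -, h₃⟩ := eq_zero_of_cubic_eq_zero hτ
    (a := -N.1) (b := N.2.1 - N.1) (c := 0) (d := N.2.2) (by
      rw [planeDenom] at h
      push_cast
      linear_combination h)
  rw [neg_eq_zero] at h₁
  exact Prod.ext h₁ (Prod.ext (by simpa [h₁] using h₂) h₃)

lemma planeDenom_smul (t : K) (N : K × K × K) : planeDenom τ (t • N) = t * planeDenom τ N := by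
  simp only [planeDenom, Prod.smul_fst, Prod.smul_snd, smul_eq_mul, algebraMap.coe_mul]
  ring

lemma pointLine_meets_planeLine {s : (K × K × K) × K} (hs : planeDenom τ s.1 ≠ 0)
    (x : K × K × K) : (pointLine τ x).Meets (planeLine τ s) ↔ x ∈ plane s := by
  rw [plane, Set.mem_ofPred_eq, ← algebraMap.coe_inj K F]
  push_cast
  simp only [Meets, pointLine, planeLine]
  field_simp
  rw [planeDenom]
  constructor <;> intro h <;> linear_combination h

lemma cross_eq_zero_of_height_eq (hτ : Transcendental K τ) {s s' : (K × K × K) × K}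
    (hs : s.1 ≠ 0) (hs' : s'.1 ≠ 0) (h : (planeLine τ s).height = (planeLine τ s').height) :
    cross s.1 s'.1 = 0 := by
  rw [planeLine, planeLine, div_eq_div_iff (planeDenom_ne_zero hτ hs) (planeDenom_ne_zero hτ hs'),
    planeDenom, planeDenom] at h
  obtain ⟨-, h₃, h₂, h₁⟩ := eq_zero_of_cubic_eq_zero hτ (a := 0) (b := (cross s.1 s'.1).2.2)
    (c := (cross s.1 s'.1).2.1) (d := (cross s.1 s'.1).1) (by
      simp only [cross]
      push_cast
      linear_combination h)
  exact Prod.ext h₁ (Prod.ext h₂ h₃)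

lemma planeLine_slope_eq (hτ : Transcendental K τ) {s s' : (K × K × K) × K}
    (hs : s.1 ≠ 0) (hs' : s'.1 ≠ 0) (h : (planeLine τ s).height = (planeLine τ s').height) :
    (planeLine τ s).slope = (planeLine τ s').slope := by
  obtain ⟨t, ht⟩ :=
    exists_eq_smul_of_cross_eq_zero hs (cross_eq_zero_of_height_eq hτ hs hs' h)
  have ht0 : (t : F) ≠ 0 := fun h0 ↦ hs' <| by
    rw [ht, (algebraMap.coe_eq_zero_iff K F t).1 h0, zero_smul]
  simp only [planeLine, ht, planeDenom_smul, Prod.smul_fst, smul_eq_mul, algebraMap.coe_mul,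
    ← mul_neg]
  exact (mul_div_mul_left _ _ ht0).symm

variable {k : ℕ} {R : Finset (K × K × K)} {S : Finset ((K × K × K) × K)}

lemma injOn_planeLine (hτ : Transcendental K τ) (hS : ∀ s ∈ S, s.1 ≠ 0)
    (hS' : Set.InjOn plane (S : Set ((K × K × K) × K))) :
    Set.InjOn (planeLine τ) (S : Set ((K × K × K) × K)) := fun s hs s' hs' h ↦ by
  refine hS' hs hs' (Set.ext fun x ↦ ?_)
  rw [← pointLine_meets_planeLine (planeDenom_ne_zero hτ (hS s hs)), h,
    pointLine_meets_planeLine (planeDenom_ne_zero hτ (hS s' hs'))]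

lemma card_le_of_subset_plane (hS : ∀ s ∈ S, s.1 ≠ 0)
    (hS' : Set.InjOn plane (S : Set ((K × K × K) × K)))
    (hk : ∀ u v : K × K × K, v ≠ 0 → ∀ T ⊆ R, (∀ r ∈ T, ∃ t : K, r = u + t • v) → #T ≤ k)
    {s s' : (K × K × K) × K} (hs : s ∈ S) (hs' : s' ∈ S) (hne : s ≠ s')
    {T : Finset (K × K × K)} (hT : T ⊆ R) (hTs : ∀ r ∈ T, r ∈ plane s ∧ r ∈ plane s') :
    #T ≤ k := by
  obtain rfl | ⟨x, hx⟩ := T.eq_empty_or_nonempty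
  · exact Nat.zero_le k
  obtain ⟨hxs, hxs'⟩ := hTs x hx
  have hcross : cross s.1 s'.1 ≠ 0 := fun h ↦
    hne (hS' hs hs' (plane_eq_of_cross_eq_zero (hS s hs) (hS s' hs') h hxs hxs'))
  exact hk x _ hcross T hT fun y hy ↦
    exists_eq_add_smul_cross hcross hxs hxs' (hTs y hy).1 (hTs y hy).2

lemma isAdmissible_image [DecidableEq (SliceLine F)] (hτ : Transcendental K τ)
    (hS : ∀ s ∈ S, s.1 ≠ 0) (hS' : Set.InjOn plane (S : Set ((K × K × K) × K)))
    (hk : ∀ u v : K × K × K, v ≠ 0 → ∀ T ⊆ R, (∀ r ∈ T, ∃ t : K, r = u + t • v) → #T ≤ k) :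
    IsAdmissible k (R.image (pointLine τ)) (S.image (planeLine τ)) where
  injOn_height := by
    rw [coe_image]
    exact Set.InjOn.image_of_comp (pointLine_height_injective hτ).injOn
  slope_eq := by
    simp only [forall_mem_image]
    exact fun s hs s' hs' ↦ planeLine_slope_eq hτ (hS s hs) (hS s' hs')
  card_le := by
    simp only [forall_mem_image]
    intro s hs s' hs' hne T hT hTs
    obtain ⟨T, hTR, rfl⟩ := subset_image_iff.1 hT
    refine card_image_le.trans
      (card_le_of_subset_plane hS hS' hk hs hs' (ne_of_apply_ne _ hne) (by exact_mod_cast hTR)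
        fun x hx ↦ ?_)
    obtain ⟨h, h'⟩ := hTs _ (mem_image_of_mem _ hx)
    exact ⟨(pointLine_meets_planeLine (planeDenom_ne_zero hτ (hS s hs)) x).1 h,
      (pointLine_meets_planeLine (planeDenom_ne_zero hτ (hS s' hs')) x).1 h'⟩

lemma card_incidences_le_card_interedges [DecidableEq K] [DecidableEq (SliceLine F)]
    [∀ r : SliceLine F, DecidablePred r.Meets] (hτ : Transcendental K τ)
    (hS : ∀ s ∈ S, s.1 ≠ 0) (hS' : Set.InjOn plane (S : Set ((K × K × K) × K))) :
    #{rs ∈ R ×ˢ S | rs.1 ∈ plane rs.2} ≤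
      #(interedges Meets (R.image (pointLine τ)) (S.image (planeLine τ))) := by
  refine card_le_card_of_injOn (Prod.map (pointLine τ) (planeLine τ)) (fun rs hrs ↦ ?_) ?_
  · obtain ⟨hmem, hrs⟩ := mem_filter.1 hrs
    obtain ⟨hr, hs⟩ := mem_product.1 hmem
    exact Rel.mem_interedges_iff.2 ⟨mem_image_of_mem _ hr, mem_image_of_mem _ hs,
      (pointLine_meets_planeLine (planeDenom_ne_zero hτ (hS _ hs)) _).2 hrs⟩
  · refine Set.InjOn.mono (fun rs hrs ↦ ?_)
      ((pointLine_height_injective hτ).of_comp (f := SliceLine.height) |>.injOn (s := R) |>.prodMap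
        (injOn_planeLine hτ hS hS'))
    exact mem_product.1 (mem_of_mem_filter rs hrs)

end Transfer

lemma natCast_factorial_ne_zero_of_sq_lt {K : Type*} [Field K] {p n d : ℕ} [CharP K p]
    (hn : p = 0 ∨ n ≤ p ^ 2) (hd : d ^ 2 < n) : (d.factorial : K) ≠ 0 := by
  obtain hp | rfl := CharP.char_is_prime_or_zero K p
  · have : Fact p.Prime := ⟨hp⟩
    refine (IsUnit.natCast_factorial_iff_of_charP p).2 ?_ |>.ne_zero
    exact lt_of_pow_lt_pow_left₀ 2 p.zero_le (hd.trans_le (hn.resolve_left hp.ne_zero))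
  · have := CharP.charP_to_charZero K
    exact_mod_cast d.factorial_ne_zero

end PointPlane

open PointPlane in
theorem rudnev_point_plane_incidences_general {K : Type*} [Field K] [DecidableEq K] (p k : ℕ)
    [CharP K p] {R : Finset (K × K × K)} {S : Finset ((K × K × K) × K)}
    (hS : ∀ s ∈ S, s.1 ≠ 0) (hS' : Set.InjOn plane (S : Set ((K × K × K) × K)))
    (hp : p = 0 ∨ #R ≤ p ^ 2)
    (hk : ∀ u v : K × K × K, v ≠ 0 → ∀ T ⊆ R, (∀ r ∈ T, ∃ t : K, r = u + t • v) → #T ≤ k) :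
    (#{rs ∈ R ×ˢ S | rs.1 ∈ plane rs.2} : ℝ) ≤ 10 ^ 7 * √(#R : ℝ) * (#R + #S) + k * #S := by
  classical
  have hτ : Transcendental K (RatFunc.X : RatFunc K) := RatFunc.transcendental_X
  have hcard := card_incidences_le_card_interedges (R := R) hτ hS hS'
  have hbound := (isAdmissible_image hτ hS hS' hk).card_interedges_le fun d hd ↦
    natCast_factorial_ne_zero_of_sq_lt (p := p) hp (hd.trans_le card_image_le)
  calc (#{rs ∈ R ×ˢ S | rs.1 ∈ plane rs.2} : ℝ) ≤ _ := by exact_mod_cast hcard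
    _ ≤ _ := hbound
    _ ≤ _ := by gcongr <;> exact card_image_le

theorem rudnev_point_plane_incidences :
    ∃ C > (0:ℝ),
      ∀ (p : ℕ) [Fact p.Prime], p ≠ 2 →
      ∀ (R : Finset (ZMod p × ZMod p × ZMod p))
        (S : Finset ((ZMod p × ZMod p × ZMod p) × ZMod p)),
      -- every element of S is a genuine plane (nonzero coefficient vector)
      (∀ s ∈ S, s.1 ≠ (0, 0, 0)) →
      -- distinct elements of S describe distinct planes
      (∀ s₁ ∈ S, ∀ s₂ ∈ S, planeSet s₁ = planeSet s₂ → s₁ = s₂) →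
      R.card ≤ S.card → R.card ≤ p ^ 2 →
      ∀ k : ℕ, 0 < k →
      -- no line contains more than k points of R
      (∀ u v : ZMod p × ZMod p × ZMod p, v ≠ 0 →
        (R.filter fun r => ∃ t : ZMod p, r = u + t • v).card ≤ k) →
      (((R ×ˢ S).filter fun rs =>
          rs.2.1.1 * rs.1.1 + rs.2.1.2.1 * rs.1.2.1 + rs.2.1.2.2 * rs.1.2.2 = rs.2.2).card : ℝ) ≤
        C * (Real.sqrt (R.card) * S.card + (k : ℝ) * S.card) := by
  refine ⟨2 * 10 ^ 7, by norm_num, fun p _ _ R S hS hS' hRS hRp k _ hk ↦ ?_⟩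
  refine (rudnev_point_plane_incidences_general p k hS (fun s hs s' hs' ↦ hS' s hs s' hs')
    (Or.inr hRp) fun u v hv T hT hTv ↦ ?_).trans ?_
  · exact (card_le_card fun r hr ↦ mem_filter.2 ⟨hT hr, hTv r hr⟩).trans (hk u v hv)
  · have hle : √(#R : ℝ) * #R ≤ √(#R : ℝ) * #S := by gcongr
    have hkS : (0 : ℝ) ≤ k * #S := by positivity
    linarith
end

section
/- There exists an absolute constant C > 0 such that the following holds. Let p be an odd prime, let g, h : 𝔽_p* → 𝔽_p* be arbitrary functions, define f(x,y) = g(x)(h(x)+y) on 𝔽_p* × 𝔽_p*, and set m = μ(g·h), where (g·h)(x) := g(x)h(x). Then for all nonempty finite subsets A, B, C ⊆ 𝔽_p* with |A|, |B|, |C| ≤ p^{5/8}, one has max{|f(A,B)|, |B·C|} ≥ C · min{ |A|^{1/5}|B|^{4/5}|C|^{1/5} / m^{4/5} , |B||C|^{1/2} / m , |B||A|^{1/2} / m , |B|^{2/3}|C|^{1/3}|A|^{1/3} / m^{2/3} }. -/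
open Finset Pointwise

/-- `mu g` is `max_{t ∈ 𝔽_p*} |{x ∈ 𝔽_p* : g x = t}|`. -/
def mu {p : ℕ} [NeZero p] (g : ZMod p → ZMod p) : ℕ :=
  Finset.sup (Finset.univ.filter fun t : ZMod p => t ≠ 0)
    (fun t => (Finset.univ.filter fun x : ZMod p => x ≠ 0 ∧ g x = t).card)

/-!
After passing to a subset of `A` on which `g * h` is injective, the affine maps
`z ↦ (g a / c) * z + g a * h a` with `a ∈ A` and `c ∈ C` are distinct, and each of them takes the
value `g a * (h a + b)` at the point `b * c`. So they take many values in `f(A, B)` at points of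
`B * C`, and by Cauchy–Schwarz there are many collisions `l x = l' x'`.

Over the extension `F(μ, ν)`, with `μ` and `ν` algebraically independent, a collision becomes a
meeting of a line in a plane `s = const` determined by `(l, x')` with a line in a plane `t = const`
determined by `(l', x)`. Distinct lines of one family lie in distinct parallel planes, and few of
them lie in a common regulus. For two such families of at most `N ≤ p ^ 2` lines each, the number of
meetings is bounded by the polynomial method. In a minimal counterexample every line of the larger
family is rich, so a polynomial of degree `O(√N)` vanishing on a random sample of the smaller family
vanishes on all lines that carry most of the incidences. Each of these lines, apart from a number
quadratic in the degree, meets few lines contained in the surface: otherwise a factor of the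
polynomial divides its own flecnode polynomial, and the contained lines that meet the given one
form a regulus. A degree at most `p / 2` makes these differential arguments valid in
characteristic `p`.
-/

namespace PhamMojarrad

section Polynomials

open Polynomial

open MvPolynomial (pderiv)

variable {σ R K : Type*} [CommRing R] [Field K]

theorem derivative_aeval [Fintype σ] (v : σ → R[X]) (P : MvPolynomial σ R) :
    derivative (MvPolynomial.aeval v P) =
      ∑ i, MvPolynomial.aeval v (pderiv i P) * derivative (v i) := by
  classical
  induction P using MvPolynomial.induction_on with
  | C a => simp
  | add P Q hP hQ => simp only [map_add, hP, hQ, add_mul, sum_add_distrib]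
  | mul_X P j hP =>
    simp only [map_mul, MvPolynomial.aeval_X, derivative_mul, hP, MvPolynomial.pderiv_mul,
      MvPolynomial.pderiv_X, map_add, add_mul,
      sum_add_distrib, sum_mul]
    refine congrArg₂ (· + ·) (sum_congr rfl fun i _ ↦ mul_right_comm _ _ _) (Eq.symm ?_)
    rw [sum_eq_single_of_mem j (mem_univ j) fun i _ hij ↦ by simp [Pi.single_eq_of_ne' hij],
      Pi.single_eq_same, map_one, mul_one]

theorem eval_aeval (v : σ → R[X]) (x : R) (P : MvPolynomial σ R) :
    (MvPolynomial.aeval v P).eval x = MvPolynomial.eval (fun i ↦ (v i).eval x) P := by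
  rw [← Polynomial.coe_aeval_eq_eval, ← MvPolynomial.coe_aeval_eq_eval]
  exact DFunLike.congr_fun (MvPolynomial.comp_aeval v (Polynomial.aeval x)) P

theorem natDegree_aeval_le {v : σ → R[X]} (hv : ∀ i, (v i).natDegree ≤ 1)
    (P : MvPolynomial σ R) : (MvPolynomial.aeval v P).natDegree ≤ P.totalDegree := by
  simpa using MvPolynomial.aeval_natDegree_le P le_rfl v hv

theorem pderiv_comm (i j : σ) (P : MvPolynomial σ R) :
    pderiv i (pderiv j P) = pderiv j (pderiv i P) := by
  classical
  let D (k : σ) : Derivation R (MvPolynomial σ R) (MvPolynomial σ R) := pderiv k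
  have bracket_eq_zero : ⁅D i, D j⁆ = 0 := by
    refine MvPolynomial.derivation_ext fun k ↦ ?_
    simp only [D, Derivation.commutator_apply, MvPolynomial.pderiv_X, Pi.single_apply,
      Derivation.zero_apply]
    split_ifs <;> simp
  simpa [D, Derivation.commutator_apply, sub_eq_zero] using DFunLike.congr_fun bracket_eq_zero P

theorem totalDegree_pderiv_le (i : σ) (P : MvPolynomial σ R) :
    (pderiv i P).totalDegree ≤ P.totalDegree - 1 := by
  refine Finset.sup_le fun m hm ↦ ?_
  have raised_mem : m + Finsupp.single i 1 ∈ P.support := by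
    rw [MvPolynomial.mem_support_iff, MvPolynomial.coeff_pderiv] at hm
    exact MvPolynomial.mem_support_iff.2 (left_ne_zero_of_mul hm)
  have hle := MvPolynomial.le_totalDegree raised_mem
  rw [Finsupp.sum_add_index' (fun _ ↦ rfl) (fun _ _ _ ↦ rfl),
    Finsupp.sum_single_index rfl] at hle
  exact Nat.le_sub_one_of_lt hle

theorem pderiv_ne_zero {p : ℕ} [CharP K p] {P : MvPolynomial σ K} {i : σ}
    (hp : P.totalDegree < p) (hi : P.degreeOf i ≠ 0) : pderiv i P ≠ 0 := by
  classical
  obtain ⟨m, hm, hmi⟩ : ∃ m ∈ P.support, m i ≠ 0 := by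
    by_contra! h
    exact hi (Nat.le_zero.1 (MvPolynomial.degreeOf_le_iff.2 fun m hm ↦ (h m hm).le))
  obtain ⟨n, rfl⟩ : ∃ n, m = n + Finsupp.single i 1 :=
    ⟨m - Finsupp.single i 1, (tsub_add_cancel_of_le
      (Finsupp.single_le_iff.2 (Nat.one_le_iff_ne_zero.2 hmi))).symm⟩
  intro h
  have hcoeff := congrArg (MvPolynomial.coeff n) h
  rw [MvPolynomial.coeff_pderiv, MvPolynomial.coeff_zero] at hcoeff
  have cast_eq_zero : ((n i + 1 : ℕ) : K) = 0 := by
    exact_mod_cast (mul_eq_zero.1 hcoeff).resolve_left (MvPolynomial.mem_support_iff.1 hm)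
  have hlt : n i + 1 < p := by
    have := (MvPolynomial.monomial_le_degreeOf i hm).trans
      (MvPolynomial.degreeOf_le_totalDegree P i)
    simp only [Finsupp.add_apply, Finsupp.single_eq_same] at this
    lia
  exact absurd (Nat.le_of_dvd (by lia) ((CharP.cast_eq_zero_iff K p _).1 cast_eq_zero)) (by lia)

theorem natDegree_eq_zero_of_derivative_eq_zero_of_lt [NoZeroDivisors R] {p : ℕ} [CharP R p]
    {f : R[X]} (hf : f.natDegree < p) (h : derivative f = 0) : f.natDegree = 0 := by
  rw [← expand_contract p h (by lia), natDegree_expand] at hf ⊢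
  have : (contract p f).natDegree = 0 := by nlinarith
  simp [this]

theorem exists_eq_C_mul_of_wronskian_eq_zero {p : ℕ} [CharP K p] {U V : K[X]} (hV : V ≠ 0)
    (hUp : U.natDegree < p) (hVp : V.natDegree < p) (h : wronskian U V = 0) :
    ∃ c : K, U = C c * V := by
  classical
  obtain ⟨u, v, hu, hv, coprime⟩ := extract_gcd U V
  set d := gcd U V
  rw [gcd_isUnit_iff] at coprime
  have hd0 : d ≠ 0 := fun h0 ↦ hV (by rw [hv, h0, zero_mul])
  have hv0 : v ≠ 0 := fun h0 ↦ hV (by rw [hv, h0, mul_zero])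
  have wronskian_uv : wronskian u v = 0 := by
    have : d ^ 2 * wronskian u v = 0 := by
      rw [← h, hu, hv]
      simp only [wronskian, derivative_mul]
      ring
    exact (mul_eq_zero.1 this).resolve_left (pow_ne_zero 2 hd0)
  obtain ⟨hu', hv'⟩ := coprime.wronskian_eq_zero_iff.1 wronskian_uv
  have degree_u : u.natDegree = 0 := by
    rcases eq_or_ne u 0 with rfl | hu0
    · simp
    rw [hu, natDegree_mul hd0 hu0] at hUp
    exact natDegree_eq_zero_of_derivative_eq_zero_of_lt (p := p) (by lia) hu'
  have degree_v : v.natDegree = 0 := by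
    rw [hv, natDegree_mul hd0 hv0] at hVp
    exact natDegree_eq_zero_of_derivative_eq_zero_of_lt (p := p) (by lia) hv'
  obtain ⟨a, rfl⟩ := natDegree_eq_zero.1 degree_u
  obtain ⟨b, rfl⟩ := natDegree_eq_zero.1 degree_v
  have hb : b ≠ 0 := by simpa using hv0
  refine ⟨a / b, ?_⟩
  rw [hu, hv, mul_left_comm, ← C_mul, div_mul_cancel₀ a hb]

-- With `W = n' m - n m'` the identity says `W' m² = W (m²)'`, so `W = c m²` and `(n / m)' = c`.
theorem exists_eq_linear_mul_of_second_order {p D : ℕ} [CharP K p] {m n : K[X]} (hm : m ≠ 0)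
    (hmD : m.natDegree < D) (hnD : n.natDegree < D) (hD : 2 * D ≤ p)
    (h : (derivative (derivative n) * m - n * derivative (derivative m)) * m =
      2 * derivative m * (derivative n * m - n * derivative m)) :
    ∃ e₀ e₁ : K, n = (C e₀ + C e₁ * X) * m := by
  have degree_W : (derivative n * m - n * derivative m).natDegree < p := by
    have := natDegree_derivative_le n
    have := natDegree_derivative_le m
    refine (natDegree_sub_le _ _).trans_lt (max_lt ?_ ?_) <;>
      refine natDegree_mul_le.trans_lt ?_ <;> lia
  obtain ⟨c, hc⟩ := exists_eq_C_mul_of_wronskian_eq_zero (p := p) (pow_ne_zero 2 hm) degree_W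
    (by rw [natDegree_pow]; lia) (by
      simp only [wronskian, derivative_sub, derivative_mul, derivative_pow]
      simp only [Nat.cast_ofNat, map_ofNat]
      linear_combination -m * h)
  have degree_cXm : (n - C c * X * m).natDegree < p := by
    refine (natDegree_sub_le _ _).trans_lt (max_lt (by lia) (natDegree_mul_le.trans_lt ?_))
    have : (C c * X).natDegree ≤ 1 := by compute_degree
    lia
  obtain ⟨e, he⟩ := exists_eq_C_mul_of_wronskian_eq_zero (p := p) hm degree_cXm (by lia) (by
    simp only [wronskian, derivative_sub, derivative_mul, derivative_C, derivative_X]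
    linear_combination -hc)
  exact ⟨e, c, by linear_combination he⟩

end Polynomials

section Elimination

open Polynomial

open MvPolynomial (finSuccEquiv)

variable {σ R K : Type*} [CommRing R] [Field K] {n : ℕ}

theorem totalDegree_resultant_le {f g : (MvPolynomial σ R)[X]} {a b : ℕ}
    (hf : ∀ i, (f.coeff i).totalDegree ≤ a) (hg : ∀ i, (g.coeff i).totalDegree ≤ b) :
    (resultant f g).totalDegree ≤ f.natDegree * b + g.natDegree * a := by
  rw [resultant, Matrix.det_apply]
  refine MvPolynomial.totalDegree_finsetSum_le fun τ _ ↦ ?_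
  refine (MvPolynomial.totalDegree_smul_le _ _).trans
    ((MvPolynomial.totalDegree_finsetProd _ _).trans ?_)
  rw [Fin.sum_univ_add]
  refine add_le_add ((sum_le_card_nsmul _ _ b fun i _ ↦ ?_).trans_eq (by simp))
    ((sum_le_card_nsmul _ _ a fun i _ ↦ ?_).trans_eq (by simp))
  · simp only [sylvester, Matrix.of_apply, Fin.addCases_left]
    split_ifs
    · exact hg _
    · simp
  · simp only [sylvester, Matrix.of_apply, Fin.addCases_right]
    split_ifs
    · exact hf _
    · simp

theorem resultant_ne_zero_of_irreducible {A : Type*} [CommRing A] [IsDomain A]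
    [UniqueFactorizationMonoid A] {f g : A[X]} (hf : Irreducible f) (hdeg : f.natDegree ≠ 0)
    (hfg : ¬ f ∣ g) : resultant f g ≠ 0 := by
  classical
  let _ : GCDMonoid A := UniqueFactorizationMonoid.toGCDMonoid A
  let _ : NormalizedGCDMonoid A := Nonempty.some inferInstance
  let φ := algebraMap A (FractionRing A)
  have hφ : Function.Injective φ := IsFractionRing.injective _ _
  have primitive : f.IsPrimitive := hf.isPrimitive hdeg
  have irreducible_map : Irreducible (f.map φ) :=
    primitive.irreducible_iff_irreducible_map_fraction_map.1 hf
  have coprime_map : IsCoprime (f.map φ) (g.map φ) :=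
    irreducible_map.coprime_iff_not_dvd.2 fun h ↦
      hfg ((primitive.dvd_iff_fraction_map_dvd_fraction_map (FractionRing A)).2 h)
  intro h
  have resultant_map : resultant (f.map φ) (g.map φ) = 0 := by
    rw [natDegree_map_eq_of_injective hφ, natDegree_map_eq_of_injective hφ, resultant_map_map, h,
      map_zero]
  exact (resultant_eq_zero_iff.1 resultant_map).2 coprime_map

theorem finSuccEquiv_symm_C (P : MvPolynomial (Fin n) R) :
    (finSuccEquiv R n).symm (C P) = MvPolynomial.rename Fin.succ P := by
  have comp_eq : (finSuccEquiv R n).toAlgHom.comp (MvPolynomial.rename Fin.succ) =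
      IsScalarTower.toAlgHom R (MvPolynomial (Fin n) R) _ :=
    MvPolynomial.algHom_ext fun i ↦ by
      simp [MvPolynomial.finSuccEquiv_X_succ]
  exact (AlgEquiv.symm_apply_eq _).2 (DFunLike.congr_fun comp_eq P).symm

theorem totalDegree_coeff_finSuccEquiv_le (P : MvPolynomial (Fin (n + 1)) R) (i : ℕ) :
    ((finSuccEquiv R n P).coeff i).totalDegree ≤ P.totalDegree := by
  by_cases h : (finSuccEquiv R n P).coeff i = 0
  · simp [h]
  · exact (Nat.le_add_right _ i).trans (MvPolynomial.totalDegree_coeff_finSuccEquiv_add_le P i h)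

theorem exists_eliminant {P H : MvPolynomial (Fin (n + 1)) K} (hP : Irreducible P)
    (hP0 : P.degreeOf 0 ≠ 0) (hPH : ¬ P ∣ H) :
    ∃ E : MvPolynomial (Fin n) K, E ≠ 0 ∧ E.totalDegree ≤ 2 * P.totalDegree * H.totalDegree ∧
      ∃ u v, MvPolynomial.rename Fin.succ E = P * u + H * v := by
  set f := finSuccEquiv K n P with hf
  set g := finSuccEquiv K n H with hg
  have natDegree_le (Q : MvPolynomial (Fin (n + 1)) K) :
      (finSuccEquiv K n Q).natDegree ≤ Q.totalDegree :=
    (MvPolynomial.natDegree_finSuccEquiv Q).trans_le (MvPolynomial.degreeOf_le_totalDegree Q 0)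
  have hdeg : f.natDegree ≠ 0 := by rwa [hf, MvPolynomial.natDegree_finSuccEquiv]
  refine ⟨resultant f g, ?_, ?_, ?_⟩
  · exact resultant_ne_zero_of_irreducible ((MulEquiv.irreducible_iff (finSuccEquiv K n)).2 hP)
      hdeg (by rwa [hf, hg, map_dvd_iff])
  · refine (totalDegree_resultant_le (totalDegree_coeff_finSuccEquiv_le P)
      (totalDegree_coeff_finSuccEquiv_le H)).trans ?_
    nlinarith [natDegree_le P, natDegree_le H]
  · obtain ⟨u, v, -, -, h⟩ := exists_mul_add_mul_eq_C_resultant f g le_rfl le_rfl (Or.inl hdeg)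
    refine ⟨(finSuccEquiv K n).symm u, (finSuccEquiv K n).symm v, ?_⟩
    rw [← finSuccEquiv_symm_C, ← h]
    simp [hf, hg]

theorem exists_rename_succ_eq_of_degreeOf_eq_zero {P : MvPolynomial (Fin (n + 1)) R}
    (hP : P.degreeOf 0 = 0) :
    ∃ E : MvPolynomial (Fin n) R, E.totalDegree ≤ P.totalDegree ∧
      MvPolynomial.rename Fin.succ E = P := by
  refine ⟨(finSuccEquiv R n P).coeff 0, totalDegree_coeff_finSuccEquiv_le P 0, ?_⟩
  rw [← MvPolynomial.natDegree_finSuccEquiv] at hP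
  rw [← finSuccEquiv_symm_C, ← eq_C_of_natDegree_eq_zero hP, AlgEquiv.symm_apply_apply]

theorem card_le_totalDegree_of_aeval_C_eq_zero {E : MvPolynomial (Fin 2) K} (hE : E ≠ 0)
    {Y : Finset K} (hY : ∀ y ∈ Y, MvPolynomial.aeval ![C y, X] E = (0 : K[X])) :
    #Y ≤ E.totalDegree := by
  have specialize_eq (y : K) (Q : MvPolynomial (Fin 2) K) :
      Polynomial.aeval (MvPolynomial.X 0 : MvPolynomial (Fin 1) K)
        (MvPolynomial.aeval ![C y, X] Q : K[X]) = (finSuccEquiv K 1 Q).eval (MvPolynomial.C y) := by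
    induction Q using MvPolynomial.induction_on with
    | C a => simp [MvPolynomial.finSuccEquiv_apply, MvPolynomial.algebraMap_eq]
    | add P Q hP hQ => simp only [map_add, eval_add, hP, hQ]
    | mul_X P i hP =>
      have hX : finSuccEquiv K 1 (MvPolynomial.X 1) = C (MvPolynomial.X 0) := by
        simpa using MvPolynomial.finSuccEquiv_X_succ (R := K) (j := (0 : Fin 1))
      simp only [map_mul, eval_mul, hP]
      fin_cases i <;> simp [MvPolynomial.finSuccEquiv_X_zero, MvPolynomial.algebraMap_eq, hX]
  have isRoot (y : K) (hy : y ∈ Y) : (finSuccEquiv K 1 E).eval (MvPolynomial.C y) = 0 := by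
    rw [← specialize_eq, hY y hy, map_zero]
  calc #Y = #(Y.map ⟨_, MvPolynomial.C_injective (Fin 1) K⟩) := (card_map _).symm
    _ ≤ (finSuccEquiv K 1 E).natDegree := by
        refine card_le_degree_of_subset_roots fun c hc ↦ ?_
        obtain ⟨y, hy, rfl⟩ := Finset.mem_map.1 hc
        exact (mem_roots (by simpa using hE)).2 (isRoot y hy)
    _ ≤ E.totalDegree := (MvPolynomial.natDegree_finSuccEquiv E).trans_le
        (MvPolynomial.degreeOf_le_totalDegree E 0)

end Elimination

section SliceLines

open Polynomial

open MvPolynomial (pderiv)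

variable {K : Type*} [Field K]

/-- A line in `K³` lying in a plane of a fixed parallel family. With coordinates `(τ, s, t)`,
numbered `0, 1, 2`, a line of the first kind is
`s = base, τ = const + slope * t` and a line of the second kind is
`t = base, τ = const + slope * s`; whether a `SliceLine` is read as the one or the other is
decided by the family it belongs to. -/
@[ext]
structure SliceLine (K : Type*) where
  /-- The value of the coordinate that is constant on the line. -/
  base : K
  /-- The value of `τ` where the free coordinate vanishes. -/
  const : K
  /-- The slope of `τ` as a function of the free coordinate. -/
  slope : K

namespace SliceLine

/-- The line `ℓ` of the first kind meets the line `m` of the second kind: the coordinates `s` and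
`t` of the common point are the two bases, so only the two values of `τ` have to agree. -/
def Meets (ℓ m : SliceLine K) : Prop :=
  ℓ.const + ℓ.slope * m.base = m.const + m.slope * ℓ.base

theorem meets_comm {ℓ m : SliceLine K} : ℓ.Meets m ↔ m.Meets ℓ := eq_comm

/-- Restriction of a polynomial to a line of the first kind, parametrized by `t`. -/
noncomputable def restrict₁ (ℓ : SliceLine K) : MvPolynomial (Fin 3) K →ₐ[K] K[X] :=
  MvPolynomial.aeval ![C ℓ.const + C ℓ.slope * X, C ℓ.base, X]

/-- Restriction of a polynomial to a line of the second kind, parametrized by `s`. -/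
noncomputable def restrict₂ (m : SliceLine K) : MvPolynomial (Fin 3) K →ₐ[K] K[X] :=
  MvPolynomial.aeval ![C m.const + C m.slope * X, X, C m.base]

theorem natDegree_restrict₁_le (ℓ : SliceLine K) (P : MvPolynomial (Fin 3) K) :
    (ℓ.restrict₁ P).natDegree ≤ P.totalDegree := by
  refine natDegree_aeval_le (fun i ↦ ?_) P
  fin_cases i
  · simpa using (natDegree_C_mul_le _ X).trans natDegree_X_le
  all_goals simp

theorem natDegree_restrict₂_le (m : SliceLine K) (P : MvPolynomial (Fin 3) K) :
    (m.restrict₂ P).natDegree ≤ P.totalDegree := by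
  refine natDegree_aeval_le (fun i ↦ ?_) P
  fin_cases i
  · simpa using (natDegree_C_mul_le _ X).trans natDegree_X_le
  all_goals simp

theorem eval_restrict₁ (ℓ : SliceLine K) (x : K) (P : MvPolynomial (Fin 3) K) :
    (ℓ.restrict₁ P).eval x = MvPolynomial.eval ![ℓ.const + ℓ.slope * x, ℓ.base, x] P := by
  rw [restrict₁, eval_aeval]
  congr 2 with i
  fin_cases i <;> simp

theorem eval_restrict₂ (m : SliceLine K) (x : K) (P : MvPolynomial (Fin 3) K) :
    (m.restrict₂ P).eval x = MvPolynomial.eval ![m.const + m.slope * x, x, m.base] P := by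
  rw [restrict₂, eval_aeval]
  congr 2 with i
  fin_cases i <;> simp

theorem Meets.eval_restrict_eq {ℓ m : SliceLine K} (h : ℓ.Meets m) (P : MvPolynomial (Fin 3) K) :
    (ℓ.restrict₁ P).eval m.base = (m.restrict₂ P).eval ℓ.base := by
  rw [eval_restrict₁, eval_restrict₂, show _ = _ from h]

theorem derivative_restrict₂ (m : SliceLine K) (P : MvPolynomial (Fin 3) K) :
    derivative (m.restrict₂ P) =
      m.restrict₂ (pderiv 1 P) + C m.slope * m.restrict₂ (pderiv 0 P) := by
  simp only [restrict₂, derivative_aeval, Fin.sum_univ_three]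
  simp
  ring

theorem restrict₁_rename_succ (ℓ : SliceLine K) (E : MvPolynomial (Fin 2) K) :
    ℓ.restrict₁ (MvPolynomial.rename Fin.succ E) = MvPolynomial.aeval ![C ℓ.base, X] E :=
  MvPolynomial.aeval_rename _ _ _

theorem totalDegree_pos_of_restrict₁_eq_zero {ℓ : SliceLine K} {P : MvPolynomial (Fin 3) K}
    (hP : P ≠ 0) (h : ℓ.restrict₁ P = 0) : 0 < P.totalDegree := by
  rw [pos_iff_ne_zero]
  intro h0
  rw [MvPolynomial.totalDegree_eq_zero_iff_eq_C] at h0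
  rw [h0, restrict₁, MvPolynomial.aeval_C, FaithfulSMul.algebraMap_eq_zero_iff] at h
  exact hP (by rw [h0, h, map_zero])

end SliceLine

/-- Differentiation along the lines of the first kind of slope `b`. -/
noncomputable def slopeDeriv (b : K) :
    Derivation K (MvPolynomial (Fin 3) K) (MvPolynomial (Fin 3) K) :=
  pderiv 2 + b • pderiv 0

theorem SliceLine.derivative_restrict₁ (ℓ : SliceLine K) (P : MvPolynomial (Fin 3) K) :
    derivative (ℓ.restrict₁ P) = ℓ.restrict₁ (slopeDeriv ℓ.slope P) := by
  simp only [restrict₁, derivative_aeval, Fin.sum_univ_three, slopeDeriv, Derivation.add_apply,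
    Derivation.smul_apply, map_add, map_smul, smul_eq_C_mul]
  simp
  ring

theorem pderiv_slopeDeriv (i : Fin 3) (b : K) (P : MvPolynomial (Fin 3) K) :
    pderiv i (slopeDeriv b P) = slopeDeriv b (pderiv i P) := by
  simp only [slopeDeriv, Derivation.add_apply, Derivation.smul_apply, map_add,
    Derivation.map_smul, pderiv_comm i]

/-- The flecnode polynomial of `P` along the planes `s = const`: up to the factor `(∂P/∂τ)³` it is
the second derivative `d²τ/dt²` along the curves cut out by `P = 0`, so it vanishes on
every line of the first kind contained in this surface. -/
noncomputable def flec (P : MvPolynomial (Fin 3) K) : MvPolynomial (Fin 3) K :=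
  pderiv 2 (pderiv 2 P) * pderiv 0 P ^ 2 - 2 * pderiv 0 (pderiv 2 P) * pderiv 2 P * pderiv 0 P +
    pderiv 0 (pderiv 0 P) * pderiv 2 P ^ 2

theorem flec_eq_slopeDeriv (b : K) (P : MvPolynomial (Fin 3) K) :
    flec P = slopeDeriv b (slopeDeriv b P) * pderiv 0 P ^ 2 -
      2 * pderiv 0 (slopeDeriv b P) * slopeDeriv b P * pderiv 0 P +
      pderiv 0 (pderiv 0 P) * slopeDeriv b P ^ 2 := by
  simp only [flec, slopeDeriv, Derivation.add_apply, Derivation.smul_apply, map_add,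
    Derivation.map_smul, pderiv_comm (2 : Fin 3) 0]
  simp only [MvPolynomial.smul_eq_C_mul]
  ring

theorem totalDegree_flec_le (P : MvPolynomial (Fin 3) K) :
    (flec P).totalDegree ≤ 3 * P.totalDegree := by
  have mul_le {Q R : MvPolynomial (Fin 3) K} {a b : ℕ} (hQ : Q.totalDegree ≤ a)
      (hR : R.totalDegree ≤ b) : (Q * R).totalDegree ≤ a + b :=
    (MvPolynomial.totalDegree_mul Q R).trans (add_le_add hQ hR)
  have two : (2 : MvPolynomial (Fin 3) K).totalDegree ≤ 0 := by
    rw [← map_ofNat MvPolynomial.C, MvPolynomial.totalDegree_C]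
  have first (i) : (pderiv i P).totalDegree ≤ P.totalDegree :=
    (totalDegree_pderiv_le i P).trans (Nat.sub_le _ _)
  have second (i j) : (pderiv i (pderiv j P)).totalDegree ≤ P.totalDegree :=
    (totalDegree_pderiv_le i _).trans ((Nat.sub_le _ _).trans (first j))
  have sq (i) : (pderiv i P ^ 2).totalDegree ≤ 2 * P.totalDegree :=
    (MvPolynomial.totalDegree_pow _ _).trans (Nat.mul_le_mul_left 2 (first i))
  refine (MvPolynomial.totalDegree_add _ _).trans (max_le
    ((MvPolynomial.totalDegree_sub _ _).trans (max_le ?_ ?_)) ?_)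
  · exact (mul_le (second 2 2) (sq 0)).trans (by lia)
  · exact (mul_le (mul_le (mul_le two (second 0 2)) (first 2)) (first 0)).trans (by lia)
  · exact (mul_le (second 0 0) (sq 2)).trans (by lia)

theorem SliceLine.restrict₁_flec_eq_zero {ℓ : SliceLine K} {P : MvPolynomial (Fin 3) K}
    (h : ℓ.restrict₁ P = 0) : ℓ.restrict₁ (flec P) = 0 := by
  have h' : ℓ.restrict₁ (slopeDeriv ℓ.slope P) = 0 := by
    rw [← ℓ.derivative_restrict₁, h, derivative_zero]
  have h'' : ℓ.restrict₁ (slopeDeriv ℓ.slope (slopeDeriv ℓ.slope P)) = 0 := by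
    rw [← ℓ.derivative_restrict₁, h', derivative_zero]
  simp only [flec_eq_slopeDeriv ℓ.slope, map_add, map_sub, map_mul, map_pow, h', h'']
  ring

theorem SliceLine.restrict₁_pderiv_flec {ℓ : SliceLine K} {P : MvPolynomial (Fin 3) K}
    (h : ℓ.restrict₁ P = 0) (i : Fin 3) :
    ℓ.restrict₁ (pderiv i (flec P)) = ℓ.restrict₁ (pderiv 0 P) *
      (derivative (derivative (ℓ.restrict₁ (pderiv i P))) * ℓ.restrict₁ (pderiv 0 P) -
        2 * derivative (ℓ.restrict₁ (pderiv 0 P)) * derivative (ℓ.restrict₁ (pderiv i P))) := by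
  have h' : ℓ.restrict₁ (slopeDeriv ℓ.slope P) = 0 := by
    rw [← ℓ.derivative_restrict₁, h, derivative_zero]
  have h'' : ℓ.restrict₁ (slopeDeriv ℓ.slope (slopeDeriv ℓ.slope P)) = 0 := by
    rw [← ℓ.derivative_restrict₁, h', derivative_zero]
  simp only [ℓ.derivative_restrict₁, flec_eq_slopeDeriv ℓ.slope, map_add, map_sub,
    MvPolynomial.pderiv_mul, MvPolynomial.pderiv_pow, map_mul, map_pow, h', h'',
    pderiv_slopeDeriv]
  simp [map_ofNat]
  ring

theorem SliceLine.exists_pderiv_eq_linear_mul {p : ℕ} [CharP K p] {ℓ : SliceLine K}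
    {P : MvPolynomial (Fin 3) K} (hp : 2 * P.totalDegree ≤ p) (h : ℓ.restrict₁ P = 0)
    (hm : ℓ.restrict₁ (pderiv 0 P) ≠ 0) (hdvd : P ∣ flec P) (i : Fin 3) :
    ∃ e₀ e₁ : K, ℓ.restrict₁ (pderiv i P) = (C e₀ + C e₁ * X) * ℓ.restrict₁ (pderiv 0 P) := by
  obtain ⟨G, hG⟩ := hdvd
  have flec_deriv (j) : ℓ.restrict₁ (pderiv j (flec P)) =
      ℓ.restrict₁ (pderiv j P) * ℓ.restrict₁ G := by
    rw [hG, MvPolynomial.pderiv_mul, map_add, map_mul, map_mul, h, zero_mul, add_zero]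
  have degree_lt (j) : (ℓ.restrict₁ (pderiv j P)).natDegree < P.totalDegree :=
    have hpos := totalDegree_pos_of_restrict₁_eq_zero (by rintro rfl; simp at hm) h
    ((ℓ.natDegree_restrict₁_le _).trans (totalDegree_pderiv_le j P)).trans_lt (by lia)
  refine exists_eq_linear_mul_of_second_order hm (degree_lt 0) (degree_lt i) hp ?_
  have flec_i := (restrict₁_pderiv_flec h i).symm.trans (flec_deriv i)
  have flec_0 := (restrict₁_pderiv_flec h 0).symm.trans (flec_deriv 0)
  refine mul_left_cancel₀ hm ?_
  linear_combination ℓ.restrict₁ (pderiv 0 P) * flec_i - ℓ.restrict₁ (pderiv i P) * flec_0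

end SliceLines

section ContainedLines

open Polynomial

open MvPolynomial (pderiv)

variable {K : Type*} [Field K]

open scoped Classical in
/-- No quadric surface `τ = a + b s + c t + d s t`, whose parameters are arbitrary, has more than
`k` lines of `L` in its ruling: such a ruling prescribes `const` and `slope` as affine functions of
`base`. -/
def RegulusBound (L : Finset (SliceLine K)) (k : ℕ) : Prop :=
  ∀ a b c d : K, #{ℓ ∈ L | ℓ.const = a + b * ℓ.base ∧ ℓ.slope = c + d * ℓ.base} ≤ k

open scoped Classical in
/-- The lines of the second family `M` that lie in the surface `Q = 0` and meet `ℓ`. -/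
noncomputable def meetingIn (Q : MvPolynomial (Fin 3) K) (M : Finset (SliceLine K))
    (ℓ : SliceLine K) : Finset (SliceLine K) :=
  {m ∈ M | m.restrict₂ Q = 0 ∧ ℓ.Meets m}

open scoped Classical in
/-- The lines of the first family `L` that meet more than `Q.totalDegree + k` lines of `M` lying in
the surface `Q = 0`. -/
noncomputable def heavyLines (Q : MvPolynomial (Fin 3) K) (L M : Finset (SliceLine K)) (k : ℕ) :
    Finset (SliceLine K) :=
  {ℓ ∈ L | Q.totalDegree + k < #(meetingIn Q M ℓ)}

variable {L M : Finset (SliceLine K)} {ℓ : SliceLine K} {P Q H : MvPolynomial (Fin 3) K} {k p : ℕ}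

theorem card_le_natDegree_of_eval_base_eq_zero {f : K[X]} (hf : f ≠ 0)
    (hM : Set.InjOn SliceLine.base (M : Set (SliceLine K))) (h : ∀ m ∈ M, f.eval m.base = 0) :
    #M ≤ f.natDegree := by
  classical
  rw [← card_image_of_injOn hM]
  refine card_le_degree_of_subset_roots fun x hx ↦ ?_
  obtain ⟨m, hm, rfl⟩ := mem_image.mp hx
  exact (mem_roots hf).mpr (h m hm)

theorem card_meetingIn_le_totalDegree (hM : Set.InjOn SliceLine.base (M : Set (SliceLine K)))
    (h : ℓ.restrict₁ Q ≠ 0) : #(meetingIn Q M ℓ) ≤ Q.totalDegree := by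
  classical
  refine (card_le_natDegree_of_eval_base_eq_zero h
    (hM.mono <| coe_subset.mpr <| filter_subset _ M) fun m hm ↦ ?_).trans
    (ℓ.natDegree_restrict₁_le Q)
  obtain ⟨-, hmQ, hmeet⟩ := mem_filter.mp hm
  rw [hmeet.eval_restrict_eq, hmQ, eval_zero]

/-- The hypothesis `he` makes the tangent planes of `P = 0` turn along `ℓ` like those of a quadric,
so the lines of the second kind through nonsingular points of `ℓ` form a regulus. -/
theorem mem_regulus_of_pderiv_eq_linear_mul {m : SliceLine K} {e₀ e₁ : K}
    (he : ℓ.restrict₁ (pderiv 1 P) = (C e₀ + C e₁ * X) * ℓ.restrict₁ (pderiv 0 P))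
    (hmeet : ℓ.Meets m) (hm : m.restrict₂ P = 0)
    (hne : (ℓ.restrict₁ (pderiv 0 P)).eval m.base ≠ 0) :
    m.const = ℓ.const + e₀ * ℓ.base + (ℓ.slope + e₁ * ℓ.base) * m.base ∧
      m.slope = -e₀ + -e₁ * m.base := by
  have tangent := congrArg (eval ℓ.base) (m.derivative_restrict₂ P)
  have affine := congrArg (eval m.base) he
  simp only [hm, derivative_zero, eval_zero, eval_add, eval_mul, eval_C, eval_X,
    ← hmeet.eval_restrict_eq] at tangent affine
  have slope_eq : e₀ + e₁ * m.base + m.slope = 0 :=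
    (mul_eq_zero.mp (by linear_combination -tangent - affine)).resolve_right hne
  have incident : ℓ.const + ℓ.slope * m.base = m.const + m.slope * ℓ.base := hmeet
  exact ⟨by linear_combination -incident - ℓ.base * slope_eq, by linear_combination slope_eq⟩

theorem card_meetingIn_le_of_dvd_flec [CharP K p] (hp : 2 * P.totalDegree ≤ p)
    (hM : Set.InjOn SliceLine.base (M : Set (SliceLine K))) (hk : RegulusBound M k)
    (hℓ : ℓ.restrict₁ P = 0) (hℓ' : ℓ.restrict₁ (pderiv 0 P) ≠ 0) (hdvd : P ∣ flec P) :
    #(meetingIn P M ℓ) ≤ P.totalDegree + k := by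
  classical
  obtain ⟨e₀, e₁, he⟩ := SliceLine.exists_pderiv_eq_linear_mul hp hℓ hℓ' hdvd 1
  have singular_le : #{m ∈ M | (ℓ.restrict₁ (pderiv 0 P)).eval m.base = 0} ≤ P.totalDegree :=
    (card_le_natDegree_of_eval_base_eq_zero hℓ' (hM.mono <| coe_subset.mpr <| filter_subset _ M)
      fun m hm ↦ (mem_filter.mp hm).2).trans
      ((ℓ.natDegree_restrict₁_le _).trans ((totalDegree_pderiv_le 0 P).trans (Nat.sub_le _ _)))
  refine (card_le_card fun m hm ↦ ?_).trans ((card_union_le _ _).trans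
    (add_le_add singular_le (hk (ℓ.const + e₀ * ℓ.base) (ℓ.slope + e₁ * ℓ.base) (-e₀) (-e₁))))
  obtain ⟨hmM, hmP, hmeet⟩ := mem_filter.mp hm
  by_cases h0 : (ℓ.restrict₁ (pderiv 0 P)).eval m.base = 0
  · exact mem_union_left _ (mem_filter.mpr ⟨hmM, h0⟩)
  · exact mem_union_right _
      (mem_filter.mpr ⟨hmM, mem_regulus_of_pderiv_eq_linear_mul he hmeet hmP h0⟩)

theorem card_le_of_restrict₁_eq_zero_of_degreeOf_eq_zero (hP : P ≠ 0) (hP0 : P.degreeOf 0 = 0)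
    (hL : Set.InjOn SliceLine.base (L : Set (SliceLine K)))
    (hLP : ∀ ℓ ∈ L, ℓ.restrict₁ P = 0) : #L ≤ P.totalDegree := by
  classical
  obtain ⟨E, hE, rfl⟩ := exists_rename_succ_eq_of_degreeOf_eq_zero hP0
  rw [← card_image_of_injOn hL]
  refine (card_le_totalDegree_of_aeval_C_eq_zero ?_ ?_).trans hE
  · rintro rfl
    exact hP (map_zero _)
  · rw [forall_mem_image]
    intro ℓ hℓ
    rw [← ℓ.restrict₁_rename_succ, hLP ℓ hℓ]

theorem card_common_lines_le (hP : Irreducible P) (hPH : ¬ P ∣ H)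
    (hL : Set.InjOn SliceLine.base (L : Set (SliceLine K)))
    (hLP : ∀ ℓ ∈ L, ℓ.restrict₁ P = 0) (hLH : ∀ ℓ ∈ L, ℓ.restrict₁ H = 0) :
    #L ≤ 2 * P.totalDegree * H.totalDegree := by
  classical
  obtain rfl | ⟨ℓ, hℓ⟩ := L.eq_empty_or_nonempty
  · simp
  have hH : 0 < H.totalDegree := SliceLine.totalDegree_pos_of_restrict₁_eq_zero
    (by rintro rfl; exact hPH (dvd_zero P)) (hLH ℓ hℓ)
  by_cases hP0 : P.degreeOf 0 = 0
  · have := card_le_of_restrict₁_eq_zero_of_degreeOf_eq_zero hP.ne_zero hP0 hL hLP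
    nlinarith
  obtain ⟨E, hE, hEdeg, u, v, huv⟩ := exists_eliminant hP hP0 hPH
  rw [← card_image_of_injOn hL]
  refine (card_le_totalDegree_of_aeval_C_eq_zero hE ?_).trans hEdeg
  rw [forall_mem_image]
  intro ℓ hℓ
  rw [← ℓ.restrict₁_rename_succ, huv, map_add, map_mul, map_mul, hLP ℓ hℓ, hLH ℓ hℓ, zero_mul,
    zero_mul, add_zero]

theorem not_dvd_pderiv [CharP K p] (hp : P.totalDegree < p) {i : Fin 3} (hi : P.degreeOf i ≠ 0) :
    ¬ P ∣ pderiv i P := by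
  rintro ⟨G, hG⟩
  have hne : P * G ≠ 0 := hG ▸ pderiv_ne_zero hp hi
  have degree_le := totalDegree_pderiv_le i P
  rw [hG, MvPolynomial.totalDegree_mul_of_isDomain (left_ne_zero_of_mul hne)
    (right_ne_zero_of_mul hne)] at degree_le
  have := P.degreeOf_le_totalDegree i
  lia

theorem card_heavyLines_le_of_irreducible [CharP K p] (hP : Irreducible P)
    (hp : 2 * P.totalDegree ≤ p) (hL : Set.InjOn SliceLine.base (L : Set (SliceLine K)))
    (hM : Set.InjOn SliceLine.base (M : Set (SliceLine K))) (hk : RegulusBound M k) :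
    #(heavyLines P L M k) ≤ 8 * P.totalDegree ^ 2 := by
  have hinj : Set.InjOn SliceLine.base (heavyLines P L M k : Set (SliceLine K)) :=
    hL.mono (coe_subset.mpr (filter_subset _ L))
  have contained : ∀ ℓ ∈ heavyLines P L M k, ℓ.restrict₁ P = 0 := fun ℓ hℓ ↦ by
    by_contra h
    have := card_meetingIn_le_totalDegree hM h
    have := (mem_filter.mp hℓ).2
    lia
  by_cases hP0 : P.degreeOf 0 = 0
  · have := card_le_of_restrict₁_eq_zero_of_degreeOf_eq_zero hP.ne_zero hP0 hinj contained
    nlinarith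
  by_cases hdvd : P ∣ flec P
  · have singular : ∀ ℓ ∈ heavyLines P L M k, ℓ.restrict₁ (pderiv 0 P) = 0 := fun ℓ hℓ ↦ by
      by_contra h
      have := card_meetingIn_le_of_dvd_flec hp hM hk (contained ℓ hℓ) h hdvd
      have := (mem_filter.mp hℓ).2
      lia
    have hlt : P.totalDegree < p := by
      have := P.degreeOf_le_totalDegree 0
      lia
    have := card_common_lines_le hP (not_dvd_pderiv hlt hP0) hinj contained singular
    have : (pderiv 0 P).totalDegree ≤ P.totalDegree :=
      (totalDegree_pderiv_le 0 P).trans (Nat.sub_le _ _)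
    nlinarith
  · have := card_common_lines_le hP hdvd hinj contained
      fun ℓ hℓ ↦ SliceLine.restrict₁_flec_eq_zero (contained ℓ hℓ)
    have := totalDegree_flec_le P
    nlinarith

theorem meetingIn_mul_subset [DecidableEq (SliceLine K)] :
    meetingIn (P * Q) M ℓ ⊆ meetingIn P M ℓ ∪ meetingIn Q M ℓ := by
  intro m
  simp only [meetingIn, mem_filter, mem_union, map_mul, mul_eq_zero]
  tauto

open scoped Classical in
theorem heavyLines_mul_subset (hP : P ≠ 0) (hQ : Q ≠ 0)
    (hM : Set.InjOn SliceLine.base (M : Set (SliceLine K))) :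
    heavyLines (P * Q) L M k ⊆ heavyLines P L M k ∪ heavyLines Q L M k ∪
      {ℓ ∈ L | ℓ.restrict₁ P = 0 ∧ ℓ.restrict₁ Q = 0} := by
  intro ℓ hℓ
  simp only [heavyLines, mem_filter, mem_union,
    MvPolynomial.totalDegree_mul_of_isDomain hP hQ] at hℓ ⊢
  obtain ⟨hℓL, hℓheavy⟩ := hℓ
  have := (card_le_card (meetingIn_mul_subset (P := P) (Q := Q) (M := M) (ℓ := ℓ))).trans
    (card_union_le _ _)
  by_cases hℓP : ℓ.restrict₁ P = 0
  · by_cases hℓQ : ℓ.restrict₁ Q = 0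
    · exact .inr ⟨hℓL, hℓP, hℓQ⟩
    · have := card_meetingIn_le_totalDegree hM hℓQ
      exact .inl (.inl ⟨hℓL, by lia⟩)
  · have := card_meetingIn_le_totalDegree hM hℓP
    exact .inl (.inr ⟨hℓL, by lia⟩)

theorem meetingIn_mul_subset_of_dvd (hdvd : P ∣ Q) :
    meetingIn (P * Q) M ℓ ⊆ meetingIn Q M ℓ := by
  obtain ⟨G, rfl⟩ := hdvd
  intro m
  simp only [meetingIn, mem_filter, map_mul, mul_eq_zero]
  tauto

theorem heavyLines_mul_subset_of_dvd (hP : P ≠ 0) (hQ : Q ≠ 0) (hdvd : P ∣ Q) :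
    heavyLines (P * Q) L M k ⊆ heavyLines Q L M k := by
  intro ℓ
  simp only [heavyLines, mem_filter, MvPolynomial.totalDegree_mul_of_isDomain hP hQ]
  rintro ⟨hℓL, hℓheavy⟩
  have := card_le_card (meetingIn_mul_subset_of_dvd (M := M) (ℓ := ℓ) hdvd)
  exact ⟨hℓL, by lia⟩

theorem card_heavyLines_le [CharP K p] (hQ : Q ≠ 0) (hp : 2 * Q.totalDegree ≤ p)
    (hL : Set.InjOn SliceLine.base (L : Set (SliceLine K)))
    (hM : Set.InjOn SliceLine.base (M : Set (SliceLine K))) (hk : RegulusBound M k) :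
    #(heavyLines Q L M k) ≤ 8 * Q.totalDegree ^ 2 := by
  classical
  induction Q using UniqueFactorizationMonoid.induction_on_prime with
  | h₁ => exact absurd rfl hQ
  | h₂ Q hunit =>
    suffices heavyLines Q L M k = ∅ by simp [this]
    refine filter_false_of_mem fun ℓ _ ↦ ?_
    have := card_meetingIn_le_totalDegree hM (hunit.map ℓ.restrict₁).ne_zero
    lia
  | h₃ Q P hQ0 hP ih =>
    have degree_mul := MvPolynomial.totalDegree_mul_of_isDomain hP.ne_zero hQ0
    rw [degree_mul] at hp ⊢
    have heavy_Q := ih hQ0 (by lia)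
    by_cases hdvd : P ∣ Q
    · have := card_le_card
        (heavyLines_mul_subset_of_dvd (L := L) (M := M) (k := k) hP.ne_zero hQ0 hdvd)
      nlinarith
    have heavy_P := card_heavyLines_le_of_irreducible hP.irreducible (by lia) hL hM hk
    have common := card_common_lines_le hP.irreducible hdvd
      (L := {ℓ ∈ L | ℓ.restrict₁ P = 0 ∧ ℓ.restrict₁ Q = 0})
      (hL.mono (coe_subset.mpr (filter_subset _ L))) (fun ℓ hℓ ↦ (mem_filter.mp hℓ).2.1)
      fun ℓ hℓ ↦ (mem_filter.mp hℓ).2.2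
    have := (card_le_card (heavyLines_mul_subset (L := L) (k := k) hP.ne_zero hQ0 hM)).trans
      ((card_union_le _ _).trans (Nat.add_le_add_right (card_union_le _ _) _))
    nlinarith

end ContainedLines

section Interpolation

open Polynomial

open MvPolynomial (restrictDegree)

variable {K σ : Type*} [Field K] [Fintype σ]

theorem finrank_restrictDegree (e : ℕ) :
    Module.finrank K (restrictDegree σ K e) = (e + 1) ^ Fintype.card σ := by
  classical
  have exponents_eq : {n : σ →₀ ℕ | ∀ i, n i ≤ e} =
      (Iic (Finsupp.equivFunOnFinite.symm fun _ ↦ e) : Finset (σ →₀ ℕ)) := by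
    ext n
    simp [Finsupp.le_def]
  rw [restrictDegree, Module.finrank_eq_nat_card_basis (MvPolynomial.basisRestrictSupport K _),
    exponents_eq, Nat.card_eq_card_toFinset, toFinset_coe, Finsupp.card_Iic,
    prod_subset (subset_univ _) fun i _ hi ↦ by simp [Finsupp.notMem_support_iff.mp hi]]
  simp

theorem totalDegree_le_of_mem_restrictDegree {e : ℕ} {Q : MvPolynomial σ K}
    (hQ : Q ∈ restrictDegree σ K e) : Q.totalDegree ≤ Fintype.card σ * e := by
  refine Finset.sup_le fun n hn ↦ ?_
  rw [Finsupp.sum_fintype _ _ fun _ ↦ rfl, ← smul_eq_mul]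
  exact sum_le_card_nsmul _ _ _ fun i _ ↦ (MvPolynomial.mem_restrictDegree _ _ _).mp hQ n hn i

theorem exists_restrict₂_eq_zero_of_card_mul_lt {M : Finset (SliceLine K)} {e : ℕ}
    (h : #M * (3 * e + 1) < (e + 1) ^ 3) :
    ∃ Q : MvPolynomial (Fin 3) K, Q ≠ 0 ∧ Q.totalDegree ≤ 3 * e ∧ ∀ m ∈ M, m.restrict₂ Q = 0 := by
  have restrict_mem (m : SliceLine K) (Q : restrictDegree (Fin 3) K e) :
      m.restrict₂ Q.1 ∈ degreeLT K (3 * e + 1) :=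
    mem_degreeLT.mpr <| degree_le_natDegree.trans_lt <| Nat.cast_lt.mpr <| Nat.lt_succ_of_le <|
      (m.natDegree_restrict₂_le _).trans (totalDegree_le_of_mem_restrictDegree Q.2)
  let restrictAll : restrictDegree (Fin 3) K e →ₗ[K] M → degreeLT K (3 * e + 1) :=
    LinearMap.pi fun m ↦ (m.1.restrict₂.toLinearMap ∘ₗ Submodule.subtype _).codRestrict _
      (restrict_mem m)
  have finrank_degreeLT : Module.finrank K (degreeLT K (3 * e + 1)) = 3 * e + 1 := by
    rw [(degreeLTEquiv K _).finrank_eq, Module.finrank_fin_fun]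
  have ker_ne_bot : LinearMap.ker restrictAll ≠ ⊥ := by
    have : Module.Finite K (restrictDegree (Fin 3) K e) :=
      Module.finite_of_finrank_pos (by rw [finrank_restrictDegree]; positivity)
    have : Module.Finite K (degreeLT K (3 * e + 1)) := .equiv (degreeLTEquiv K _).symm
    apply LinearMap.ker_ne_bot_of_finrank_lt
    rwa [Module.finrank_pi_fintype, sum_const, finrank_degreeLT, finrank_restrictDegree,
      card_univ, Fintype.card_coe, Fintype.card_fin, smul_eq_mul]
  obtain ⟨Q, hQ, hQ0⟩ := Submodule.exists_mem_ne_zero_of_ne_bot ker_ne_bot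
  exact ⟨Q, by simpa using hQ0, totalDegree_le_of_mem_restrictDegree Q.2,
    fun m hm ↦ congrArg Subtype.val (congrFun (LinearMap.mem_ker.mp hQ) ⟨m, hm⟩)⟩

end Interpolation

section Sampling

variable {α β : Type*} [DecidableEq α] {X : Finset α} {Y : Finset β} {S : β → Finset α} {ρ : ℝ}

theorem card_inter_insert_of_notMem {s Z : Finset α} {x : α} (hZ : x ∉ Z) :
    #(s ∩ insert x Z) = #(s ∩ Z) + if x ∈ s then 1 else 0 := by
  split_ifs with h
  · rw [inter_insert_of_mem h, card_insert_of_notMem (by simp [hZ])]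
  · rw [inter_insert_of_notMem h, add_zero]

/-- The right-hand side is the mean of the left-hand side over a random subset `X₁` of `X` that
contains every element independently with probability `ρ`. -/
theorem exists_subset_le_mean (X : Finset α) (Y : Finset β) (S : β → Finset α) (w : β → ℝ)
    (c : ℝ) (hρ₀ : 0 ≤ ρ) (hρ₁ : ρ ≤ 1) :
    ∃ X₁ ⊆ X, c * #X₁ + ∑ y ∈ Y, w y * (1 / 2) ^ #(S y ∩ X₁) ≤
      c * (ρ * #X) + ∑ y ∈ Y, w y * (1 - ρ / 2) ^ #(S y ∩ X) := by
  induction X using Finset.induction_on generalizing w with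
  | empty => exact ⟨∅, by simp⟩
  | insert x X hx ih =>
    obtain ⟨X₁, hX₁, mean_le⟩ := ih fun y ↦ w y * if x ∈ S y then 1 - ρ / 2 else 1
    have hx₁ : x ∉ X₁ := fun h ↦ hx (hX₁ h)
    have average : (1 - ρ) * ∑ y ∈ Y, w y * (1 / 2) ^ #(S y ∩ X₁) +
        ρ * ∑ y ∈ Y, w y * (1 / 2) ^ #(S y ∩ insert x X₁) =
        ∑ y ∈ Y, (w y * if x ∈ S y then 1 - ρ / 2 else 1) * (1 / 2) ^ #(S y ∩ X₁) := by
      rw [mul_sum, mul_sum, ← sum_add_distrib]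
      refine sum_congr rfl fun y _ ↦ ?_
      rw [card_inter_insert_of_notMem hx₁]
      split_ifs <;> ring
    have target : ∑ y ∈ Y, w y * (1 - ρ / 2) ^ #(S y ∩ insert x X) =
        ∑ y ∈ Y, (w y * if x ∈ S y then 1 - ρ / 2 else 1) * (1 - ρ / 2) ^ #(S y ∩ X) := by
      refine sum_congr rfl fun y _ ↦ ?_
      rw [card_inter_insert_of_notMem hx]
      split_ifs <;> ring
    rw [← average] at mean_le
    rw [target, card_insert_of_notMem hx]
    by_contra! h
    have without := h X₁ (hX₁.trans (subset_insert x X))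
    have with_x := h (insert x X₁) (insert_subset_insert x hX₁)
    rw [card_insert_of_notMem hx₁] at with_x
    push_cast at without with_x
    have := mul_le_mul_of_nonneg_left without.le (sub_nonneg.mpr hρ₁)
    rcases hρ₀.eq_or_lt with rfl | hρ
    · linarith
    · have := mul_lt_mul_of_pos_left with_x hρ
      linarith

theorem sum_mul_one_sub_pow_card_inter_le {w : β → ℝ} {T : ℝ} (hw : ∀ y ∈ Y, 0 ≤ w y)
    (hS : ∀ y ∈ Y, S y ⊆ X) (hT : ∀ y ∈ Y, T ≤ #(S y)) (hρ₀ : 0 ≤ ρ) (hρ₁ : ρ ≤ 1) :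
    ∑ y ∈ Y, w y * (1 - ρ / 2) ^ #(S y ∩ X) ≤ Real.exp (-(ρ * T / 2)) * ∑ y ∈ Y, w y := by
  rw [mul_sum]
  refine sum_le_sum fun y hy ↦ ?_
  rw [inter_eq_left.mpr (hS y hy), mul_comm]
  gcongr
  · exact hw y hy
  calc (1 - ρ / 2) ^ #(S y) ≤ Real.exp (-(ρ / 2)) ^ #(S y) :=
        pow_le_pow_left₀ (by linarith) (Real.one_sub_le_exp_neg _) _
    _ = Real.exp (-(ρ * #(S y) / 2)) := by rw [← Real.exp_nat_mul]; ring_nf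
    _ ≤ Real.exp (-(ρ * T / 2)) := by gcongr; exact hT y hy

theorem exists_sample {w : β → ℝ} {T : ℝ} (hw : ∀ y ∈ Y, 0 ≤ w y) (hX : X.Nonempty)
    (hS : ∀ y ∈ Y, S y ⊆ X) (hT : ∀ y ∈ Y, T ≤ #(S y)) (hρ₀ : 0 < ρ) (hρ₁ : ρ ≤ 1) (D : ℕ) :
    ∃ X₁ ⊆ X, #X₁ ≤ 2 * (ρ * #X) ∧
      ∑ y ∈ Y with #(S y ∩ X₁) ≤ D, w y ≤ 2 ^ (D + 1) * Real.exp (-(ρ * T / 2)) * ∑ y ∈ Y, w y := by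
  obtain hW | hW := (sum_nonneg hw).eq_or_lt
  · refine ⟨∅, empty_subset X, by rw [card_empty, Nat.cast_zero]; positivity, ?_⟩
    rw [← hW, mul_zero, hW]
    exact sum_le_sum_of_subset_of_nonneg (filter_subset _ _) fun y hy _ ↦ hw y hy
  have hmean : 0 < ρ * #X := mul_pos hρ₀ (Nat.cast_pos.mpr hX.card_pos)
  set δ := Real.exp (-(ρ * T / 2)) * ∑ y ∈ Y, w y with hδ
  have δ_pos : 0 < δ := mul_pos (Real.exp_pos _) hW
  obtain ⟨X₁, hX₁, mean_le⟩ := exists_subset_le_mean X Y S w (δ / (ρ * #X)) hρ₀.le hρ₁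
  have tail_le := sum_mul_one_sub_pow_card_inter_le hw hS hT hρ₀.le hρ₁
  rw [div_mul_cancel₀ _ hmean.ne'] at mean_le
  have size_nonneg : 0 ≤ δ / (ρ * #X) * #X₁ := by positivity
  have sum_nonneg : 0 ≤ ∑ y ∈ Y, w y * (1 / 2 : ℝ) ^ #(S y ∩ X₁) :=
    sum_nonneg fun y hy ↦ mul_nonneg (hw y hy) (by positivity)
  refine ⟨X₁, hX₁, ?_, ?_⟩
  · have : δ / (ρ * #X) * #X₁ ≤ δ / (ρ * #X) * (2 * (ρ * #X)) := by
      rw [mul_left_comm _ 2, div_mul_cancel₀ _ hmean.ne']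
      linarith
    exact le_of_mul_le_mul_left this (by positivity)
  · have markov : ∑ y ∈ Y with #(S y ∩ X₁) ≤ D, w y * (1 / 2) ^ D ≤
        ∑ y ∈ Y, w y * (1 / 2 : ℝ) ^ #(S y ∩ X₁) := by
      refine (sum_le_sum fun y hy ↦ ?_).trans (sum_le_sum_of_subset_of_nonneg (filter_subset _ Y)
        fun y hy _ ↦ mul_nonneg (hw y hy) (by positivity))
      obtain ⟨hyY, hyD⟩ := mem_filter.mp hy
      exact mul_le_mul_of_nonneg_left
        (pow_le_pow_of_le_one (by norm_num) (by norm_num) hyD) (hw y hyY)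
    rw [← sum_mul, one_div, inv_pow, ← div_eq_mul_inv, div_le_iff₀ (by positivity)] at markov
    calc _ ≤ _ := markov
      _ ≤ 2 * δ * 2 ^ D := by gcongr; simp only [← one_div]; linarith
      _ = _ := by rw [hδ]; ring

end Sampling

section Incidences

variable {K : Type*} [Field K]

open scoped Classical in
/-- The lines of the second family `M` that meet `ℓ`. -/
noncomputable def neighbors (M : Finset (SliceLine K)) (ℓ : SliceLine K) : Finset (SliceLine K) :=
  {m ∈ M | ℓ.Meets m}

/-- The number of incidences between the family `L` of lines of the first kind and the family `M`
of lines of the second kind. -/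
noncomputable def incidences (L M : Finset (SliceLine K)) : ℕ :=
  ∑ ℓ ∈ L, #(neighbors M ℓ)

variable {L M : Finset (SliceLine K)} {Q : MvPolynomial (Fin 3) K} {k p : ℕ}

theorem RegulusBound.mono {L' : Finset (SliceLine K)} (h : RegulusBound L k) (hL : L' ⊆ L) :
    RegulusBound L' k := by
  classical
  exact fun a b c d ↦ (card_le_card (filter_subset_filter _ hL)).trans (h a b c d)

theorem incidences_comm (L M : Finset (SliceLine K)) : incidences L M = incidences M L := by
  classical
  refine (sum_card_bipartiteAbove_eq_sum_card_bipartiteBelow SliceLine.Meets).trans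
    (sum_congr rfl fun m _ ↦ congrArg card ?_)
  exact filter_congr fun ℓ _ ↦ SliceLine.meets_comm

open scoped Classical in
theorem sum_card_neighbors_not_contained_le
    (hL : Set.InjOn SliceLine.base (L : Set (SliceLine K))) (hLQ : ∀ ℓ ∈ L, ℓ.restrict₁ Q = 0) :
    ∑ ℓ ∈ L, #{m ∈ M | m.restrict₂ Q ≠ 0 ∧ ℓ.Meets m} ≤ Q.totalDegree * #M := by
  have swap := sum_card_bipartiteAbove_eq_sum_card_bipartiteBelow (s := L) (t := M)
    fun ℓ m ↦ m.restrict₂ Q ≠ 0 ∧ ℓ.Meets m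
  simp only [bipartiteAbove, bipartiteBelow] at swap
  rw [swap, mul_comm]
  refine sum_le_card_nsmul M _ _ fun m _ ↦ ?_
  by_cases h0 : m.restrict₂ Q = 0
  · simp [h0]
  refine (card_le_natDegree_of_eval_base_eq_zero h0
    (hL.mono (coe_subset.mpr (filter_subset _ L))) fun ℓ hℓ ↦ ?_).trans (m.natDegree_restrict₂_le Q)
  obtain ⟨hℓL, -, hmeet⟩ := mem_filter.mp hℓ
  rw [← hmeet.eval_restrict_eq, hLQ ℓ hℓL, Polynomial.eval_zero]

theorem sum_card_meetingIn_le (Q : MvPolynomial (Fin 3) K) (L M : Finset (SliceLine K)) (k : ℕ) :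
    ∑ ℓ ∈ L, #(meetingIn Q M ℓ) ≤
      (Q.totalDegree + k) * #L + incidences (heavyLines Q L M k) M := by
  classical
  have light_le : ∑ ℓ ∈ L \ heavyLines Q L M k, #(meetingIn Q M ℓ) ≤
      (Q.totalDegree + k) * #L := by
    refine (sum_le_card_nsmul _ _ (Q.totalDegree + k) fun ℓ hℓ ↦ ?_).trans ?_
    · obtain ⟨hℓL, hℓlight⟩ := mem_sdiff.mp hℓ
      exact not_lt.mp fun hlt ↦ hℓlight (mem_filter.mpr ⟨hℓL, hlt⟩)
    · rw [smul_eq_mul, mul_comm]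
      exact Nat.mul_le_mul_left _ (card_le_card sdiff_subset)
  have heavy_le : ∑ ℓ ∈ heavyLines Q L M k, #(meetingIn Q M ℓ) ≤
      incidences (heavyLines Q L M k) M :=
    sum_le_sum fun ℓ _ ↦ card_le_card (monotone_filter_right M fun m _ h ↦ h.2)
  rw [← sum_sdiff (show heavyLines Q L M k ⊆ L from filter_subset _ L)]
  exact add_le_add light_le heavy_le

open scoped Classical in
theorem incidences_le_add_heavyLines (hL : Set.InjOn SliceLine.base (L : Set (SliceLine K))) :
    incidences L M ≤ incidences {ℓ ∈ L | ℓ.restrict₁ Q ≠ 0} M + Q.totalDegree * #M +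
      (Q.totalDegree + k) * #L + incidences (heavyLines Q L M k) M := by
  have neighbors_le (ℓ : SliceLine K) : #(neighbors M ℓ) ≤
      #{m ∈ M | m.restrict₂ Q ≠ 0 ∧ ℓ.Meets m} + #(meetingIn Q M ℓ) := by
    refine (card_le_card fun m hm ↦ ?_).trans (card_union_le _ _)
    obtain ⟨hmM, hmeet⟩ := mem_filter.mp hm
    by_cases h0 : m.restrict₂ Q = 0
    · exact mem_union_right _ (mem_filter.mpr ⟨hmM, h0, hmeet⟩)
    · exact mem_union_left _ (mem_filter.mpr ⟨hmM, h0, hmeet⟩)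
  have contained_le : ∑ ℓ ∈ L with ℓ.restrict₁ Q = 0, #(neighbors M ℓ) ≤
      Q.totalDegree * #M + ((Q.totalDegree + k) * #L + incidences (heavyLines Q L M k) M) := by
    refine (sum_le_sum fun ℓ _ ↦ neighbors_le ℓ).trans (sum_add_distrib.trans_le ?_)
    refine add_le_add (sum_card_neighbors_not_contained_le ?_ fun ℓ hℓ ↦ (mem_filter.mp hℓ).2) ?_
    · exact hL.mono (coe_subset.mpr (filter_subset _ L))
    · exact (sum_le_sum_of_subset (filter_subset _ L)).trans (sum_card_meetingIn_le Q L M k)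
  have split : incidences L M = ∑ ℓ ∈ L with ℓ.restrict₁ Q = 0, #(neighbors M ℓ) +
      incidences {ℓ ∈ L | ℓ.restrict₁ Q ≠ 0} M :=
    (sum_filter_add_sum_filter_not L _ _).symm
  lia

theorem le_card_neighbors_of_minimal {T : ℝ} (hlt : T * (#L + #M) < incidences L M)
    (hmin : ∀ L' ⊂ L, (incidences L' M : ℝ) ≤ T * (#L' + #M)) : ∀ ℓ ∈ L, T ≤ #(neighbors M ℓ) := by
  classical
  intro ℓ hℓ
  have split : incidences L M = #(neighbors M ℓ) + incidences (L.erase ℓ) M :=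
    (add_sum_erase L (fun ℓ ↦ #(neighbors M ℓ)) hℓ).symm
  have card_erase : (#(L.erase ℓ) : ℝ) + 1 = #L := mod_cast card_erase_add_one hℓ
  have := hmin _ (erase_ssubset hℓ)
  rw [split, Nat.cast_add, ← card_erase] at hlt
  linarith

theorem two_pow_mul_exp_neg_le {j : ℕ} {x : ℝ} (hj : 1 ≤ j) (hx : 15 * j ≤ x) :
    2 ^ (9 * j + 1) * Real.exp (-x) ≤ 1 / 16 := by
  have two_le_exp : (2 : ℝ) ≤ Real.exp 1 := by linarith [Real.add_one_le_exp (1 : ℝ)]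
  have hj' : (1 : ℝ) ≤ j := Nat.one_le_cast.mpr hj
  calc 2 ^ (9 * j + 1) * Real.exp (-x) ≤ Real.exp 1 ^ (9 * j + 1) * Real.exp (-x) := by gcongr
    _ = Real.exp (9 * j + 1 - x) := by
        rw [← Real.exp_nat_mul, ← Real.exp_add]; push_cast; ring_nf
    _ ≤ Real.exp (-4) := by gcongr; linarith
    _ = (Real.exp 1 ^ 4)⁻¹ := by rw [Real.exp_neg, ← Real.exp_nat_mul]; norm_num
    _ ≤ (2 ^ 4)⁻¹ := by gcongr
    _ = 1 / 16 := by norm_num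

open scoped Classical in
/-- A polynomial vanishing on a random sample of `M` vanishes on all lines of `L` except those that
meet few sampled lines, and these carry few incidences. -/
theorem exists_vanishing_on_most_incidences {T : ℝ} {j : ℕ} (hT : ∀ ℓ ∈ L, T ≤ #(neighbors M ℓ))
    (hM : Set.InjOn SliceLine.base (M : Set (SliceLine K))) (hj : 1 ≤ j)
    (hjM : 3 * j ^ 2 ≤ 2 * #M) (hjT : 20 * #M ≤ j * T) :
    ∃ Q : MvPolynomial (Fin 3) K, Q ≠ 0 ∧ Q.totalDegree ≤ 9 * j ∧
      (incidences {ℓ ∈ L | ℓ.restrict₁ Q ≠ 0} M : ℝ) ≤ 1 / 16 * incidences L M := by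
  have hM0 : 0 < #M := by nlinarith
  have : (0 : ℝ) < #M := Nat.cast_pos.mpr hM0
  have hjM' : 3 * (j : ℝ) ^ 2 ≤ 2 * #M := mod_cast hjM
  set ρ : ℝ := 3 * j ^ 2 / (2 * #M) with hρ
  obtain ⟨M₁, hM₁, hcard, hpoor⟩ := exists_sample (Y := L) (S := neighbors M) (T := T)
    (w := fun ℓ ↦ #(neighbors M ℓ)) (ρ := ρ) (fun _ _ ↦ Nat.cast_nonneg _) (card_pos.mp hM0)
    (fun _ _ ↦ filter_subset _ _) hT (by positivity)
    (by rw [hρ, div_le_one (by positivity)]; exact hjM') (9 * j)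
  have card_M₁ : #M₁ ≤ 3 * j ^ 2 := by
    have : 2 * (ρ * #M) = 3 * j ^ 2 := by rw [hρ]; field_simp
    rw [this] at hcard
    exact_mod_cast hcard
  obtain ⟨Q, hQ, hQdeg, hQM₁⟩ := exists_restrict₂_eq_zero_of_card_mul_lt (M := M₁) (e := 3 * j)
    (by nlinarith [Nat.mul_le_mul_right (3 * (3 * j) + 1) card_M₁])
  refine ⟨Q, hQ, by lia, ?_⟩
  have decay : 2 ^ (9 * j + 1) * Real.exp (-(ρ * T / 2)) ≤ 1 / 16 := by
    refine two_pow_mul_exp_neg_le hj ?_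
    rw [hρ, div_mul_eq_mul_div, div_div, le_div_iff₀ (by positivity)]
    nlinarith [mul_le_mul_of_nonneg_left hjT (Nat.cast_nonneg (α := ℝ) j)]
  calc (incidences {ℓ ∈ L | ℓ.restrict₁ Q ≠ 0} M : ℝ)
      ≤ ∑ ℓ ∈ L with #(neighbors M ℓ ∩ M₁) ≤ 9 * j, (#(neighbors M ℓ) : ℝ) := by
        rw [incidences, Nat.cast_sum]
        refine sum_le_sum_of_subset_of_nonneg (monotone_filter_right L fun ℓ _ hℓ ↦ ?_)
          fun _ _ _ ↦ Nat.cast_nonneg _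
        refine (card_le_card fun m hm ↦ ?_).trans
          ((card_meetingIn_le_totalDegree hM hℓ).trans (by lia))
        obtain ⟨hmM, hm₁⟩ := mem_inter.mp hm
        obtain ⟨hmM, hmeet⟩ := mem_filter.mp hmM
        exact mem_filter.mpr ⟨hmM, hQM₁ m hm₁, hmeet⟩
    _ ≤ _ := hpoor
    _ ≤ 1 / 16 * incidences L M := by
        rw [incidences, Nat.cast_sum]
        exact mul_le_mul_of_nonneg_right decay (sum_nonneg fun _ _ ↦ Nat.cast_nonneg _)

end Incidences

section IncidenceBound

variable {K : Type*} [Field K]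

variable {L M : Finset (SliceLine K)} {k p N : ℕ} {s T : ℝ}

theorem exists_sample_size {n : ℕ} (hs : 0 < s) (hsT : 2000 * s ≤ T) (hTn : T ≤ n)
    (hns : n ≤ s ^ 2) :
    ∃ j : ℕ, 1 ≤ j ∧ 20 * n ≤ j * T ∧ 9000 * j ^ 2 ≤ n ∧ 90 * j ≤ s := by
  have hT : 0 < T := by linarith
  have hn : (0 : ℝ) < n := hT.trans_le hTn
  have hle := Nat.le_ceil (20 * n / T)
  have hlt := Nat.ceil_lt_add_one (show 0 ≤ 20 * n / T by positivity)
  set j := ⌈20 * n / T⌉₊ with hj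
  rw [div_le_iff₀ hT] at hle
  rw [← sub_lt_iff_lt_add, lt_div_iff₀ hT] at hlt
  have : j * T ≤ 21 * n := by linarith
  have hjs : 90 * (j : ℝ) ≤ s := by
    have : (j : ℝ) * (2000 * s) ≤ 21 * s ^ 2 := by
      linarith [mul_le_mul_of_nonneg_left hsT j.cast_nonneg]
    nlinarith
  refine ⟨j, Nat.ceil_pos.mpr (by positivity), hle, ?_, hjs⟩
  have hsj : 2000 * s * j ≤ 21 * n := by nlinarith [mul_le_mul_of_nonneg_right hsT j.cast_nonneg]
  have : 9000 * (j : ℝ) ^ 2 ≤ n := by nlinarith [mul_le_mul_of_nonneg_right hjs j.cast_nonneg]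
  exact_mod_cast this

theorem incidences_le_of_minimal [CharP K p] (hp : s ≤ p) (hs : 0 < s) (hT : T = 2000 * (s + k))
    (hMs : #M ≤ s ^ 2) (hML : #M ≤ #L) (hL : Set.InjOn SliceLine.base (L : Set (SliceLine K)))
    (hM : Set.InjOn SliceLine.base (M : Set (SliceLine K))) (hk : RegulusBound M k)
    (hmin : ∀ L' ⊂ L, (incidences L' M : ℝ) ≤ T * (#L' + #M)) :
    (incidences L M : ℝ) ≤ T * (#L + #M) := by
  classical
  by_contra! hlt
  have rich := le_card_neighbors_of_minimal hlt hmin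
  have hT0 : 0 < T := hT ▸ by positivity
  have hTM : T ≤ #M := by
    obtain rfl | ⟨ℓ, hℓ⟩ := L.eq_empty_or_nonempty
    · simp only [incidences, sum_empty, Nat.cast_zero] at hlt
      exact absurd hlt (not_lt.mpr (by positivity))
    · exact (rich ℓ hℓ).trans (Nat.cast_le.mpr (card_le_card (filter_subset _ M)))
  obtain ⟨j, hj, hjT, hjM, hjs⟩ :=
    exists_sample_size hs (by rw [hT]; linarith [k.cast_nonneg (α := ℝ)]) hTM hMs
  obtain ⟨Q, hQ, hQdeg, few⟩ := exists_vanishing_on_most_incidences rich hM hj (by lia) hjT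
  have hQdeg' : (Q.totalDegree : ℝ) ≤ 9 * j := mod_cast hQdeg
  have heavy_card : #(heavyLines Q L M k) ≤ 8 * Q.totalDegree ^ 2 := by
    refine card_heavyLines_le hQ ?_ hL hM hk
    have : (2 * Q.totalDegree : ℝ) ≤ p := by linarith
    exact_mod_cast this
  have heavy_card' : 12 * #(heavyLines Q L M k) ≤ #M := by nlinarith
  have heavy_le := hmin (heavyLines Q L M k) <| (filter_subset _ _).ssubset_of_ne fun h ↦ by
    rw [show heavyLines Q L M k = L from h] at heavy_card'
    have : 0 < #M := by nlinarith
    lia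
  have total : (incidences L M : ℝ) ≤ 1 / 16 * incidences L M + Q.totalDegree * #M +
      (Q.totalDegree + k) * #L + T * (#(heavyLines Q L M k) + #M) := by
    have : (_ : ℝ) ≤ _ :=
      Nat.cast_le.mpr (incidences_le_add_heavyLines (M := M) (Q := Q) (k := k) hL)
    push_cast at this
    linarith
  have : Q.totalDegree + (k : ℝ) ≤ T / 2000 := by linarith
  have hML' : (#M : ℝ) ≤ #L := Nat.cast_le.mpr hML
  have : 12 * (#(heavyLines Q L M k) : ℝ) ≤ #M := mod_cast heavy_card'
  nlinarith

theorem incidences_le [CharP K p] (hN : N ≤ p ^ 2) (hLN : #L ≤ N) (hMN : #M ≤ N)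
    (hL : Set.InjOn SliceLine.base (L : Set (SliceLine K)))
    (hM : Set.InjOn SliceLine.base (M : Set (SliceLine K))) (hLk : RegulusBound L k)
    (hMk : RegulusBound M k) :
    (incidences L M : ℝ) ≤ 2000 * (√N + k) * (#L + #M) := by
  obtain rfl | hN0 := N.eq_zero_or_pos
  · simp_all [incidences]
  have hs : 0 < √(N : ℝ) := Real.sqrt_pos.mpr (Nat.cast_pos.mpr hN0)
  have hsp : √(N : ℝ) ≤ p := Real.sqrt_le_left p.cast_nonneg |>.mpr (mod_cast hN)
  have hsq : √(N : ℝ) ^ 2 = N := Real.sq_sqrt N.cast_nonneg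
  induction hn : #L + #M using Nat.strong_induction_on generalizing L M with
  | _ n ih =>
  wlog hML : #M ≤ #L generalizing L M
  · rw [incidences_comm, add_comm (#L : ℝ)]
    exact this hMN hLN hM hL hMk hLk (by lia) (by lia)
  refine incidences_le_of_minimal hsp hs rfl (hsq.symm ▸ Nat.cast_le.mpr hMN) hML hL hM hMk
    fun L' hL' ↦ ?_
  have := card_lt_card hL'
  exact ih _ (by lia) ((card_le_card hL'.subset).trans hLN) hMN
    (hL.mono (coe_subset.mpr hL'.subset)) hM (hLk.mono hL'.subset) hMk rfl

end IncidenceBound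

section Collisions

variable {F K : Type*} [Field F] [Field K] {φ : F →+* K} {μ ν : K}

/-- The elements `1, μ, ν, μ * ν` are linearly independent over the image of `φ`. -/
def GenericPair (φ : F →+* K) (μ ν : K) : Prop :=
  ∀ α β γ δ : F, φ α + φ β * μ + φ γ * ν + φ δ * (μ * ν) = 0 → α = 0 ∧ β = 0 ∧ γ = 0 ∧ δ = 0

theorem exists_genericPair (F : Type*) [Field F] :
    ∃ μ ν : FractionRing (MvPolynomial (Fin 2) F),
      GenericPair ((algebraMap (MvPolynomial (Fin 2) F) _).comp MvPolynomial.C) μ ν := by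
  refine ⟨algebraMap (MvPolynomial (Fin 2) F) _ (.X 0),
    algebraMap (MvPolynomial (Fin 2) F) _ (.X 1), fun α β γ δ h ↦ ?_⟩
  simp only [RingHom.comp_apply, ← map_mul, ← map_add] at h
  have hpoly := (map_eq_zero_iff _ (IsFractionRing.injective (MvPolynomial (Fin 2) F) _)).mp h
  have eval_eq (x y : F) : α + β * x + γ * y + δ * (x * y) = 0 := by
    simpa using congrArg (MvPolynomial.eval ![x, y]) hpoly
  have h00 := eval_eq 0 0
  have h10 := eval_eq 1 0
  have h01 := eval_eq 0 1
  have h11 := eval_eq 1 1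
  refine ⟨?_, ?_, ?_, ?_⟩ <;> grind

namespace GenericPair

theorem symm (h : GenericPair φ μ ν) : GenericPair φ ν μ := fun α β γ δ h0 ↦ by
  obtain ⟨hα, hβ, hγ, hδ⟩ := h α γ β δ (by linear_combination h0)
  exact ⟨hα, hγ, hβ, hδ⟩

theorem eq_zero_of_add_mul_eq_zero (h : GenericPair φ μ ν) {α β : F} (h0 : φ α + φ β * μ = 0) :
    α = 0 ∧ β = 0 := by
  obtain ⟨hα, hβ, -⟩ := h α β 0 0 (by simpa using h0)
  exact ⟨hα, hβ⟩

theorem add_ne_zero (h : GenericPair φ μ ν) (x : F) : φ x + ν ≠ 0 := fun h0 ↦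
  one_ne_zero (h.symm.eq_zero_of_add_mul_eq_zero (α := x) (β := 1) (by simpa using h0)).2

end GenericPair

/-- The line attached to the affine map `x ↦ t.1.1 * x + t.1.2` and the point `t.2`. For a generic
pair `(μ, ν)`, the lines `projLine φ μ ν (l, x')` and `projLine φ ν μ (l', x)` meet exactly when
`l` takes at `x` the value that `l'` takes at `x'`. -/
def projLine (φ : F →+* K) (μ ν : K) (t : (F × F) × F) : SliceLine K where
  base := (φ t.1.2 - μ * φ t.1.1) / (φ t.2 + ν)
  const := φ t.1.1 / (φ t.2 + ν)
  slope := -1 / (φ t.2 + ν)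

theorem projLine_meets_iff (h : GenericPair φ μ ν) {t t' : (F × F) × F} :
    (projLine φ μ ν t).Meets (projLine φ ν μ t') ↔
      t.1.1 * t'.2 + t.1.2 = t'.1.1 * t.2 + t'.1.2 := by
  have hν := h.add_ne_zero t.2
  have hμ := h.symm.add_ne_zero t'.2
  rw [SliceLine.Meets, projLine, projLine, ← φ.injective.eq_iff]
  simp only [map_add, map_mul]
  field_simp
  constructor <;> intro h0 <;> linear_combination h0

theorem injOn_base_projLine (h : GenericPair φ μ ν) {L : Finset (F × F)}
    (hL : ∀ l ∈ L, l.1 ≠ 0) (S : Finset F) :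
    Set.InjOn (fun t ↦ (projLine φ μ ν t).base) (L ×ˢ S : Finset ((F × F) × F)) := by
  rintro ⟨⟨u, w⟩, x⟩ ht ⟨⟨u', w'⟩, x'⟩ - heq
  have hu : u ≠ 0 := hL _ (mem_product.mp ht).1
  simp only [projLine] at heq
  rw [div_eq_div_iff (h.add_ne_zero x) (h.add_ne_zero x')] at heq
  obtain ⟨-, hux, hw, huu⟩ := h (w * x' - w' * x) (u' * x - u * x') (w - w') (u' - u) (by
    simp only [map_sub, map_mul]
    linear_combination heq)
  obtain rfl := sub_eq_zero.mp hw
  obtain rfl := sub_eq_zero.mp huu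
  rw [← mul_sub, mul_eq_zero, or_iff_right hu, sub_eq_zero] at hux
  rw [hux]

open scoped Classical in
theorem injOn_base_image_projLine (h : GenericPair φ μ ν) {L : Finset (F × F)}
    (hL : ∀ l ∈ L, l.1 ≠ 0) (S : Finset F) :
    Set.InjOn SliceLine.base (↑((L ×ˢ S).image (projLine φ μ ν)) : Set (SliceLine K)) := by
  rw [coe_image]
  exact (injOn_base_projLine h hL S).image_of_comp

open scoped Classical in
theorem card_image_projLine (h : GenericPair φ μ ν) {L : Finset (F × F)}
    (hL : ∀ l ∈ L, l.1 ≠ 0) (S : Finset F) : #((L ×ˢ S).image (projLine φ μ ν)) = #L * #S := by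
  rw [card_image_of_injOn (injOn_base_projLine h hL S).of_comp, card_product]

variable {L : Finset (F × F)} {S : Finset F} {k : ℕ}

theorem card_le_of_regulus_equations [DecidableEq F] (h : GenericPair φ μ ν) (hS : #S ≤ k)
    (hsnd : #(L.image Prod.snd) ≤ k) (hfib : ∀ w, #{l ∈ L | l.2 = w} ≤ k)
    {T : Finset ((F × F) × F)} (hT : T ⊆ L ×ˢ S) {a b c d : K}
    (hslope : ∀ t ∈ T, -1 = c * (φ t.2 + ν) + d * (φ t.1.2 - μ * φ t.1.1))
    (hconst : ∀ t ∈ T, φ t.1.1 = a * (φ t.2 + ν) + b * (φ t.1.2 - μ * φ t.1.1)) :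
    #T ≤ k := by
  have mem_L : ∀ t ∈ T, t.1 ∈ L := fun t ht ↦ (mem_product.mp (hT ht)).1
  by_cases hd : d = 0
  · have point_eq : ∀ t ∈ T, ∀ t' ∈ T, t.2 = t'.2 := fun t ht t' ht' ↦ by
      have hc : c ≠ 0 := by rintro rfl; simpa [hd] using hslope t ht
      refine φ.injective (mul_left_cancel₀ hc ?_)
      linear_combination hslope t' ht' - hslope t ht + (φ t'.1.2 - μ * φ t'.1.1 -
        (φ t.1.2 - μ * φ t.1.1)) * hd
    by_cases hb : 1 + b * μ = 0
    · obtain rfl | ⟨t₀, ht₀⟩ := T.eq_empty_or_nonempty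
      · simp
      have hb0 : b ≠ 0 := by rintro rfl; simp at hb
      refine (card_le_card_of_injOn Prod.fst (fun t ht ↦ ?_) fun t ht t' ht' heq ↦
        Prod.ext heq (point_eq t ht t' ht')).trans (hfib t₀.1.2)
      refine mem_filter.mpr ⟨mem_L t ht, φ.injective (mul_left_cancel₀ hb0 ?_)⟩
      have := hconst t ht
      rw [point_eq t ht t₀ ht₀] at this
      linear_combination hconst t₀ ht₀ - this + (φ t.1.1 - φ t₀.1.1) * hb
    · refine (card_le_card_of_injOn (t := L.image Prod.snd) (fun t ↦ t.1.2)
        (fun t ht ↦ mem_image_of_mem _ (mem_L t ht)) fun t ht t' ht' heq ↦ ?_).trans hsnd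
      have hx := point_eq t ht t' ht'
      have hw : t.1.2 = t'.1.2 := heq
      refine Prod.ext (Prod.ext (φ.injective (mul_left_cancel₀ hb ?_)) hw) hx
      have := hconst t ht
      rw [hx, hw] at this
      linear_combination this - hconst t' ht'
  · refine (card_le_card_of_injOn Prod.snd
      (fun t ht ↦ (mem_product.mp (hT ht)).2) fun t ht t' ht' heq ↦ ?_).trans hS
    have slope_t := hslope t ht
    rw [heq] at slope_t
    obtain ⟨hw, hu⟩ := h.eq_zero_of_add_mul_eq_zero
        (α := t.1.2 - t'.1.2) (β := t'.1.1 - t.1.1) <| by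
      refine (mul_eq_zero.mp ?_).resolve_left hd
      simp only [map_sub]
      linear_combination hslope t' ht' - slope_t
    exact Prod.ext (Prod.ext (sub_eq_zero.mp hu).symm (sub_eq_zero.mp hw)) heq

open scoped Classical in
theorem regulusBound_image_projLine [DecidableEq F] (h : GenericPair φ μ ν) (hS : #S ≤ k)
    (hsnd : #(L.image Prod.snd) ≤ k) (hfib : ∀ w, #{l ∈ L | l.2 = w} ≤ k) :
    RegulusBound ((L ×ˢ S).image (projLine φ μ ν)) k := by
  intro a b c d
  rw [filter_image]
  refine card_image_le.trans (card_le_of_regulus_equations h hS hsnd hfib (filter_subset _ _)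
    (a := a) (b := b) (c := c) (d := d) (fun t ht ↦ ?_) fun t ht ↦ ?_)
  all_goals
    obtain ⟨-, hconst, hslope⟩ := mem_filter.mp ht
    have hν := h.add_ne_zero t.2
    simp only [projLine] at hconst hslope
  · field_simp at hslope
    linear_combination hslope
  · field_simp at hconst
    linear_combination hconst

open scoped Classical in
theorem incidences_image_image {α β : Type*} {X : Finset α} {Y : Finset β} {f : α → SliceLine K}
    {g : β → SliceLine K} (hf : Set.InjOn f X) (hg : Set.InjOn g Y) :
    incidences (X.image f) (Y.image g) = #{z ∈ X ×ˢ Y | (f z.1).Meets (g z.2)} := by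
  rw [incidences, sum_image hf, card_filter, sum_product]
  refine sum_congr rfl fun x _ ↦ ?_
  rw [neighbors, filter_image, card_image_of_injOn (hg.mono (coe_subset.mpr (filter_subset _ _))),
    card_filter]

open scoped Classical in
theorem card_collisions_eq_incidences [DecidableEq F] (h : GenericPair φ μ ν)
    (hL : ∀ l ∈ L, l.1 ≠ 0) :
    #{q ∈ (L ×ˢ S) ×ˢ (L ×ˢ S) | q.1.1.1 * q.1.2 + q.1.1.2 = q.2.1.1 * q.2.2 + q.2.1.2} =
      incidences ((L ×ˢ S).image (projLine φ μ ν)) ((L ×ˢ S).image (projLine φ ν μ)) := by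
  rw [incidences_image_image (injOn_base_projLine h hL S).of_comp
    (injOn_base_projLine h.symm hL S).of_comp]
  refine card_nbij' (fun q ↦ ((q.1.1, q.2.2), (q.2.1, q.1.2)))
    (fun q ↦ ((q.1.1, q.2.2), (q.2.1, q.1.2))) ?_ ?_ (fun _ _ ↦ rfl) (fun _ _ ↦ rfl)
  all_goals
    intro q
    simp only [coe_filter, Set.mem_ofPred_eq, mem_product, projLine_meets_iff h]
    tauto

theorem card_collisions_le [DecidableEq F] {p : ℕ} [CharP F p] (hL : ∀ l ∈ L, l.1 ≠ 0)
    (hp : #L * #S ≤ p ^ 2) (hS : #S ≤ k) (hsnd : #(L.image Prod.snd) ≤ k)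
    (hfib : ∀ w, #{l ∈ L | l.2 = w} ≤ k) :
    (#{q ∈ (L ×ˢ S) ×ˢ (L ×ˢ S) |
        q.1.1.1 * q.1.2 + q.1.1.2 = q.2.1.1 * q.2.2 + q.2.1.2} : ℝ) ≤
      4000 * (√(#L * #S) + k) * (#L * #S) := by
  classical
  obtain ⟨μ, ν, h⟩ := exists_genericPair F
  set φ := (algebraMap (MvPolynomial (Fin 2) F) (FractionRing (MvPolynomial (Fin 2) F))).comp
    MvPolynomial.C
  have := charP_of_injective_ringHom φ.injective p
  rw [card_collisions_eq_incidences h hL]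
  refine (incidences_le hp (card_image_projLine h hL S).le (card_image_projLine h.symm hL S).le
    (injOn_base_image_projLine h hL S) (injOn_base_image_projLine h.symm hL S)
    (regulusBound_image_projLine h hS hsnd hfib)
    (regulusBound_image_projLine h.symm hS hsnd hfib)).trans_eq ?_
  rw [card_image_projLine h hL, card_image_projLine h.symm hL]
  push_cast
  ring

theorem sq_card_le_card_mul_card_collisions {α β : Type*} [DecidableEq β] {X : Finset α}
    {Y : Finset β} {f : α → β} (hf : ∀ x ∈ X, f x ∈ Y) :
    #X ^ 2 ≤ #Y * #{q ∈ X ×ˢ X | f q.1 = f q.2} := by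
  have collisions_eq : #{q ∈ X ×ˢ X | f q.1 = f q.2} = ∑ y ∈ Y, #{x ∈ X | f x = y} ^ 2 := by
    rw [card_eq_sum_card_fiberwise (f := fun q ↦ f q.1) (t := Y) fun q hq ↦
      hf _ (mem_product.mp (mem_filter.mp hq).1).1]
    refine sum_congr rfl fun y _ ↦ ?_
    rw [sq, ← card_product]
    congr 1
    ext q
    simp only [mem_filter, mem_product]
    grind
  rw [collisions_eq, card_eq_sum_card_fiberwise hf]
  exact sq_sum_le_card_mul_sum_sq

end Collisions

section Product

variable {F : Type*} [Field F] {g h : F → F} {A B C : Finset F} {p : ℕ}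

/-- For `q = (a, c)`, the slope and the constant term of the affine map
`z ↦ (g a / c) * z + g a * h a`, which takes the value `g a * (h a + b)` at `z = b * c`. -/
def affineCoeffs (g h : F → F) (q : F × F) : F × F :=
  (g q.1 / q.2, g q.1 * h q.1)

theorem injOn_affineCoeffs (hg : ∀ a ∈ A, g a ≠ 0) (hgh : Set.InjOn (fun a ↦ g a * h a) A) :
    Set.InjOn (affineCoeffs g h) (A ×ˢ C : Finset (F × F)) := by
  rintro ⟨a, c⟩ hac ⟨a', c'⟩ hac' heq
  have ha : a ∈ A := (mem_product.mp hac).1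
  obtain ⟨hslope, hconst⟩ : g a / c = g a' / c' ∧ g a * h a = g a' * h a' := Prod.mk.inj heq
  obtain rfl := hgh ha (mem_product.mp hac').1 hconst
  rw [div_eq_mul_inv, div_eq_mul_inv] at hslope
  rw [inv_injective (mul_left_cancel₀ (hg a ha) hslope)]

variable [DecidableEq F]

theorem card_image_snd_affineCoeffs_le (g h : F → F) (A C : Finset F) :
    #(((A ×ˢ C).image (affineCoeffs g h)).image Prod.snd) ≤ #A := by
  refine (card_le_card fun w hw ↦ ?_).trans (card_image_le (s := A) (f := fun a ↦ g a * h a))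
  simp only [affineCoeffs, mem_image, mem_product] at hw ⊢
  grind

theorem card_filter_snd_affineCoeffs_le (hgh : Set.InjOn (fun a ↦ g a * h a) A) (w : F) :
    #{l ∈ (A ×ˢ C).image (affineCoeffs g h) | l.2 = w} ≤ #C := by
  rw [filter_image]
  refine card_image_le.trans (card_le_card_of_injOn Prod.snd ?_ ?_)
  · intro q hq
    exact (mem_product.mp (mem_filter.mp hq).1).2
  · intro q hq q' hq' heq
    obtain ⟨hqAC, hw⟩ := mem_filter.mp hq
    obtain ⟨hqAC', hw'⟩ := mem_filter.mp hq'
    exact Prod.ext (hgh (mem_product.mp hqAC).1 (mem_product.mp hqAC').1 (hw.trans hw'.symm)) heq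

theorem card_mul_card_mul_card_le_card_filter (hg : ∀ a ∈ A, g a ≠ 0) (hC : 0 ∉ C)
    (hgh : Set.InjOn (fun a ↦ g a * h a) A) :
    #A * #C * #B ≤ #{t ∈ (A ×ˢ C).image (affineCoeffs g h) ×ˢ (B * C) |
      t.1.1 * t.2 + t.1.2 ∈ image₂ (fun x y ↦ g x * (h x + y)) A B} := by
  rw [← card_product, ← card_product]
  refine card_le_card_of_injOn
    (fun q ↦ (affineCoeffs g h q.1, q.2 * q.1.2)) ?_ ?_
  · rintro ⟨⟨a, c⟩, b⟩ hq
    obtain ⟨hac, hb⟩ := mem_product.mp hq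
    obtain ⟨ha, hc⟩ := mem_product.mp hac
    have hc0 : c ≠ 0 := ne_of_mem_of_not_mem hc hC
    refine mem_filter.mpr ⟨mem_product.mpr ⟨mem_image_of_mem _ hac, mul_mem_mul hb hc⟩, ?_⟩
    have eval_eq : (affineCoeffs g h (a, c)).1 * (b * c) + (affineCoeffs g h (a, c)).2 =
        g a * (h a + b) := by
      simp only [affineCoeffs]
      field_simp
      ring
    exact eval_eq ▸ mem_image₂_of_mem ha hb
  · intro q hq q' hq' heq
    obtain ⟨hmap, hpoint⟩ := Prod.mk.inj heq
    have hqAC := (mem_product.mp hq).1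
    have hac := injOn_affineCoeffs hg hgh hqAC (mem_product.mp hq').1 hmap
    have hc0 : q.1.2 ≠ 0 := ne_of_mem_of_not_mem (mem_product.mp hqAC).2 hC
    rw [← hac] at hpoint
    exact Prod.ext hac (mul_right_cancel₀ hc0 hpoint)

theorem card_mul_card_mul_sq_card_le [CharP F p] (hg : ∀ a ∈ A, g a ≠ 0) (hC : 0 ∉ C)
    (hgh : Set.InjOn (fun a ↦ g a * h a) A) (hA₀ : A.Nonempty) (hC₀ : C.Nonempty)
    (hp : #A * #C * #(B * C) ≤ p ^ 2) :
    (#A * #C * #B ^ 2 : ℝ) ≤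
      4000 * (#(image₂ (fun x y ↦ g x * (h x + y)) A B) * #(B * C)) *
        (√(#A * #C * #(B * C)) + (#(B * C) + #A + #C)) := by
  set V := image₂ (fun x y ↦ g x * (h x + y)) A B
  set L := (A ×ˢ C).image (affineCoeffs g h) with hL
  have card_L : #L = #A * #C := by
    rw [hL, card_image_of_injOn (injOn_affineCoeffs hg hgh), card_product]
  have slope_ne_zero : ∀ l ∈ L, l.1 ≠ 0 := fun l hl ↦ by
    obtain ⟨q, hq, rfl⟩ := mem_image.mp hl
    exact div_ne_zero (hg _ (mem_product.mp hq).1) (ne_of_mem_of_not_mem (mem_product.mp hq).2 hC)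
  have collisions_le := card_collisions_le (k := #(B * C) + #A + #C) slope_ne_zero
    (card_L ▸ hp) (by lia) ((card_image_snd_affineCoeffs_le g h A C).trans (by lia))
    fun w ↦ (card_filter_snd_affineCoeffs_le hgh w).trans (by lia)
  set X := {t ∈ L ×ˢ (B * C) | t.1.1 * t.2 + t.1.2 ∈ V} with hX
  have cauchy_schwarz : #X ^ 2 ≤ #V * #{q ∈ X ×ˢ X | _} :=
    sq_card_le_card_mul_card_collisions fun t ht ↦ (mem_filter.mp ht).2
  have X_subset : X ⊆ L ×ˢ (B * C) := filter_subset _ _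
  have lower : #A * #C * #B ≤ #X := card_mul_card_mul_card_le_card_filter hg hC hgh
  rw [card_L] at collisions_le
  push_cast at collisions_le
  refine le_of_mul_le_mul_left ?_ (show (0 : ℝ) < #A * #C by
    exact_mod_cast Nat.mul_pos hA₀.card_pos hC₀.card_pos)
  calc (#A * #C * (#A * #C * #B ^ 2) : ℝ) = (#A * #C * #B : ℕ) ^ 2 := by push_cast; ring
    _ ≤ (#X : ℝ) ^ 2 := by gcongr
    _ ≤ #V * #{q ∈ X ×ˢ X | q.1.1.1 * q.1.2 + q.1.1.2 = q.2.1.1 * q.2.2 + q.2.1.2} :=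
        mod_cast cauchy_schwarz
    _ ≤ #V * (4000 * (√(#A * #C * #(B * C)) + (#(B * C) + #A + #C)) * (#A * #C * #(B * C))) := by
        gcongr
        exact (Nat.cast_le.mpr (card_le_card (filter_subset_filter _
          (product_subset_product X_subset X_subset)))).trans collisions_le
    _ = _ := by ring

theorem card_mul_card_mul_sq_card_le_of_card_le [CharP F p] {M : ℝ} (hg : ∀ a ∈ A, g a ≠ 0)
    (hC : 0 ∉ C) (hgh : Set.InjOn (fun a ↦ g a * h a) A) (hA₀ : A.Nonempty) (hC₀ : C.Nonempty)
    (hp : #A * #C * #(B * C) ≤ p ^ 2) (hV : #(image₂ (fun x y ↦ g x * (h x + y)) A B) ≤ M)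
    (hBC : #(B * C) ≤ M) :
    (#A * #C * #B ^ 2 : ℝ) ≤ 4000 * M ^ 2 * (√(#A * #C * M) + (M + #A + #C)) := by
  rw [sq M]
  refine (card_mul_card_mul_sq_card_le hg hC hgh hA₀ hC₀ hp).trans ?_
  have hM : 0 ≤ M := (Nat.cast_nonneg _).trans hBC
  gcongr

end Product

section Real

variable {a α β γ m M κ : ℝ}

theorem rpow_fifths_div_le (ha : 0 ≤ a) (hβ : 0 ≤ β) (hγ : 0 ≤ γ) (hm : 1 ≤ m) (hM : 0 ≤ M)
    (hκ : 1 ≤ κ) (h : a * γ * β ^ 4 ≤ κ ^ 2 * m * M ^ 5) :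
    a ^ ((1 : ℝ) / 5) * β ^ ((4 : ℝ) / 5) * γ ^ ((1 : ℝ) / 5) / m ^ ((4 : ℝ) / 5) ≤ κ * M := by
  refine le_of_pow_le_pow_left₀ (n := 5) (by norm_num) (by positivity) ?_
  simp only [div_pow, mul_pow, ← Real.rpow_mul_natCast, ha, hβ, hγ, zero_le_one.trans hm]
  norm_num
  rw [div_le_iff₀ (by positivity)]
  calc a * β ^ 4 * γ = a * γ * β ^ 4 := by ring
    _ ≤ κ ^ 2 * m * M ^ 5 := h
    _ ≤ κ ^ 5 * m ^ 4 * M ^ 5 := by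
        gcongr
        · norm_num
        · exact le_self_pow₀ hm (by norm_num)
    _ = κ ^ 5 * M ^ 5 * m ^ 4 := by ring

theorem mul_rpow_half_div_le (ha : 0 ≤ a) (hm : 1 ≤ m) (hM : 0 ≤ M) (hκ : 1 ≤ κ)
    (h : a * β ^ 2 ≤ κ * m * M ^ 2) : β * a ^ ((1 : ℝ) / 2) / m ≤ κ * M := by
  refine le_of_pow_le_pow_left₀ (n := 2) (by norm_num) (by positivity) ?_
  simp only [div_pow, mul_pow, ← Real.rpow_mul_natCast, ha]
  norm_num
  rw [div_le_iff₀ (by positivity)]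
  calc β ^ 2 * a = a * β ^ 2 := by ring
    _ ≤ κ * m * M ^ 2 := h
    _ ≤ κ ^ 2 * m ^ 2 * M ^ 2 := by
        gcongr
        · exact le_self_pow₀ hκ (by norm_num)
        · exact le_self_pow₀ hm (by norm_num)
    _ = κ ^ 2 * M ^ 2 * m ^ 2 := by ring

theorem rpow_thirds_div_le (ha : 0 ≤ a) (hβ : 0 ≤ β) (hγ : 0 ≤ γ) (hm : 1 ≤ m) (hM : 0 ≤ M)
    (hκ : 1 ≤ κ) (h : a * γ * β ^ 2 ≤ κ * m * M ^ 3) :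
    β ^ ((2 : ℝ) / 3) * γ ^ ((1 : ℝ) / 3) * a ^ ((1 : ℝ) / 3) / m ^ ((2 : ℝ) / 3) ≤ κ * M := by
  refine le_of_pow_le_pow_left₀ (n := 3) (by norm_num) (by positivity) ?_
  simp only [div_pow, mul_pow, ← Real.rpow_mul_natCast, ha, hβ, hγ, zero_le_one.trans hm]
  norm_num
  rw [div_le_iff₀ (by positivity)]
  calc β ^ 2 * γ * a = a * γ * β ^ 2 := by ring
    _ ≤ κ * m * M ^ 3 := h
    _ ≤ κ ^ 3 * m ^ 2 * M ^ 3 := by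
        gcongr
        · exact le_self_pow₀ hκ (by norm_num)
        · exact le_self_pow₀ hm (by norm_num)
    _ = κ ^ 3 * M ^ 3 * m ^ 2 := by ring

theorem mul_pow_four_le_of_mul_sq_le_sqrt (hαγ : 0 < α * γ) (hM : 0 ≤ M)
    (h : α * γ * β ^ 2 ≤ κ * M ^ 2 * √(α * γ * M)) : α * γ * β ^ 4 ≤ κ ^ 2 * M ^ 5 := by
  have squared := pow_le_pow_left₀ (by positivity) h 2
  rw [mul_pow _ √_, Real.sq_sqrt (by positivity)] at squared
  exact le_of_mul_le_mul_left (by linarith) hαγ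

theorem min_le_of_mul_mul_sq_le (ha : 0 ≤ a) (hα : 0 < α) (hβ : 0 ≤ β) (hγ : 0 < γ) (hM : 0 < M)
    (hm : 1 ≤ m) (hκ : 1 ≤ κ) (ham : a ≤ m * α)
    (h : α * γ * β ^ 2 ≤ κ * M ^ 2 * (√(α * γ * M) + (M + α + γ))) :
    min (a ^ ((1 : ℝ) / 5) * β ^ ((4 : ℝ) / 5) * γ ^ ((1 : ℝ) / 5) / m ^ ((4 : ℝ) / 5))
      (min (β * γ ^ ((1 : ℝ) / 2) / m)
        (min (β * a ^ ((1 : ℝ) / 2) / m)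
          (β ^ ((2 : ℝ) / 3) * γ ^ ((1 : ℝ) / 3) * a ^ ((1 : ℝ) / 3) / m ^ ((2 : ℝ) / 3)))) ≤
      4 * κ * M := by
  have hκ' : 1 ≤ 4 * κ := by linarith
  have cases : α * γ * β ^ 2 ≤ 4 * κ * M ^ 2 * √(α * γ * M) ∨ α * γ * β ^ 2 ≤ 4 * κ * M ^ 2 * α ∨
      α * γ * β ^ 2 ≤ 4 * κ * M ^ 2 * γ ∨ α * γ * β ^ 2 ≤ 4 * κ * M ^ 2 * M := by
    by_contra! hlt
    linarith
  simp only [min_le_iff]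
  refine cases.imp (fun h ↦ rpow_fifths_div_le ha hβ hγ.le hm hM.le hκ' ?_) (Or.imp
    (fun h ↦ mul_rpow_half_div_le hγ.le hm hM.le hκ' ?_) (Or.imp
      (fun h ↦ mul_rpow_half_div_le ha hm hM.le hκ' ?_)
      (fun h ↦ rpow_thirds_div_le ha hβ hγ.le hm hM.le hκ' ?_)))
  · calc a * γ * β ^ 4 ≤ m * α * γ * β ^ 4 := by gcongr
      _ = m * (α * γ * β ^ 4) := by ring
      _ ≤ m * ((4 * κ) ^ 2 * M ^ 5) := mul_le_mul_of_nonneg_left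
          (mul_pow_four_le_of_mul_sq_le_sqrt (mul_pos hα hγ) hM.le h) (by positivity)
      _ = (4 * κ) ^ 2 * m * M ^ 5 := by ring
  · calc γ * β ^ 2 ≤ 4 * κ * M ^ 2 := le_of_mul_le_mul_left (by linarith) hα
      _ ≤ m * (4 * κ * M ^ 2) := le_mul_of_one_le_left (by positivity) hm
      _ = 4 * κ * m * M ^ 2 := by ring
  · calc a * β ^ 2 ≤ m * α * β ^ 2 := by gcongr
      _ = m * (α * β ^ 2) := by ring
      _ ≤ m * (4 * κ * M ^ 2) := mul_le_mul_of_nonneg_left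
          (le_of_mul_le_mul_left (by linarith) hγ) (by positivity)
      _ = 4 * κ * m * M ^ 2 := by ring
  · calc a * γ * β ^ 2 ≤ m * α * γ * β ^ 2 := by gcongr
      _ = m * (α * γ * β ^ 2) := by ring
      _ ≤ m * (4 * κ * M ^ 2 * M) := by gcongr
      _ = 4 * κ * m * M ^ 3 := by ring

end Real

section Conclusion

theorem exists_transversal_card_le_mul {ι κ : Type*} [DecidableEq κ] (f : ι → κ) (A : Finset ι)
    (m : ℕ) (hm : ∀ t, #{a ∈ A | f a = t} ≤ m) :
    ∃ T ⊆ A, Set.InjOn f T ∧ #A ≤ m * #T := by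
  classical
  obtain ⟨T, hTA, hT, image_eq⟩ := exists_subset_injOn_image_eq_of_surjOn (f := f) (A : Set ι)
    (A.image f) (by rw [coe_image]; exact Set.surjOn_image f A)
  refine ⟨T, mod_cast hTA, hT, ?_⟩
  rw [← card_image_of_injOn hT, image_eq]
  exact card_le_mul_card_image A m fun t _ ↦ hm t

variable {a b c m p : ℝ}

theorem rpow_fifths_div_le_rpow_three_quarters (hp : 0 < p) (ha₀ : 0 ≤ a) (hb₀ : 0 ≤ b)
    (hc₀ : 0 ≤ c) (hm : 1 ≤ m) (ha : a ≤ p ^ ((5 : ℝ) / 8)) (hb : b ≤ p ^ ((5 : ℝ) / 8))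
    (hc : c ≤ p ^ ((5 : ℝ) / 8)) :
    a ^ ((1 : ℝ) / 5) * b ^ ((4 : ℝ) / 5) * c ^ ((1 : ℝ) / 5) / m ^ ((4 : ℝ) / 5) ≤
      p ^ ((3 : ℝ) / 4) := by
  calc a ^ ((1 : ℝ) / 5) * b ^ ((4 : ℝ) / 5) * c ^ ((1 : ℝ) / 5) / m ^ ((4 : ℝ) / 5)
      ≤ a ^ ((1 : ℝ) / 5) * b ^ ((4 : ℝ) / 5) * c ^ ((1 : ℝ) / 5) :=
        div_le_self (by positivity) (Real.one_le_rpow hm (by norm_num))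
    _ ≤ (p ^ ((5 : ℝ) / 8)) ^ ((1 : ℝ) / 5) * (p ^ ((5 : ℝ) / 8)) ^ ((4 : ℝ) / 5) *
          (p ^ ((5 : ℝ) / 8)) ^ ((1 : ℝ) / 5) := by gcongr
    _ = p ^ ((3 : ℝ) / 4) := by
        simp only [← Real.rpow_mul hp.le, ← Real.rpow_add hp]
        norm_num

theorem mul_mul_le_sq_of_le_rpow (hp : 0 < p) (hb₀ : 0 ≤ b) (hc₀ : 0 ≤ c)
    (ha : a ≤ p ^ ((5 : ℝ) / 8)) (hb : b ≤ p ^ ((5 : ℝ) / 8)) (hc : c ≤ p ^ ((3 : ℝ) / 4)) :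
    a * b * c ≤ p ^ 2 := by
  calc a * b * c ≤ p ^ ((5 : ℝ) / 8) * p ^ ((5 : ℝ) / 8) * p ^ ((3 : ℝ) / 4) := by gcongr
    _ = p ^ 2 := by
        rw [← Real.rpow_add hp, ← Real.rpow_add hp, ← Real.rpow_natCast]
        norm_num

theorem card_filter_le_mu {p : ℕ} [NeZero p] {f : ZMod p → ZMod p} {A : Finset (ZMod p)}
    (hA : 0 ∉ A) (hf : ∀ x ∈ A, f x ≠ 0) (t : ZMod p) : #{x ∈ A | f x = t} ≤ mu f := by
  rcases eq_or_ne t 0 with rfl | ht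
  · rw [filter_false_of_mem hf, card_empty]
    exact Nat.zero_le _
  · refine le_trans (card_le_card fun x hx ↦ ?_)
      (le_sup (f := fun t ↦ #{x : ZMod p | x ≠ 0 ∧ f x = t}) (mem_filter.mpr ⟨mem_univ t, ht⟩))
    obtain ⟨hxA, hxt⟩ := mem_filter.mp hx
    exact mem_filter.mpr ⟨mem_univ x, ne_of_mem_of_not_mem hxA hA, hxt⟩

end Conclusion

end PhamMojarrad

open PhamMojarrad in
theorem pham_mojarrad_product_general {F : Type*} [Field F] [DecidableEq F] {p : ℕ} [CharP F p]
    {g h : F → F} {A B C : Finset F} {m : ℕ} (hA₀ : A.Nonempty) (hB₀ : B.Nonempty)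
    (hC₀ : C.Nonempty) (hg : ∀ a ∈ A, g a ≠ 0) (hC : 0 ∉ C)
    (hm : ∀ t, #{a ∈ A | g a * h a = t} ≤ m) (hAp : (#A : ℝ) ≤ (p : ℝ) ^ ((5 : ℝ) / 8))
    (hBp : (#B : ℝ) ≤ (p : ℝ) ^ ((5 : ℝ) / 8)) (hCp : (#C : ℝ) ≤ (p : ℝ) ^ ((5 : ℝ) / 8)) :
    (1 / 16000 : ℝ) *
        min ((#A : ℝ) ^ ((1 : ℝ) / 5) * (#B : ℝ) ^ ((4 : ℝ) / 5) * (#C : ℝ) ^ ((1 : ℝ) / 5) /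
            (m : ℝ) ^ ((4 : ℝ) / 5))
          (min ((#B : ℝ) * (#C : ℝ) ^ ((1 : ℝ) / 2) / m)
            (min ((#B : ℝ) * (#A : ℝ) ^ ((1 : ℝ) / 2) / m)
              ((#B : ℝ) ^ ((2 : ℝ) / 3) * (#C : ℝ) ^ ((1 : ℝ) / 3) * (#A : ℝ) ^ ((1 : ℝ) / 3) /
                (m : ℝ) ^ ((2 : ℝ) / 3)))) ≤
      max (#(image₂ (fun x y ↦ g x * (h x + y)) A B) : ℝ) #(B * C) := by
  obtain ⟨T, hTA, hT, card_le⟩ := exists_transversal_card_le_mul (fun a ↦ g a * h a) A m hm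
  obtain ⟨hm₀, hT₀⟩ : 0 < m ∧ 0 < #T := by
    simpa only [Nat.pos_iff_ne_zero, mul_ne_zero_iff] using hA₀.card_pos.trans_le card_le
  have hp₀ : (0 : ℝ) < p := by
    rcases p.eq_zero_or_pos with rfl | hp
    · norm_num at hAp
      exact absurd hAp hA₀.ne_empty
    · exact mod_cast hp
  have hm₁ : (1 : ℝ) ≤ m := mod_cast hm₀
  set M : ℝ := max (#(image₂ (fun x y ↦ g x * (h x + y)) A B) : ℝ) #(B * C)
  have hBCM : (#(B * C) : ℝ) ≤ M := le_max_right _ _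
  have hM₀ : 0 < M := lt_of_lt_of_le (mod_cast (hB₀.mul hC₀).card_pos) hBCM
  rw [one_div, inv_mul_le_iff₀ (by norm_num)]
  rcases le_total ((p : ℝ) ^ ((3 : ℝ) / 4)) M with hM | hM
  · calc _ ≤ (p : ℝ) ^ ((3 : ℝ) / 4) := (min_le_left _ _).trans
          (rpow_fifths_div_le_rpow_three_quarters hp₀ (by positivity) (by positivity)
            (by positivity) hm₁ hAp hBp hCp)
      _ ≤ 16000 * M := hM.trans (le_mul_of_one_le_left hM₀.le (by norm_num))
  · have hTp : (#T : ℝ) ≤ (p : ℝ) ^ ((5 : ℝ) / 8) := le_trans (mod_cast card_le_card hTA) hAp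
    have card_le_sq : #T * #C * #(B * C) ≤ p ^ 2 := mod_cast
      mul_mul_le_sq_of_le_rpow hp₀ (by positivity) (by positivity) hTp hCp (hBCM.trans hM)
    have card_image₂_le : (#(image₂ (fun x y ↦ g x * (h x + y)) T B) : ℝ) ≤ M :=
      le_trans (mod_cast card_le_card (image₂_subset_right hTA)) (le_max_left _ _)
    have := min_le_of_mul_mul_sq_le (a := #A) (α := #T) (by positivity) (mod_cast hT₀)
      (by positivity) (mod_cast hC₀.card_pos) hM₀ hm₁ (by norm_num) (mod_cast card_le)
      (card_mul_card_mul_sq_card_le_of_card_le (fun a ha ↦ hg a (hTA ha)) hC hT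
        (card_pos.mp hT₀) hC₀ card_le_sq card_image₂_le hBCM)
    linarith

theorem pham_mojarrad_product :
    ∃ C > (0:ℝ),
      ∀ (p : ℕ) [Fact p.Prime], p ≠ 2 →
      ∀ g h : ZMod p → ZMod p,
      (∀ x : ZMod p, x ≠ 0 → g x ≠ 0) → (∀ x : ZMod p, x ≠ 0 → h x ≠ 0) →
      ∀ A B Cs : Finset (ZMod p),
      A.Nonempty → B.Nonempty → Cs.Nonempty →
      (0:ZMod p) ∉ A → (0:ZMod p) ∉ B → (0:ZMod p) ∉ Cs →
      (A.card : ℝ) ≤ (p:ℝ) ^ ((5:ℝ)/8) →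
      (B.card : ℝ) ≤ (p:ℝ) ^ ((5:ℝ)/8) →
      (Cs.card : ℝ) ≤ (p:ℝ) ^ ((5:ℝ)/8) →
      C * min ((A.card:ℝ) ^ ((1:ℝ)/5) * (B.card:ℝ) ^ ((4:ℝ)/5) * (Cs.card:ℝ) ^ ((1:ℝ)/5) /
                ((mu (fun x => g x * h x) : ℕ) : ℝ) ^ ((4:ℝ)/5))
            (min ((B.card:ℝ) * (Cs.card:ℝ) ^ ((1:ℝ)/2) / ((mu (fun x => g x * h x) : ℕ) : ℝ))
              (min ((B.card:ℝ) * (A.card:ℝ) ^ ((1:ℝ)/2) / ((mu (fun x => g x * h x) : ℕ) : ℝ))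
                ((B.card:ℝ) ^ ((2:ℝ)/3) * (Cs.card:ℝ) ^ ((1:ℝ)/3) * (A.card:ℝ) ^ ((1:ℝ)/3) /
                  ((mu (fun x => g x * h x) : ℕ) : ℝ) ^ ((2:ℝ)/3)))) ≤
        max ((Finset.image₂ (fun x y => g x * (h x + y)) A B).card : ℝ) (((B * Cs).card : ℝ)) := by
  refine ⟨1 / 16000, by norm_num, ?_⟩
  intro p _ _ g h hg hh A B Cs hA hB hC hA₀ _ hC₀
  have ne_zero : ∀ a ∈ A, a ≠ 0 := fun a ha ↦ ne_of_mem_of_not_mem ha hA₀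
  exact pham_mojarrad_product_general hA hB hC (fun a ha ↦ hg a (ne_zero a ha)) hC₀
    (PhamMojarrad.card_filter_le_mu hA₀ fun a ha ↦
      mul_ne_zero (hg a (ne_zero a ha)) (hh a (ne_zero a ha)))
end
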